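/- Let β≥2 be an integer with ⌊(β−3)/3⌋ ≥ 1, let H be a β-buildable graph, and let c > 1/⌊(β−3)/3⌋. Then there exists ε>0 such that every ε-sparse, (ε|G|^{1-c}, ε|G|^{1-c})-coherent graph G with |G|>1 contains H. -/

import Mathlib

noncomputable section

namespace PurePairs

open SimpleGraph

variable {V W : Type*}

/-- A pure pair in `G`: a pair of disjoint vertex sets that are complete
or anticomplete to each other. -/
def PurePair (G : SimpleGraph V) (A B : Set V) : Prop :=
  Disjoint A B ∧
    ((∀ a ∈ A, ∀ b ∈ B, G.Adj a b) ∨ (∀ a ∈ A, ∀ b ∈ B, ¬ G.Adj a b))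

/-- `G` contains `H`: some induced subgraph of `G` is isomorphic to `H`. -/
def Contains (G : SimpleGraph V) (H : SimpleGraph W) : Prop :=
  Nonempty (H ↪g G)

/-- The congestion of a graph `H`: the maximum (here: supremum, together with `0`)
of `1 - (|J|-1)/|E(J)|` over all subgraphs `J` of `H` with at least one edge.
If `H` has no edges this is `0`. -/
def congestion (H : SimpleGraph V) : ℝ :=
  sSup ({0} ∪ {x : ℝ | ∃ J : H.Subgraph, J.edgeSet.Nonempty ∧
    x = 1 - ((J.verts.ncard : ℝ) - 1) / (J.edgeSet.ncard : ℝ)})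

/-- `A` is anticomplete to `B`: no edges between them. -/
def Anticomplete (G : SimpleGraph V) (A B : Set V) : Prop :=
  ∀ a ∈ A, ∀ b ∈ B, ¬ G.Adj a b

/-- `A` covers `B`: every vertex of `B` has a neighbour in `A`. -/
def Covers (G : SimpleGraph V) (A B : Set V) : Prop :=
  ∀ b ∈ B, ∃ a ∈ A, G.Adj a b

/-- `G` is `ε`-sparse: every vertex has degree less than `ε|G|`. -/
def EpsSparse (G : SimpleGraph V) [Fintype V] (ε : ℝ) : Prop :=
  ∀ v : V, ((G.neighborSet v).ncard : ℝ) < ε * (Fintype.card V : ℝ)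

/-- `G` is `(γ,δ)`-coherent: there is no pair of disjoint anticomplete sets `A`, `B`
with `|A| ≥ γ` and `|B| ≥ δ`. -/
def Coherent (G : SimpleGraph V) (γ δ : ℝ) : Prop :=
  ¬ ∃ A B : Set V, Disjoint A B ∧ Anticomplete G A B ∧
      γ ≤ (A.ncard : ℝ) ∧ δ ≤ (B.ncard : ℝ)

/-- `N(X)`: the set of vertices with a neighbour in `X`. -/
def nbhd (G : SimpleGraph V) (X : Set V) : Set V :=
  {v | ∃ x ∈ X, G.Adj x v}

/-- A blockade: a family of nonempty pairwise disjoint vertex sets indexed by a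
finite set of integers. -/
def IsBlockade (I : Finset ℤ) (A : ℤ → Set V) : Prop :=
  (∀ i ∈ I, (A i).Nonempty) ∧
    ∀ i ∈ I, ∀ j ∈ I, i ≠ j → Disjoint (A i) (A j)

/-- The blockade `(A i : i ∈ I)` is `(γ,δ)`-divergent. -/
def Divergent (G : SimpleGraph V) (I : Finset ℤ) (A : ℤ → Set V) (γ δ : ℝ) : Prop :=
  ∃ i ∈ I, ∃ j ∈ I, i ≠ j ∧ ∃ X ⊆ A i, ∃ Y ⊆ A j,
    γ * ((A i).ncard : ℝ) ≤ (X.ncard : ℝ) ∧ δ * ((A j).ncard : ℝ) ≤ (Y.ncard : ℝ) ∧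
    Anticomplete G X Y

/-- The blockade `(A i : i ∈ I)` is `τ`-expanding. -/
def Expanding (G : SimpleGraph V) (I : Finset ℤ) (A : ℤ → Set V) (τ : ℝ) : Prop :=
  ∀ i ∈ I, ∀ j ∈ I, i ≠ j → ∀ X ⊆ A i,
    min (τ * (X.ncard : ℝ) / ((A i).ncard : ℝ)) (1/4)
      ≤ (((nbhd G X) ∩ A j).ncard : ℝ) / ((A j).ncard : ℝ)

/-- The linkage of the blockade `(A i : i ∈ I)` is at most `lam`. -/
def LinkageLE (G : SimpleGraph V) (I : Finset ℤ) (A : ℤ → Set V) (lam : ℝ) : Prop :=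
  ∀ i ∈ I, ∀ j ∈ I, i ≠ j → ∀ v ∈ A i,
    ((G.neighborSet v ∩ A j).ncard : ℝ) ≤ lam * ((A j).ncard : ℝ)

/-- The shrinkage of the blockade `(A i : i ∈ I)` is at most `σ`, i.e. its width is at
least `|G|^{1-σ}`. -/
def ShrinkageLE [Fintype V] (I : Finset ℤ) (A : ℤ → Set V) (σ : ℝ) : Prop :=
  ∀ i ∈ I, (Fintype.card V : ℝ) ^ (1 - σ) ≤ ((A i).ncard : ℝ)

/-- `(L 0, …, L k)` is a levelling in `G`. -/
def IsLevelling (G : SimpleGraph V) (L : ℕ → Set V) (k : ℕ) : Prop :=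
  1 ≤ k ∧ (L 0).ncard = 1 ∧
  (∀ i ≤ k, ∀ j ≤ k, i ≠ j → Disjoint (L i) (L j)) ∧
  (∀ i, 1 ≤ i → i ≤ k → Covers G (L (i-1)) (L i)) ∧
  (∀ i, 2 ≤ i → i ≤ k → ∀ h, h + 2 ≤ i → Anticomplete G (L h) (L i))

/-- The levelling `(L 0, …, L k)` reaches `C`, i.e. `(L 0, …, L k, C)` is a levelling. -/
def Reaches (G : SimpleGraph V) (L : ℕ → Set V) (k : ℕ) (C : Set V) : Prop :=
  IsLevelling G (fun i => if i = k + 1 then C else L i) (k + 1)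

/-- The levelling `(L 0, …, L k)` is `(B i : i ∈ I)`-rainbow. -/
def RainbowLevelling (I : Finset ℤ) (B : ℤ → Set V) (L : ℕ → Set V) (k : ℕ) : Prop :=
  ∃ q : ℕ → ℤ, (∀ i ≤ k, q i ∈ I ∧ L i ⊆ B (q i)) ∧
    ∀ i ≤ k, ∀ j ≤ k, q i = q j → i = j

/-- The levelling `(L 0, …, L k)` grades the blockade `(C j : j ∈ J)` (in some order). -/
def Grades (G : SimpleGraph V) (L : ℕ → Set V) (k : ℕ) (J : Finset ℤ) (C : ℤ → Set V) :
    Prop :=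
  Reaches G L k (⋃ j ∈ J, C j) ∧
  ∃ e : ℕ → ℤ, (∀ g < J.card, e g ∈ J) ∧
    (∀ g < J.card, ∀ h < J.card, e g = e h → g = h) ∧
    ∀ g < J.card, ∃ Y ⊆ L k,
      (∀ h, g ≤ h → h < J.card → Covers G Y (C (e h))) ∧
      (∀ h, h < g → Anticomplete G Y (C (e h)))

/-- The levelling `(L 0, …, L k)` grades the blockade `(C j : j ∈ J)` forwards. -/
def GradesFwd (G : SimpleGraph V) (L : ℕ → Set V) (k : ℕ) (J : Finset ℤ) (C : ℤ → Set V) :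
    Prop :=
  Reaches G L k (⋃ j ∈ J, C j) ∧
  ∀ j ∈ J, ∃ Y ⊆ L k,
    (∀ i ∈ J, j ≤ i → Covers G Y (C i)) ∧
    (∀ i ∈ J, i < j → Anticomplete G Y (C i))

/-- The levelling `(L 0, …, L k)` grades the blockade `(C j : j ∈ J)` backwards. -/
def GradesBwd (G : SimpleGraph V) (L : ℕ → Set V) (k : ℕ) (J : Finset ℤ) (C : ℤ → Set V) :
    Prop :=
  Reaches G L k (⋃ j ∈ J, C j) ∧
  ∀ j ∈ J, ∃ Y ⊆ L k,
    (∀ i ∈ J, i ≤ j → Covers G Y (C i)) ∧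
    (∀ i ∈ J, j < i → Anticomplete G Y (C i))

/-- Two levellings are parallel. -/
def Parallel (G : SimpleGraph V) (L : ℕ → Set V) (k : ℕ) (M : ℕ → Set V) (m : ℕ) : Prop :=
  L 0 = M 0 ∧
  Disjoint (⋃ j ∈ Finset.Icc 1 m, M j) (⋃ i ∈ Finset.Icc 1 k, L i) ∧
  Anticomplete G (⋃ j ∈ Finset.Icc 1 m, M j) (⋃ i ∈ Finset.Icc 1 k, L i)

/-- `(L, M, C)` is a bi-levelling, where `L` has height `k` and `M` has height `m`:
`C` is a blockade, `L, M` are parallel levellings both reaching the union of the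
blocks of `C`, and `L` grades `C` forwards. Its height is `k + m` and its length is
the length of `C`. -/
def IsBiLevelling (G : SimpleGraph V) (L : ℕ → Set V) (k : ℕ) (M : ℕ → Set V) (m : ℕ)
    (J : Finset ℤ) (C : ℤ → Set V) : Prop :=
  IsBlockade J C ∧ IsLevelling G L k ∧ IsLevelling G M m ∧ Parallel G L k M m ∧
    Reaches G M m (⋃ j ∈ J, C j) ∧ GradesFwd G L k J C

/-- A bi-grading: a bi-levelling in which `M` also grades `C` backwards. -/
def IsBiGrading (G : SimpleGraph V) (L : ℕ → Set V) (k : ℕ) (M : ℕ → Set V) (m : ℕ)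
    (J : Finset ℤ) (C : ℤ → Set V) : Prop :=
  IsBiLevelling G L k M m J C ∧ GradesBwd G M m J C

/-- The bi-levelling `(L, M, C)` is `(A i : i ∈ I)`-rainbow: each block of `C`, each
level of `L`, and each level of `M` other than `M 0 = L 0` is included in a block of
`A`, and distinct such sets lie in distinct blocks. -/
def RainbowBiLevelling (I : Finset ℤ) (A : ℤ → Set V)
    (L : ℕ → Set V) (k : ℕ) (M : ℕ → Set V) (m : ℕ)
    (J : Finset ℤ) (C : ℤ → Set V) : Prop :=
  ∃ (qc : ℤ → ℤ) (ql qm : ℕ → ℤ),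
    (∀ j ∈ J, qc j ∈ I ∧ C j ⊆ A (qc j)) ∧
    (∀ i ≤ k, ql i ∈ I ∧ L i ⊆ A (ql i)) ∧
    (∀ i, 1 ≤ i → i ≤ m → qm i ∈ I ∧ M i ⊆ A (qm i)) ∧
    (∀ j ∈ J, ∀ j' ∈ J, qc j = qc j' → j = j') ∧
    (∀ i ≤ k, ∀ i' ≤ k, ql i = ql i' → i = i') ∧
    (∀ i, 1 ≤ i → i ≤ m → ∀ i', 1 ≤ i' → i' ≤ m → qm i = qm i' → i = i') ∧
    (∀ j ∈ J, ∀ i ≤ k, qc j ≠ ql i) ∧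
    (∀ j ∈ J, ∀ i, 1 ≤ i → i ≤ m → qc j ≠ qm i) ∧
    (∀ i ≤ k, ∀ i', 1 ≤ i' → i' ≤ m → ql i ≠ qm i')

/-- Each block of `(C j : j ∈ J)` lies in a block of `(A i : i ∈ I)`; the `A`-size of
`C` is at least `η` when every block of `C` has size at least `η` times the size of the
block of `A` containing it. -/
def SizeGE (I : Finset ℤ) (A : ℤ → Set V) (J : Finset ℤ) (C : ℤ → Set V) (η : ℝ) : Prop :=
  ∀ j ∈ J, ∀ i ∈ I, C j ⊆ A i → η * ((A i).ncard : ℝ) ≤ ((C j).ncard : ℝ)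

/-- A `(B i : i ∈ I)`-rainbow induced path `p 0 - p 1 - ⋯ - p n` in `G`. -/
def RainbowPath (G : SimpleGraph V) (I : Finset ℤ) (B : ℤ → Set V)
    (n : ℕ) (p : ℕ → V) : Prop :=
  (∀ i ≤ n, ∀ j ≤ n, p i = p j → i = j) ∧
  (∀ i < n, G.Adj (p i) (p (i+1))) ∧
  (∀ i j, i + 1 < j → j ≤ n → ¬ G.Adj (p i) (p j)) ∧
  ∃ q : ℕ → ℤ, (∀ i ≤ n, q i ∈ I ∧ p i ∈ B (q i)) ∧
    ∀ i ≤ n, ∀ j ≤ n, q i = q j → i = j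

/-- A `(B i : i ∈ I)`-rainbow copy of `H` in `G`: an induced copy of `H` with each
vertex in a different block. -/
def RainbowCopy (G : SimpleGraph V) (I : Finset ℤ) (B : ℤ → Set V)
    (H : SimpleGraph W) : Prop :=
  ∃ (f : H ↪g G) (q : W → ℤ), Function.Injective q ∧ ∀ w : W, q w ∈ I ∧ f w ∈ B (q w)

/-- `(N,K,σ,lam,c)` forces `H`. -/
def Forces (H : SimpleGraph W) (N K : ℕ) (σ lam c : ℝ) : Prop :=
  ∀ {V : Type} [Fintype V] (G : SimpleGraph V),
    Coherent G ((Fintype.card V : ℝ) ^ (1 - c)) ((Fintype.card V : ℝ) ^ (1 - c)) →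
    N ≤ Fintype.card V →
    ∀ (I : Finset ℤ) (A : ℤ → Set V), IsBlockade I A → I.card = K →
      ShrinkageLE I A σ → LinkageLE G I A lam →
      RainbowCopy G I A H

/-- `p 0 - ⋯ - p n` is a handle of length `n` that can be added to (the graph induced
on) `S` inside the ambient graph `H`: an induced path of `H[S ∪ p]` of length at least
two whose ends lie in `S`, whose internal vertices avoid `S` and have degree two in
`H[S ∪ p]`. -/
def IsHandle (H : SimpleGraph V) (S : Set V) (n : ℕ) (p : ℕ → V) : Prop :=
  2 ≤ n ∧
  (∀ i ≤ n, ∀ j ≤ n, p i = p j → i = j) ∧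
  p 0 ∈ S ∧ p n ∈ S ∧
  (∀ i, 0 < i → i < n → p i ∉ S) ∧
  (∀ i < n, H.Adj (p i) (p (i+1))) ∧
  (∀ i j, i + 1 < j → j ≤ n → ¬ H.Adj (p i) (p j)) ∧
  (∀ i, 0 < i → i < n → ∀ w, (w ∈ S ∨ ∃ j ≤ n, w = p j) → H.Adj (p i) w →
    w = p (i-1) ∨ w = p (i+1))

/-- The vertex sets `S` such that the induced subgraph `H[S]` can be built, starting
from the two-vertex graph with no edges, by repeatedly adding handles of length at
least `β`. -/
inductive BuildableOn (H : SimpleGraph V) (β : ℕ) : Set V → Prop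
  | base (u v : V) (huv : u ≠ v) (hadj : ¬ H.Adj u v) : BuildableOn H β {u, v}
  | handle (S : Set V) (n : ℕ) (p : ℕ → V) (hS : BuildableOn H β S)
      (hh : IsHandle H S n p) (hn : β ≤ n) :
      BuildableOn H β (S ∪ {w | ∃ j ≤ n, w = p j})

/-- `H` is `β`-buildable. -/
def Buildable [Fintype V] (H : SimpleGraph V) (β : ℕ) : Prop :=
  BuildableOn H β Set.univ

/-- The vertex sets `S` such that the induced subgraph `H[S]` can be built, starting
from the null graph, by repeatedly adding a subleaf or a handle of length at least
`β`. -/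
inductive WeaklyBuildableOn (H : SimpleGraph V) (β : ℕ) : Set V → Prop
  | empty : WeaklyBuildableOn H β ∅
  | subleaf (S : Set V) (v : V) (hv : v ∉ S) (hdeg : (S ∩ H.neighborSet v).ncard ≤ 1)
      (hS : WeaklyBuildableOn H β S) : WeaklyBuildableOn H β (insert v S)
  | handle (S : Set V) (n : ℕ) (p : ℕ → V) (hS : WeaklyBuildableOn H β S)
      (hh : IsHandle H S n p) (hn : β ≤ n) :
      WeaklyBuildableOn H β (S ∪ {w | ∃ j ≤ n, w = p j})

/-- `H` is weakly `β`-buildable. -/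
def WeaklyBuildable [Fintype V] (H : SimpleGraph V) (β : ℕ) : Prop :=
  WeaklyBuildableOn H β Set.univ

namespace PPAux
open Classical
variable {α : Type*}

/-- the vertices of `C` with a neighbour in `Z` -/
noncomputable def NN (G : SimpleGraph α) (Z C : Finset α) : Finset α :=
  C.filter (fun c => ∃ z ∈ Z, G.Adj z c)

/-- number of neighbours of `v` in `C` -/
noncomputable def dg (G : SimpleGraph α) (v : α) (C : Finset α) : ℝ :=
  ((C.filter (fun c => G.Adj v c)).card : ℝ)

lemma dg_nonneg (G : SimpleGraph α) (v : α) (C : Finset α) : 0 ≤ dg G v C := by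
  unfold dg; positivity

lemma dg_le_card (G : SimpleGraph α) (v : α) (C : Finset α) : dg G v C ≤ C.card := by
  unfold dg; exact_mod_cast Finset.card_filter_le _ _

lemma dg_mono (G : SimpleGraph α) (v : α) {C C' : Finset α} (h : C ⊆ C') :
    dg G v C ≤ dg G v C' := by
  unfold dg; exact_mod_cast Finset.card_le_card (Finset.filter_subset_filter _ h)

lemma dg_eq_sum (G : SimpleGraph α) (v : α) (C : Finset α) :
    dg G v C = ∑ c ∈ C, if G.Adj v c then (1:ℝ) else 0 := by
  unfold dg; simp

lemma sum_dg (G : SimpleGraph α) (C D : Finset α) :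
    ∑ d ∈ D, dg G d C = ∑ c ∈ C, dg G c D := by
  simp only [dg_eq_sum]
  rw [Finset.sum_comm]
  simp only [G.adj_comm]

lemma mem_NN {G : SimpleGraph α} {Z C : Finset α} {c : α} :
    c ∈ NN G Z C ↔ c ∈ C ∧ ∃ z ∈ Z, G.Adj z c := by
  simp [NN]

lemma NN_subset (G : SimpleGraph α) (Z C : Finset α) : NN G Z C ⊆ C :=
  Finset.filter_subset _ _

lemma card_NN_le (G : SimpleGraph α) (Z C : Finset α) :
    ((NN G Z C).card : ℝ) ≤ ∑ d ∈ Z, dg G d C := by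
  have : NN G Z C ⊆ Z.biUnion (fun d => C.filter (fun c => G.Adj d c)) := by
    intro c hc
    obtain ⟨h1, z, hz, h2⟩ := mem_NN.1 hc
    simp only [Finset.mem_biUnion, Finset.mem_filter]
    exact ⟨z, hz, h1, h2⟩
  have h2 := (Finset.card_le_card this).trans Finset.card_biUnion_le
  unfold dg
  exact_mod_cast h2

lemma NN_insert (G : SimpleGraph α) (d : α) (Z C : Finset α) :
    NN G (insert d Z) C = (C.filter (fun c => G.Adj d c)) ∪ NN G Z C := by
  ext c
  simp only [mem_NN, Finset.mem_union, Finset.mem_filter, Finset.mem_insert]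
  constructor
  · rintro ⟨h, z, rfl | hz, h2⟩
    · exact Or.inl ⟨h, h2⟩
    · exact Or.inr ⟨h, z, hz, h2⟩
  · rintro (⟨h, h2⟩ | ⟨h, z, hz, h2⟩)
    · exact ⟨h, d, Or.inl rfl, h2⟩
    · exact ⟨h, z, Or.inr hz, h2⟩

lemma hit (G : SimpleGraph α) (D C : Finset α) (J : Finset ℕ) (B : ℕ → Finset α)
    (Δ θ κ r : ℝ) (hΔ : 0 < Δ) (hθ : 1 ≤ θ) (hκ : 0 < κ) (hκ1 : κ ≤ 1)
    (hr : (J.card : ℝ) ≤ r) (hr1 : 1 ≤ r) (hC : C.Nonempty)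
    (h1 : ∀ c ∈ C, Δ ≤ dg G c D) (h2 : ∀ c ∈ C, dg G c D ≤ θ * Δ)
    (h3 : ∀ b ∈ J, ∀ c ∈ B b, dg G c D ≤ θ * Δ)
    (h4 : ∀ d ∈ D, ∀ b ∈ J, dg G d (B b) ≤ κ / 2 * (B b).card) :
    ∃ Z ⊆ D, κ / (8 * r * θ) * C.card ≤ (NN G Z C).card ∧
      ∀ b ∈ J, ((NN G Z (B b)).card : ℝ) ≤ κ * (B b).card := by
  have hCpos : (0:ℝ) < C.card := by exact_mod_cast hC.card_pos
  set D1 := D.filter (fun d => ∀ b ∈ J, dg G d (B b) * C.card ≤ 2 * r * θ * dg G d C * (B b).card)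
    with hD1
  have hbad : ∑ d ∈ D.filter (fun d => ¬ ∀ b ∈ J,
      dg G d (B b) * C.card ≤ 2 * r * θ * dg G d C * (B b).card), dg G d C
      ≤ Δ / 2 * C.card := by
    have step : ∀ d ∈ D.filter (fun d => ¬ ∀ b ∈ J,
      dg G d (B b) * C.card ≤ 2 * r * θ * dg G d C * (B b).card),
        dg G d C ≤ ∑ b ∈ J, dg G d (B b) * C.card / (2 * r * θ * (B b).card) := by
      intro d hd
      rw [Finset.mem_filter] at hd
      obtain ⟨hd, h⟩ := hd
      push Not at h
      obtain ⟨b, hb, hlt⟩ := h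
      have hBpos : (0:ℝ) < (B b).card := by
        rcases Nat.eq_zero_or_pos (B b).card with h0 | h0
        · have := dg_le_card G d (B b)
          have h5 := dg_nonneg G d (B b)
          rw [h0] at this hlt
          have : dg G d (B b) = 0 := le_antisymm (by simpa using this) h5
          rw [this] at hlt; simp at hlt
        · exact_mod_cast h0
      calc dg G d C ≤ dg G d (B b) * C.card / (2 * r * θ * (B b).card) := by
            rw [le_div_iff₀ (by positivity)]; nlinarith
        _ ≤ _ := Finset.single_le_sum
            (f := fun b => dg G d (B b) * C.card / (2 * r * θ * (B b).card))
            (fun i _ => div_nonneg (mul_nonneg (dg_nonneg _ _ _) hCpos.le) (by positivity)) hb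
    calc _ ≤ ∑ d ∈ D.filter (fun d => ¬ ∀ b ∈ J,
      dg G d (B b) * C.card ≤ 2 * r * θ * dg G d C * (B b).card),
          ∑ b ∈ J, dg G d (B b) * C.card / (2 * r * θ * (B b).card) := Finset.sum_le_sum step
      _ ≤ ∑ d ∈ D, ∑ b ∈ J, dg G d (B b) * C.card / (2 * r * θ * (B b).card) := by
          apply Finset.sum_le_sum_of_subset_of_nonneg (Finset.filter_subset _ _)
          intro d _ _
          exact Finset.sum_nonneg fun i _ =>
            div_nonneg (mul_nonneg (dg_nonneg _ _ _) hCpos.le) (by positivity)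
      _ = ∑ b ∈ J, (∑ d ∈ D, dg G d (B b)) * C.card / (2 * r * θ * (B b).card) := by
          rw [Finset.sum_comm]
          apply Finset.sum_congr rfl
          intro b _
          rw [Finset.sum_mul, Finset.sum_div]
      _ ≤ ∑ b ∈ J, Δ * C.card / (2 * r) := by
          apply Finset.sum_le_sum
          intro b hb
          rw [sum_dg]
          have : ∑ c ∈ B b, dg G c D ≤ (B b).card * (θ * Δ) := by
            simpa using Finset.sum_le_card_nsmul _ _ _ (h3 b hb)
          rcases Nat.eq_zero_or_pos (B b).card with h0 | h0
          · rw [h0]; simp; positivity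
          · have hBpos : (0:ℝ) < (B b).card := by exact_mod_cast h0
            rw [div_le_div_iff₀ (by positivity) (by positivity)]
            have : (∑ c ∈ B b, dg G c D) * (C.card * (2 * r)) ≤
              ((B b).card * (θ * Δ)) * (C.card * (2 * r)) := by gcongr
            nlinarith
      _ = J.card * (Δ * C.card / (2 * r)) := by simp
      _ ≤ r * (Δ * C.card / (2 * r)) := by gcongr
      _ = Δ / 2 * C.card := by field_simp
  have htot : Δ * C.card ≤ ∑ d ∈ D, dg G d C := by
    rw [sum_dg]
    have := Finset.card_nsmul_le_sum C (fun c => dg G c D) Δ h1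
    rw [nsmul_eq_mul] at this; linarith
  have hgood : Δ / 2 * C.card ≤ ∑ d ∈ D1, dg G d C := by
    have := Finset.sum_filter_add_sum_filter_not D (fun d => ∀ b ∈ J,
      dg G d (B b) * C.card ≤ 2 * r * θ * dg G d C * (B b).card) (fun d => dg G d C)
    rw [← hD1] at this
    linarith
  -- maximal Z
  set P : Finset α → Prop := fun Z => ∑ d ∈ Z, dg G d C ≤ 2 * (NN G Z C).card ∧
    ∑ d ∈ Z, dg G d C ≤ κ / (4 * r * θ) * C.card with hP
  have hne : (D1.powerset.filter P).Nonempty := by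
    refine ⟨∅, ?_⟩
    simp only [Finset.mem_filter, Finset.empty_mem_powerset, true_and, hP]
    simp; positivity
  obtain ⟨Z, hZ, hmax⟩ := Finset.exists_max_image _ Finset.card hne
  rw [Finset.mem_filter, Finset.mem_powerset] at hZ
  obtain ⟨hZD, hZ1, hZ2⟩ := hZ
  have hD1D : D1 ⊆ D := Finset.filter_subset _ _
  have hcovb : ∀ b ∈ J, ∑ d ∈ Z, dg G d (B b) ≤ κ / 2 * (B b).card := by
    intro b hb
    have : ∀ d ∈ Z, dg G d (B b) ≤ 2 * r * θ * (B b).card / C.card * dg G d C := by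
      intro d hd
      have := (Finset.mem_filter.1 (hZD hd)).2 b hb
      rw [div_mul_eq_mul_div, le_div_iff₀ hCpos]; linarith
    calc _ ≤ ∑ d ∈ Z, 2 * r * θ * (B b).card / C.card * dg G d C := Finset.sum_le_sum this
      _ = 2 * r * θ * (B b).card / C.card * ∑ d ∈ Z, dg G d C := by rw [Finset.mul_sum]
      _ ≤ 2 * r * θ * (B b).card / C.card * (κ / (4 * r * θ) * C.card) := by gcongr
      _ = _ := by field_simp; ring
  by_cases hcase : ∃ d ∈ D1, d ∉ Z ∧
      ∑ e ∈ insert d Z, dg G e C ≤ 2 * (NN G (insert d Z) C).card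
  · obtain ⟨d, hd, hdZ, hd1⟩ := hcase
    refine ⟨insert d Z, ?_, ?_, ?_⟩
    · intro x hx
      rcases Finset.mem_insert.1 hx with rfl | hx
      · exact hD1D hd
      · exact hD1D (hZD hx)
    · have : ¬ (∑ e ∈ insert d Z, dg G e C ≤ κ / (4 * r * θ) * C.card) := by
        intro hle
        have hmem : insert d Z ∈ D1.powerset.filter P := by
          rw [Finset.mem_filter, Finset.mem_powerset]
          exact ⟨Finset.insert_subset hd hZD, hd1, hle⟩
        have := hmax _ hmem
        rw [Finset.card_insert_of_notMem hdZ] at this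
        omega
      push Not at this
      have e : κ / (8 * r * θ) * C.card = (κ / (4 * r * θ) * C.card) / 2 := by
        field_simp; norm_num
      rw [e]; linarith
    · intro b hb
      calc ((NN G (insert d Z) (B b)).card : ℝ) ≤ ∑ e ∈ insert d Z, dg G e (B b) := card_NN_le _ _ _
        _ = dg G d (B b) + ∑ e ∈ Z, dg G e (B b) := Finset.sum_insert hdZ
        _ ≤ κ / 2 * (B b).card + κ / 2 * (B b).card :=
            add_le_add (h4 d (hD1D hd) b hb) (hcovb b hb)
        _ = _ := by ring
  · push Not at hcase
    refine ⟨Z, hZD.trans hD1D, ?_, ?_⟩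
    · have key : ∀ d ∈ D1, dg G d C ≤ 2 * dg G d (NN G Z C) := by
        intro d hd
        by_cases hdZ : d ∈ Z
        · have : dg G d (NN G Z C) = dg G d C := by
            unfold dg
            congr 2
            ext c
            simp only [Finset.mem_filter, mem_NN]
            constructor
            · rintro ⟨⟨h, _⟩, h'⟩; exact ⟨h, h'⟩
            · rintro ⟨h, h'⟩; exact ⟨⟨h, d, hdZ, h'⟩, h'⟩
          rw [this]; linarith [dg_nonneg G d C]
        · have h5 := hcase d hd hdZ
          rw [Finset.sum_insert hdZ, NN_insert] at h5
          have h6 := Finset.card_union_add_card_inter (C.filter (fun c => G.Adj d c)) (NN G Z C)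
          have h7 : (C.filter (fun c => G.Adj d c)) ∩ NN G Z C =
              (NN G Z C).filter (fun c => G.Adj d c) := by
            ext c
            simp only [Finset.mem_inter, Finset.mem_filter, mem_NN]
            tauto
          rw [h7] at h6
          have h8 : (((C.filter (fun c => G.Adj d c)) ∪ NN G Z C).card : ℝ) + dg G d (NN G Z C)
              = dg G d C + (NN G Z C).card := by
            unfold dg; exact_mod_cast h6
          -- not P : sum > 2 * card; and sum_Z ≤ 2 card NN would be needed
          linarith [hZ1]
      have h9 : Δ / 2 * C.card ≤ 2 * ∑ d ∈ D, dg G d (NN G Z C) := by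
        calc _ ≤ ∑ d ∈ D1, dg G d C := hgood
          _ ≤ ∑ d ∈ D1, 2 * dg G d (NN G Z C) := Finset.sum_le_sum key
          _ ≤ ∑ d ∈ D, 2 * dg G d (NN G Z C) :=
            Finset.sum_le_sum_of_subset_of_nonneg hD1D
              (fun _ _ _ => by linarith [dg_nonneg G ‹_› (NN G Z C)])
          _ = _ := by rw [Finset.mul_sum]
      rw [sum_dg] at h9
      have h10 : ∑ c ∈ NN G Z C, dg G c D ≤ (NN G Z C).card * (θ * Δ) := by
        simpa using Finset.sum_le_card_nsmul _ _ _ (fun c hc => h2 c (NN_subset _ _ _ hc))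
      have h11 : Δ / 2 * C.card ≤ Δ * (2 * θ * (NN G Z C).card) := by nlinarith
      have h12 : (C.card : ℝ) / 2 ≤ 2 * θ * (NN G Z C).card := by
        have : Δ * ((C.card : ℝ) / 2) ≤ Δ * (2 * θ * (NN G Z C).card) := by linarith
        exact le_of_mul_le_mul_left this hΔ
      have h13 : (C.card : ℝ) / (4 * θ) ≤ (NN G Z C).card := by
        rw [div_le_iff₀ (by positivity)]; linarith
      refine le_trans ?_ h13
      rw [div_mul_eq_mul_div, div_le_div_iff₀ (by positivity) (by positivity)]
      have : κ * C.card * (4 * θ) ≤ 1 * C.card * (4 * θ) := by gcongr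
      have h14 : 1 * C.card * (4 * θ) ≤ r * (C.card * (4 * θ)) := by
        have : (0:ℝ) ≤ C.card * (4 * θ) := by positivity
        nlinarith
      nlinarith
    · intro b hb
      have := card_NN_le G Z (B b)
      have h5 := hcovb b hb
      have : κ / 2 * (B b).card ≤ κ * (B b).card := by gcongr; linarith
      linarith
end PPAux

namespace PPAux
open Classical
variable {α : Type*}

lemma family {K : Type*} (B : Finset α) (hB : B.Nonempty) (good : K → Prop) (hitr : K → α → Prop)
    (η : ℝ) (hη : 0 < η)
    (h : ∀ C ⊆ B, C.Nonempty → ∃ k, good k ∧ η * C.card ≤ ((C.filter (hitr k)).card : ℝ)) :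
    ∃ U ⊆ B, (B.card : ℝ) ≤ 2 * U.card ∧ ∃ Zf : α → K, ∀ c ∈ U, good (Zf c) ∧ hitr (Zf c) c ∧
      η / 2 * B.card ≤ ((U.filter (fun c' => Zf c' = Zf c)).card : ℝ) := by
  obtain ⟨k0, -⟩ := h B subset_rfl hB
  set P : Finset α → Prop := fun U => ∃ Zf : α → K, ∀ c ∈ U, good (Zf c) ∧ hitr (Zf c) c ∧
      η / 2 * B.card ≤ ((U.filter (fun c' => Zf c' = Zf c)).card : ℝ) with hP
  have hne : (B.powerset.filter P).Nonempty := by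
    refine ⟨∅, ?_⟩
    simp only [Finset.mem_filter, Finset.empty_mem_powerset, true_and, hP]
    exact ⟨fun _ => k0, by simp⟩
  obtain ⟨U, hU, hmax⟩ := Finset.exists_max_image _ Finset.card hne
  rw [Finset.mem_filter, Finset.mem_powerset] at hU
  obtain ⟨hUB, Zf, hZ⟩ := hU
  refine ⟨U, hUB, ?_, Zf, hZ⟩
  by_contra hlt
  push Not at hlt
  have hcard : ((B \ U).card : ℝ) + U.card = B.card := by
    exact_mod_cast Finset.card_sdiff_add_card_eq_card hUB
  have hpos : (0:ℝ) < (B \ U).card := by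
    have : (0:ℝ) ≤ U.card := by positivity
    linarith
  obtain ⟨k, hk, hk2⟩ := h (B \ U) Finset.sdiff_subset (Finset.card_pos.1 (by exact_mod_cast hpos))
  set X := (B \ U).filter (hitr k) with hX
  have hXpos : (0:ℝ) < X.card := lt_of_lt_of_le (by positivity) hk2
  have hdisj : Disjoint U X := by
    rw [Finset.disjoint_left]; intro c h1 h2
    simp [hX] at h2; exact h2.1.2 h1
  have hmem : U ∪ X ∈ B.powerset.filter P := by
    rw [Finset.mem_filter, Finset.mem_powerset]
    refine ⟨Finset.union_subset hUB ((Finset.filter_subset _ _).trans Finset.sdiff_subset),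
      fun c => if c ∈ X then k else Zf c, ?_⟩
    intro c hc
    by_cases hcX : c ∈ X
    · simp only [hcX, if_true]
      refine ⟨hk, (Finset.mem_filter.1 hcX).2, ?_⟩
      have : X ⊆ (U ∪ X).filter (fun c' => (if c' ∈ X then k else Zf c') = k) := by
        intro x hx; simp [hx]
      have h1 : (X.card : ℝ) ≤ _ := Nat.cast_le.2 (Finset.card_le_card this)
      refine le_trans ?_ h1
      refine le_trans ?_ hk2
      have : η * B.card ≤ η * (2 * (B \ U).card) := by gcongr; linarith
      linarith
    · simp only [hcX, if_false]
      have hcU : c ∈ U := by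
        rcases Finset.mem_union.1 hc with h | h
        · exact h
        · exact absurd h hcX
      obtain ⟨h1, h2, h3⟩ := hZ c hcU
      refine ⟨h1, h2, h3.trans ?_⟩
      refine Nat.cast_le.2 (Finset.card_le_card ?_)
      intro x hx
      rw [Finset.mem_filter] at hx ⊢
      have : x ∉ X := Finset.disjoint_left.1 hdisj hx.1
      simp [this, hx.1, hx.2]
  have := hmax _ hmem
  rw [Finset.card_union_of_disjoint hdisj] at this
  have : 0 < X.card := by exact_mod_cast hXpos
  omega

lemma class_avg {K : Type*} (U : Finset α) (cls : α → K) (g : α → ℝ) (hg : ∀ c, 0 ≤ g c)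
    (s : ℝ) :
    ((U.filter (fun c => s * ((U.filter (fun c' => cls c' = cls c)).card : ℝ) <
      ∑ x ∈ U.filter (fun c' => cls c' = cls c), g x)).card : ℝ) * s ≤ ∑ c ∈ U, g c := by
  set Bd := U.filter (fun c => s * ((U.filter (fun c' => cls c' = cls c)).card : ℝ) <
      ∑ x ∈ U.filter (fun c' => cls c' = cls c), g x) with hBd
  have h1 : ∀ c ∈ U, cls c ∈ U.image cls := fun c hc => Finset.mem_image_of_mem _ hc
  have h2 : ∀ c ∈ Bd, cls c ∈ U.image cls := fun c hc => h1 c (Finset.mem_filter.1 hc).1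
  rw [← Finset.sum_fiberwise_of_maps_to h1, Finset.card_eq_sum_card_fiberwise h2]
  push_cast
  rw [Finset.sum_mul]
  apply Finset.sum_le_sum
  intro k hk
  by_cases hne : (Bd.filter (fun c => cls c = k)).Nonempty
  · obtain ⟨c, hc⟩ := hne
    rw [Finset.mem_filter] at hc
    obtain ⟨hc, rfl⟩ := hc
    have h3 := (Finset.mem_filter.1 hc).2
    have : Bd.filter (fun c' => cls c' = cls c) = U.filter (fun c' => cls c' = cls c) := by
      ext x
      simp only [hBd, Finset.mem_filter]
      constructor
      · rintro ⟨⟨h, -⟩, h'⟩; exact ⟨h, h'⟩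
      · rintro ⟨h, h'⟩; refine ⟨⟨h, ?_⟩, h'⟩
        rw [h']; exact h3
    rw [this]; linarith
  · rw [Finset.not_nonempty_iff_eq_empty.1 hne]
    simp; exact Finset.sum_nonneg fun i _ => hg i

lemma tuple {ι : Type*} [Fintype ι] (U : ι → Finset α) (hU : ∀ i, (U i).Nonempty)
    (bad : ι → ι → α → α → Prop) (ρ : ℝ)
    (h : ∀ i j, i ≠ j → ∀ a ∈ U i, (((U j).filter (fun b => bad i j a b)).card : ℝ) ≤ ρ * (U j).card)
    (hρ : (Fintype.card ι : ℝ) ^ 2 * ρ < 1) (hρ0 : 0 ≤ ρ) :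
    ∃ t : ι → α, (∀ i, t i ∈ U i) ∧ ∀ i j, i ≠ j → ¬ bad i j (t i) (t j) := by
  by_contra hcon
  push Not at hcon
  set PF := Fintype.piFinset U with hPF
  have hPFne : PF.Nonempty := by
    rw [hPF, Fintype.piFinset_nonempty]; exact hU
  have hPFpos : (0:ℝ) < PF.card := by exact_mod_cast hPFne.card_pos
  have key : ∀ i j, i ≠ j → ∑ t ∈ PF, (if bad i j (t i) (t j) then (1:ℝ) else 0) ≤ ρ * PF.card := by
    intro i j hij
    have hUj : (0:ℝ) < (U j).card := by exact_mod_cast (hU j).card_pos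
    have e1 : ∑ x ∈ PF ×ˢ U j, (if bad i j (x.1 i) (x.1 j) then (1:ℝ) else 0) =
        ∑ x ∈ PF ×ˢ U j, (if bad i j (x.1 i) x.2 then (1:ℝ) else 0) := by
      have hm : ∀ x ∈ PF ×ˢ U j, (Function.update x.1 j x.2, x.1 j) ∈ PF ×ˢ U j := by
        intro x hx
        simp only [hPF, Finset.mem_product, Fintype.mem_piFinset] at hx ⊢
        refine ⟨fun a => ?_, hx.1 j⟩
        by_cases ha : a = j
        · subst ha; simp [hx.2]
        · simp [Function.update_of_ne ha, hx.1 a]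
      refine Finset.sum_nbij' (fun x => (Function.update x.1 j x.2, x.1 j))
        (fun x => (Function.update x.1 j x.2, x.1 j)) hm hm ?_ ?_ ?_
      · intro x _; simp
      · intro x _; simp
      · intro x _
        simp [Function.update_of_ne hij]
    have e2 : ∑ x ∈ PF ×ˢ U j, (if bad i j (x.1 i) (x.1 j) then (1:ℝ) else 0) =
        (∑ t ∈ PF, (if bad i j (t i) (t j) then (1:ℝ) else 0)) * (U j).card := by
      rw [Finset.sum_product, Finset.sum_mul]
      apply Finset.sum_congr rfl; intro t _
      dsimp only
      by_cases hb : bad i j (t i) (t j) <;> simp [hb]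
    have e3 : ∑ x ∈ PF ×ˢ U j, (if bad i j (x.1 i) x.2 then (1:ℝ) else 0) ≤
        PF.card * (ρ * (U j).card) := by
      rw [Finset.sum_product, ← nsmul_eq_mul]
      apply Finset.sum_le_card_nsmul
      intro t ht
      have := h i j hij (t i) (Fintype.mem_piFinset.1 ht i)
      simpa using this
    rw [← e1, e2] at e3
    have : (∑ t ∈ PF, (if bad i j (t i) (t j) then (1:ℝ) else 0)) * (U j).card ≤
      (ρ * PF.card) * (U j).card := by linarith
    exact le_of_mul_le_mul_right this hUj
  have h1 : (PF.card : ℝ) ≤ ∑ t ∈ PF, ∑ i, ∑ j, if i ≠ j ∧ bad i j (t i) (t j) then (1:ℝ) else 0 := by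
    have : ∑ t ∈ PF, (1:ℝ) = PF.card := by simp
    rw [← this]
    apply Finset.sum_le_sum
    intro t ht
    obtain ⟨i, j, hij, hb⟩ := hcon t (Fintype.mem_piFinset.1 ht)
    have h0 : ∀ i j, (0:ℝ) ≤ if i ≠ j ∧ bad i j (t i) (t j) then (1:ℝ) else 0 := by
      intro i j; split_ifs <;> norm_num
    calc (1:ℝ) = if i ≠ j ∧ bad i j (t i) (t j) then (1:ℝ) else 0 := by rw [if_pos ⟨hij, hb⟩]
      _ ≤ ∑ j, if i ≠ j ∧ bad i j (t i) (t j) then (1:ℝ) else 0 :=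
        Finset.single_le_sum (f := fun j => if i ≠ j ∧ bad i j (t i) (t j) then (1:ℝ) else 0)
          (fun j _ => h0 i j) (Finset.mem_univ j)
      _ ≤ _ := Finset.single_le_sum
          (f := fun i => ∑ j, if i ≠ j ∧ bad i j (t i) (t j) then (1:ℝ) else 0)
          (fun i _ => Finset.sum_nonneg fun j _ => h0 i j) (Finset.mem_univ i)
  rw [Finset.sum_comm] at h1
  have h2 : ∀ i, ∑ t ∈ PF, ∑ j, (if i ≠ j ∧ bad i j (t i) (t j) then (1:ℝ) else 0) ≤
      Fintype.card ι * (ρ * PF.card) := by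
    intro i
    rw [Finset.sum_comm]
    have := Finset.sum_le_card_nsmul Finset.univ
      (fun j => ∑ t ∈ PF, (if i ≠ j ∧ bad i j (t i) (t j) then (1:ℝ) else 0)) (ρ * PF.card) (by
        intro j _
        by_cases hij : i = j
        · simp [hij]; positivity
        · simpa [hij] using key i j hij)
    simpa using this
  have h3 := Finset.sum_le_card_nsmul Finset.univ _ _ (fun i _ => h2 i)
  rw [nsmul_eq_mul, Finset.card_univ] at h3
  have : (Fintype.card ι : ℝ) * (Fintype.card ι * (ρ * PF.card)) = ((Fintype.card ι : ℝ) ^ 2 * ρ) * PF.card := by ring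
  nlinarith
end PPAux

namespace PPAux
open Classical
variable {α : Type*}

lemma card_filter_mul_le (Y : Finset α) (p : α → Prop) (g : α → ℝ) (hg : ∀ c, 0 ≤ g c) (s : ℝ)
    (h : ∀ c ∈ Y, p c → s ≤ g c) : ((Y.filter p).card : ℝ) * s ≤ ∑ x ∈ Y, g x := by
  calc ((Y.filter p).card : ℝ) * s ≤ ∑ x ∈ Y.filter p, g x := by
        rw [← nsmul_eq_mul]
        apply Finset.card_nsmul_le_sum
        intro x hx; rw [Finset.mem_filter] at hx; exact h x hx.1 hx.2
    _ ≤ _ := Finset.sum_le_sum_of_subset_of_nonneg (Finset.filter_subset _ _) (fun i _ _ => hg i)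

lemma card_filter_or_le (Y : Finset α) (p q : α → Prop) [DecidablePred p] [DecidablePred q]
    {_ : DecidablePred (fun x => p x ∨ q x)} :
    ((Y.filter (fun x => p x ∨ q x)).card : ℝ) ≤ (Y.filter p).card + (Y.filter q).card := by
  have : Y.filter (fun x => p x ∨ q x) = Y.filter p ∪ Y.filter q := by
    ext x; simp only [Finset.mem_filter, Finset.mem_union]; tauto
  rw [this]
  exact_mod_cast Finset.card_union_le _ _

lemma select {K : Type*} (G : SimpleGraph α) (J : Finset ℕ) (hJne : J.Nonempty) (B : ℕ → Finset α) (r : ℝ)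
    (hr : (J.card : ℝ) ≤ r) (hr1 : 1 ≤ r) (good : K → Prop) (cov : K → α → Prop)
    (hitr : K → α → Prop) (η lam lo : ℝ) (hη : 0 < η) (hlo : 0 < lo)
    (hB : ∀ j ∈ J, (B j).Nonempty)
    (hk : ∀ j ∈ J, ∀ C ⊆ B j, C.Nonempty → ∃ k, ((∀ b ∈ J, (((B b).filter (cov k)).card : ℝ)
      ≤ 1 / (64 * r ^ 3) * (B b).card) ∧ good k) ∧ η * C.card ≤ ((C.filter (hitr k)).card : ℝ))
    (hl : ∀ i ∈ J, ∀ j ∈ J, i ≠ j → ∀ v ∈ B i, dg G v (B j) ≤ lam * (B j).card)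
    (hlam : lam ≤ lo / (128 * r ^ 3)) :
    ∃ (key : ℕ → K) (C' : ℕ → Finset α), ∀ j ∈ J, good (key j) ∧ C' j ⊆ B j ∧
      (∀ c ∈ C' j, hitr (key j) c) ∧ η / 4 * (B j).card ≤ (C' j).card ∧
      ∀ i ∈ J, i ≠ j → (∀ c ∈ C' j, ¬ cov (key i) c) ∧
        ∀ v ∈ C' i, dg G v (C' j) ≤ lo * (C' j).card := by
  have hfam : ∀ j : J, _ := fun j => family (B j) (hB j j.2) _ hitr η hη (hk j j.2)
  choose U hUB hU2 Zf hZf using hfam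
  have hUpos : ∀ j : J, (0:ℝ) < (U j).card := by
    intro j
    have : (0:ℝ) < (B j).card := by exact_mod_cast (hB j j.2).card_pos
    linarith [hU2 j]
  have hUne : ∀ j : J, (U j).Nonempty := fun j => Finset.card_pos.1 (by exact_mod_cast hUpos j)
  set Y : ∀ j : J, α → Finset α := fun j c => (U j).filter (fun c' => Zf j c' = Zf j c) with hY
  have hYmem : ∀ (j : J), ∀ c ∈ U j, c ∈ Y j c := by
    intro j c hc; simp [hY, hc]
  have hYpos : ∀ (j : J), ∀ c ∈ U j, (0:ℝ) < (Y j c).card := by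
    intro j c hc; exact_mod_cast Finset.card_pos.2 ⟨c, hYmem j c hc⟩
  have hcardJ : (Fintype.card J : ℝ) ≤ r := by simpa using hr
  have htup := tuple (ι := J) U hUne
    (fun i j a b => (1 / (4 * r) * ((Y j b).card : ℝ) <
        ∑ x ∈ Y j b, if cov (Zf i a) x then (1:ℝ) else 0) ∨
      (lo / (8 * r) * ((Y j b).card : ℝ) < ∑ x ∈ Y j b, dg G x (Y i a) / (Y i a).card))
    (1 / (4 * r ^ 2)) (by
      intro i j hij a ha
      have hij' : (i:ℕ) ≠ j := fun h => hij (Subtype.ext h)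
      refine (card_filter_or_le _ _ _).trans ?_
      have h1 := class_avg (U j) (Zf j) (fun x => if cov (Zf i a) x then (1:ℝ) else 0)
        (by intro c; split_ifs <;> norm_num) (1 / (4 * r))
      have h2 := class_avg (U j) (Zf j) (fun x => dg G x (Y i a) / (Y i a).card)
        (by intro c; exact div_nonneg (dg_nonneg _ _ _) (by positivity)) (lo / (8 * r))
      have s1 : ∑ x ∈ U j, (if cov (Zf i a) x then (1:ℝ) else 0) ≤
          1 / (64 * r ^ 3) * (2 * (U j).card) := by
        have h3 := ((hZf i a ha).1.1) j j.2
        have : ∑ x ∈ U j, (if cov (Zf i a) x then (1:ℝ) else 0) ≤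
            (((B j).filter (cov (Zf i a))).card : ℝ) := by
          simp only [Finset.sum_boole]
          exact_mod_cast Finset.card_le_card (Finset.filter_subset_filter _ (hUB j))
        refine this.trans (h3.trans ?_)
        gcongr; exact hU2 j
      have s2 : ∑ x ∈ U j, dg G x (Y i a) / (Y i a).card ≤ lo / (128 * r ^ 3) * (2 * (U j).card) := by
        rw [← Finset.sum_div, sum_dg, div_le_iff₀ (hYpos i a ha)]
        have : ∀ y ∈ Y i a, dg G y (U j) ≤ lo / (128 * r ^ 3) * (2 * (U j).card) := by
          intro y hy
          have hyB : y ∈ B i := hUB i (Finset.mem_filter.1 hy).1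
          refine (dg_mono G y (hUB j)).trans ((hl i i.2 j j.2 hij' y hyB).trans ?_)
          calc lam * ((B j).card : ℝ) ≤ lo / (128 * r ^ 3) * ((B j).card : ℝ) := by gcongr
            _ ≤ _ := by gcongr; exact hU2 j
        have := Finset.sum_le_card_nsmul _ _ _ this
        rw [nsmul_eq_mul] at this; linarith
      have h1' := (le_div_iff₀ (by positivity)).2 (h1.trans s1)
      have h2' := (le_div_iff₀ (by positivity)).2 (h2.trans s2)
      refine (add_le_add h1' h2').trans (le_of_eq ?_)
      field_simp; ring)
    (by
      calc (Fintype.card J : ℝ) ^ 2 * (1 / (4 * r ^ 2)) ≤ r ^ 2 * (1 / (4 * r ^ 2)) := by gcongr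
        _ = 1 / 4 := by field_simp
        _ < 1 := by norm_num)
    (by positivity)
  obtain ⟨t, htU, htb⟩ := htup
  set j0 : J := ⟨hJne.choose, hJne.choose_spec⟩
  set key : ℕ → K := fun j => if h : j ∈ J then Zf ⟨j, h⟩ (t ⟨j, h⟩) else Zf j0 (t j0) with hkey
  set Yt : ℕ → Finset α := fun j => if h : j ∈ J then Y ⟨j, h⟩ (t ⟨j, h⟩) else ∅ with hYt
  set C' : ℕ → Finset α := fun j => (Yt j).filter (fun v => ∀ i ∈ J, i ≠ j →
    ¬ cov (key i) v ∧ dg G v (Yt i) ≤ lo / 2 * (Yt i).card) with hC'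
  have hkey' : ∀ j (h : j ∈ J), key j = Zf ⟨j, h⟩ (t ⟨j, h⟩) := by
    intro j h; simp [hkey, h]
  have hYt' : ∀ j (h : j ∈ J), Yt j = Y ⟨j, h⟩ (t ⟨j, h⟩) := by
    intro j h; simp [hYt, h]
  have hYtpos : ∀ j ∈ J, (0:ℝ) < (Yt j).card := by
    intro j hj; rw [hYt' j hj]; exact hYpos _ _ (htU _)
  have hhalf : ∀ j ∈ J, ((Yt j).card : ℝ) / 2 ≤ (C' j).card := by
    intro j hj
    have hsub : Yt j \ C' j ⊆ J.biUnion (fun i =>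
        if i = j then ∅ else (Yt j).filter (cov (key i)) ∪
          (Yt j).filter (fun v => lo / 2 * (Yt i).card < dg G v (Yt i))) := by
      intro v hv
      rw [Finset.mem_sdiff] at hv
      obtain ⟨hv1, hv2⟩ := hv
      simp only [hC', Finset.mem_filter, not_and] at hv2
      have := hv2 hv1
      push Not at this
      obtain ⟨i, hi, hij, h⟩ := this
      rw [Finset.mem_biUnion]
      refine ⟨i, hi, ?_⟩
      rw [if_neg hij, Finset.mem_union, Finset.mem_filter, Finset.mem_filter]
      by_cases hc : cov (key i) v
      · exact Or.inl ⟨hv1, hc⟩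
      · exact Or.inr ⟨hv1, h hc⟩
    have hc1 : ((Yt j \ C' j).card : ℝ) ≤ ∑ i ∈ J, 1 / (2 * r) * (Yt j).card := by
      refine (Nat.cast_le.2 ((Finset.card_le_card hsub).trans Finset.card_biUnion_le)).trans ?_
      push_cast
      apply Finset.sum_le_sum
      intro i hi
      by_cases hij : i = j
      · simp [hij]; positivity
      rw [if_neg hij]
      have hb := htb ⟨i, hi⟩ ⟨j, hj⟩ (fun h => hij (congrArg Subtype.val h))
      simp only [not_or, not_lt] at hb
      rw [← hYt' i hi, ← hYt' j hj, ← hkey' i hi] at hb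
      refine (Nat.cast_le.2 (Finset.card_union_le _ _)).trans ?_
      push_cast
      have b1 : (((Yt j).filter (cov (key i))).card : ℝ) ≤ 1 / (4 * r) * (Yt j).card := by
        simpa using hb.1
      have b2 := card_filter_mul_le (Yt j) (fun v => lo / 2 * (Yt i).card < dg G v (Yt i))
        (fun x => dg G x (Yt i) / (Yt i).card)
        (by intro c; exact div_nonneg (dg_nonneg _ _ _) (by positivity)) (lo / 2) (by
          intro c _ h
          rw [le_div_iff₀ (hYtpos i hi)]; exact h.le)
      have b3 := (le_div_iff₀ (by positivity)).2 (b2.trans hb.2)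
      refine (add_le_add b1 b3).trans (le_of_eq ?_)
      field_simp; ring
    have hc2 : ∑ i ∈ J, 1 / (2 * r) * ((Yt j).card : ℝ) ≤ (Yt j).card / 2 := by
      rw [Finset.sum_const, nsmul_eq_mul]
      calc (J.card : ℝ) * (1 / (2 * r) * ((Yt j).card : ℝ)) ≤ r * (1 / (2 * r) * ((Yt j).card : ℝ)) := by
            gcongr
        _ = _ := by field_simp
    have hc3 : ((Yt j \ C' j).card : ℝ) + (C' j).card = (Yt j).card := by
      exact_mod_cast Finset.card_sdiff_add_card_eq_card (Finset.filter_subset _ _)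
    linarith
  have hYB : ∀ j ∈ J, Yt j ⊆ B j := by
    intro j hj; rw [hYt' j hj]; exact (Finset.filter_subset _ _).trans (hUB ⟨j, hj⟩)
  refine ⟨key, C', fun j hj => ⟨?_, ?_, ?_, ?_, ?_⟩⟩
  · rw [hkey' j hj]; exact (hZf _ _ (htU _)).1.2
  · exact (Finset.filter_subset _ _).trans (hYB j hj)
  · intro c hc
    have h1 := (Finset.mem_filter.1 hc).1
    rw [hYt' j hj] at h1
    have h2 := Finset.mem_filter.1 h1
    rw [hkey' j hj, ← h2.2]
    exact (hZf _ _ h2.1).2.1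
  · have := (hZf _ _ (htU ⟨j, hj⟩)).2.2
    have h2 := hhalf j hj
    rw [hYt' j hj] at h2
    simp only [hY] at h2
    have e : η / 4 * ((B j).card : ℝ) = (η / 2 * (B j).card) / 2 := by ring
    rw [e]
    exact le_trans (by gcongr) h2
  · intro i hi hij
    refine ⟨fun c hc => ((Finset.mem_filter.1 hc).2 i hi hij).1, ?_⟩
    intro v hv
    have h1 := ((Finset.mem_filter.1 hv).2 j hj (Ne.symm hij)).2
    have h2 : dg G v (C' j) ≤ dg G v (Yt j) := dg_mono G v (Finset.filter_subset _ _)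
    have h3 := hhalf j hj
    calc dg G v (C' j) ≤ lo / 2 * (Yt j).card := h2.trans h1
      _ = lo * ((Yt j).card / 2) := by ring
      _ ≤ _ := by gcongr
end PPAux

namespace PPAux
open Classical

lemma mem_filter_gen {β : Type*} {s : Finset β} {p : β → Prop} {inst : DecidablePred p} {x : β}
    (h : x ∈ s ∧ p x) : x ∈ @Finset.filter β p inst s := Finset.mem_filter.2 h

lemma pigeon {β γ : Type*} (s : Finset β) (f : β → γ) (S : Finset γ) (hS : S.Nonempty)
    (h : ∀ x ∈ s, f x ∈ S) : ∃ b ∈ S, s.card ≤ S.card * (s.filter (fun x => f x = b)).card := by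
  by_contra hcon
  push Not at hcon
  have h1 := Finset.card_eq_sum_card_fiberwise h
  have h2 : ∑ b ∈ S, S.card * (s.filter (fun x => f x = b)).card < ∑ b ∈ S, s.card :=
    Finset.sum_lt_sum_of_nonempty hS hcon
  rw [← Finset.mul_sum, ← h1, Finset.sum_const, smul_eq_mul] at h2
  exact lt_irrefl _ h2

lemma typeLemma {α γ : Type*} (J : Finset ℕ) (C : ℕ → Finset α) (ty : α → γ) (S : Finset γ)
    (hS : S.Nonempty) (h : ∀ j ∈ J, ∀ c ∈ C j, ty c ∈ S) (r : ℕ) (hr : S.card * r ≤ J.card) :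
    ∃ b ∈ S, ∃ J' ⊆ J, J'.card = r ∧
      ∀ j ∈ J', (C j).card ≤ S.card * ((C j).filter (fun c => ty c = b)).card := by
  have h1 : ∀ j, ∃ b, j ∈ J → b ∈ S ∧
      (C j).card ≤ S.card * ((C j).filter (fun c => ty c = b)).card := by
    intro j
    by_cases hj : j ∈ J
    · obtain ⟨b, hb, h2⟩ := pigeon (C j) ty S hS (h j hj)
      exact ⟨b, fun _ => ⟨hb, h2⟩⟩
    · exact ⟨hS.choose, fun h => absurd h hj⟩
  choose f hf using h1
  obtain ⟨b, hb, h2⟩ := pigeon J f S hS (fun j hj => (hf j hj).1)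
  have h3 : r ≤ (J.filter (fun x => f x = b)).card := by
    have hSp := hS.card_pos
    exact Nat.le_of_mul_le_mul_left (hr.trans h2) hSp
  obtain ⟨J', hJ', hc⟩ := Finset.exists_subset_card_eq h3
  refine ⟨b, hb, J', hJ'.trans (Finset.filter_subset _ _), hc, ?_⟩
  intro j hj
  have := Finset.mem_filter.1 (hJ' hj)
  rw [← this.2]
  exact (hf j this.1).2

def Link {α : Type*} (G : SimpleGraph α) (J : Finset ℕ) (C : ℕ → Finset α) (l : ℝ) : Prop :=
  ∀ i ∈ J, ∀ j ∈ J, i ≠ j → ∀ v ∈ C i, dg G v (C j) ≤ l * (C j).card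

/-- uniform level of a number -/
lemma exists_lev (Q : ℝ) (hQ : 1 < Q) (T : ℕ) : ∃ L : ℝ → ℕ, ∀ x : ℝ, 1 ≤ x → x ≤ Q ^ T →
    L x ∈ Finset.range (T + 1) ∧ Q ^ (L x) ≤ x ∧ x ≤ Q * Q ^ (L x) := by
  have : ∀ x : ℝ, ∃ l : ℕ, 1 ≤ x → x ≤ Q ^ T →
    l ∈ Finset.range (T + 1) ∧ Q ^ l ≤ x ∧ x ≤ Q * Q ^ l := by
    intro x
    by_cases hx : 1 ≤ x
    · obtain ⟨l, h1, h2⟩ := exists_nat_pow_near hx hQ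
      refine ⟨l, fun _ h3 => ⟨?_, h1, ?_⟩⟩
      · rw [Finset.mem_range]
        have : Q ^ l ≤ Q ^ T := h1.trans h3
        have := (pow_le_pow_iff_right₀ hQ).1 this
        omega
      · rw [pow_succ] at h2; linarith
    · exact ⟨0, fun h => absurd h hx⟩
  choose L hL using this
  exact ⟨L, hL⟩

lemma one_le_dg {α : Type*} (G : SimpleGraph α) (c : α) (D : Finset α)
    (h : ∃ d ∈ D, G.Adj d c) : 1 ≤ dg G c D := by
  obtain ⟨d, hd, ha⟩ := h
  unfold dg
  have : 0 < (D.filter (fun x => G.Adj c x)).card :=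
    Finset.card_pos.2 ⟨d, by simp [hd, ha.symm]⟩
  exact_mod_cast this

lemma opP2 (T r : ℕ) (hr : 1 ≤ r) (lo : ℝ) (hlo : 0 < lo) :
    ∃ qn : ℕ, ∃ li : ℝ, 0 < li ∧ ∃ Q0 : ℝ, 1 < Q0 ∧ ∀ {α : Type} (G : SimpleGraph α)
      (D1 D2 : Finset α) (J : Finset ℕ) (C : ℕ → Finset α) (Q : ℝ), Q0 ≤ Q →
      (D1.card : ℝ) ≤ Q ^ T → (D2.card : ℝ) ≤ Q ^ T → qn ≤ J.card → Link G J C li →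
      (∀ j ∈ J, ∀ d ∈ D1, dg G d (C j) ≤ li * (C j).card) →
      (∀ j ∈ J, ∀ d ∈ D2, dg G d (C j) ≤ li * (C j).card) →
      (∀ j ∈ J, (C j).Nonempty) →
      (∀ j ∈ J, ∀ c ∈ C j, ∃ d ∈ D1, G.Adj d c) →
      (∀ j ∈ J, ∀ c ∈ C j, ∃ d ∈ D2, G.Adj d c) →
      ∃ J' ⊆ J, J'.card = r ∧ ∃ C' Z1 Z2 : ℕ → Finset α, Link G J' C' lo ∧ ∀ j ∈ J',
        C' j ⊆ C j ∧ ((C j).card : ℝ) ≤ Q ^ 3 * (C' j).card ∧ Z1 j ⊆ D1 ∧ Z2 j ⊆ D2 ∧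
        (∀ c ∈ C' j, ∃ z ∈ Z1 j, G.Adj z c) ∧ (∀ c ∈ C' j, ∃ z ∈ Z2 j, G.Adj z c) ∧
        ∀ i ∈ J', i ≠ j → (∀ z ∈ Z1 i, ∀ c ∈ C' j, ¬ G.Adj z c) ∧
          (∀ z ∈ Z2 i, ∀ c ∈ C' j, ¬ G.Adj z c) := by
  have hrR : (1:ℝ) ≤ r := by exact_mod_cast hr
  have hT1 : (1:ℝ) ≤ (T:ℝ) + 1 := by linarith [(Nat.cast_nonneg T : (0:ℝ) ≤ T)]
  refine ⟨(T+1)*(T+1)*r, min 1 lo / (256 * (r:ℝ) ^ 3 * ((T:ℝ)+1)^2), by positivity,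
    4 * ((T:ℝ)+1)^2 * 1024^2 * (r:ℝ)^8, ?_, ?_⟩
  · have h1 : (1:ℝ) ≤ ((T:ℝ)+1)^2 := one_le_pow₀ hT1
    have h2 : (1:ℝ) ≤ (r:ℝ)^8 := one_le_pow₀ hrR
    nlinarith [mul_le_mul h1 h2 (by norm_num) (by positivity)]
  intro α G D1 D2 J C Q hQ0 hD1 hD2 hJ hL hl1 hl2 hne hc1 hc2
  set li := min 1 lo / (256 * (r:ℝ) ^ 3 * ((T:ℝ)+1)^2) with hli
  have hQ1 : 1 < Q := by
    have h1 : (1:ℝ) ≤ ((T:ℝ)+1)^2 := one_le_pow₀ hT1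
    have h2 : (1:ℝ) ≤ (r:ℝ)^8 := one_le_pow₀ hrR
    nlinarith [mul_le_mul h1 h2 (by norm_num) (by positivity)]
  have hQpos : 0 < Q := by linarith
  obtain ⟨L, hLev⟩ := exists_lev Q hQ1 T
  set S : Finset (ℕ × ℕ) := Finset.range (T+1) ×ˢ Finset.range (T+1) with hS
  have hScard : S.card = (T+1)*(T+1) := by simp [hS]
  have hSR : (S.card : ℝ) = ((T:ℝ)+1)^2 := by rw [hScard]; push_cast; ring
  have hlv1 : ∀ j ∈ J, ∀ c ∈ C j, _ := fun j hj c hc =>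
    hLev (dg G c D1) (one_le_dg G c D1 (hc1 j hj c hc)) ((dg_le_card _ _ _).trans hD1)
  have hlv2 : ∀ j ∈ J, ∀ c ∈ C j, _ := fun j hj c hc =>
    hLev (dg G c D2) (one_le_dg G c D2 (hc2 j hj c hc)) ((dg_le_card _ _ _).trans hD2)
  obtain ⟨⟨l1, l2⟩, hb, J', hJ'J, hJ'c, hbig⟩ := typeLemma J C
    (fun c => (L (dg G c D1), L (dg G c D2))) S (by simp [hS])
    (fun j hj c hc => Finset.mem_product.2 ⟨(hlv1 j hj c hc).1, (hlv2 j hj c hc).1⟩) r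
    (by rw [hScard]; exact hJ)
  set B : ℕ → Finset α := fun j =>
    (C j).filter (fun c => (L (dg G c D1), L (dg G c D2)) = (l1, l2)) with hB
  have hbig' : ∀ j ∈ J', ((C j).card : ℝ) ≤ ((T:ℝ)+1)^2 * (B j).card := by
    intro j hj
    have h0 := hbig j hj
    have h1 : (C j).card ≤ S.card * (B j).card := by convert h0
    rw [← hSR]; exact_mod_cast h1
  have hBC : ∀ j, B j ⊆ C j := fun j => Finset.filter_subset _ _
  have hBne : ∀ j ∈ J', (B j).Nonempty := by
    intro j hj
    rw [Finset.nonempty_iff_ne_empty]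
    intro h0
    have h1 := hbig' j hj
    rw [h0] at h1
    have h2 : (0:ℝ) < (C j).card := by exact_mod_cast (hne j (hJ'J hj)).card_pos
    simp at h1; rw [h1] at h2; simp at h2
  have hB1 : ∀ j ∈ J', ∀ c ∈ B j, Q ^ l1 ≤ dg G c D1 ∧ dg G c D1 ≤ Q * Q ^ l1 := by
    intro j hj c hc
    have h1 := Finset.mem_filter.1 hc
    have h2 := hlv1 j (hJ'J hj) c h1.1
    have h3 : L (dg G c D1) = l1 := (Prod.ext_iff.1 h1.2).1
    rw [h3] at h2; exact h2.2
  have hB2 : ∀ j ∈ J', ∀ c ∈ B j, Q ^ l2 ≤ dg G c D2 ∧ dg G c D2 ≤ Q * Q ^ l2 := by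
    intro j hj c hc
    have h1 := Finset.mem_filter.1 hc
    have h2 := hlv2 j (hJ'J hj) c h1.1
    have h3 : L (dg G c D2) = l2 := (Prod.ext_iff.1 h1.2).2
    rw [h3] at h2; exact h2.2
  set κ : ℝ := 1 / (128 * (r:ℝ)^3) with hκ
  have hκpos : 0 < κ := by positivity
  have hκ1 : κ ≤ 1 := by
    rw [hκ, div_le_one (by positivity)]
    have : (1:ℝ) ≤ (r:ℝ)^3 := one_le_pow₀ hrR
    linarith
  have hlik : li * ((T:ℝ)+1)^2 ≤ κ / 2 := by
    rw [hli, hκ]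
    have : min 1 lo / (256 * (r:ℝ) ^ 3 * ((T:ℝ)+1)^2) * ((T:ℝ)+1)^2 = min 1 lo / (256 * (r:ℝ)^3) := by
      field_simp
    rw [this]
    calc min 1 lo / (256 * (r:ℝ)^3) ≤ 1 / (256 * (r:ℝ)^3) := by gcongr; exact min_le_left _ _
      _ = _ := by field_simp; norm_num
  have hlil : li * ((T:ℝ)+1)^2 ≤ lo / (128 * (r:ℝ)^3) := by
    rw [hli]
    have : min 1 lo / (256 * (r:ℝ) ^ 3 * ((T:ℝ)+1)^2) * ((T:ℝ)+1)^2 = min 1 lo / (256 * (r:ℝ)^3) := by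
      field_simp
    rw [this]
    calc min 1 lo / (256 * (r:ℝ)^3) ≤ lo / (256 * (r:ℝ)^3) := by gcongr; exact min_le_right _ _
      _ ≤ _ := by gcongr; norm_num
  have hlipos : 0 < li := by positivity
  have hdd : ∀ d, ∀ j ∈ J', dg G d (C j) ≤ li * (C j).card →
      dg G d (B j) ≤ li * ((T:ℝ)+1)^2 * (B j).card := by
    intro d j hj h
    calc dg G d (B j) ≤ li * (C j).card := (dg_mono G d (hBC j)).trans h
      _ ≤ li * (((T:ℝ)+1)^2 * (B j).card) := by gcongr; exact hbig' j hj
      _ = _ := by ring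
  have hJ'r : (J'.card : ℝ) ≤ r := by rw [hJ'c]
  have hJ'ne : J'.Nonempty := Finset.card_pos.1 (by omega)
  set η0 : ℝ := κ / (8 * r * Q) with hη0
  have hη0pos : 0 < η0 := by positivity
  obtain ⟨key, C', hsel⟩ := select (K := Finset α × Finset α) G J' hJ'ne B r hJ'r hrR
    (fun k => k.1 ⊆ D1 ∧ k.2 ⊆ D2)
    (fun k c => (∃ z ∈ k.1, G.Adj z c) ∨ (∃ z ∈ k.2, G.Adj z c))
    (fun k c => (∃ z ∈ k.1, G.Adj z c) ∧ (∃ z ∈ k.2, G.Adj z c))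
    (η0 * η0) (li * ((T:ℝ)+1)^2) lo (by positivity) hlo hBne
    (by
      intro j hj X hX hXne
      obtain ⟨Z1, hZ1, hZ1c, hZ1b⟩ := hit G D1 X J' B (Q ^ l1) Q κ r (by positivity) hQ1.le hκpos
        hκ1 hJ'r hrR hXne (fun c hc => (hB1 j hj c (hX hc)).1) (fun c hc => (hB1 j hj c (hX hc)).2)
        (fun b hb c hc => (hB1 b hb c hc).2)
        (fun d hd b hb => (hdd d b hb (hl1 b (hJ'J hb) d hd)).trans (by gcongr))
      have hXpos : (0:ℝ) < X.card := by exact_mod_cast hXne.card_pos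
      have hNpos : (0:ℝ) < (NN G Z1 X).card := lt_of_lt_of_le (by positivity) hZ1c
      have hNX : NN G Z1 X ⊆ B j := (NN_subset _ _ _).trans hX
      obtain ⟨Z2, hZ2, hZ2c, hZ2b⟩ := hit G D2 (NN G Z1 X) J' B (Q ^ l2) Q κ r (by positivity)
        hQ1.le hκpos
        hκ1 hJ'r hrR (Finset.card_pos.1 (by exact_mod_cast hNpos))
        (fun c hc => (hB2 j hj c (hNX hc)).1) (fun c hc => (hB2 j hj c (hNX hc)).2)
        (fun b hb c hc => (hB2 b hb c hc).2)
        (fun d hd b hb => (hdd d b hb (hl2 b (hJ'J hb) d hd)).trans (by gcongr))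
      refine ⟨(Z1, Z2), ⟨fun b hb => ?_, hZ1, hZ2⟩, ?_⟩
      · refine (card_filter_or_le _ _ _).trans ?_
        have h1 := hZ1b b hb
        have h2 := hZ2b b hb
        unfold NN at h1 h2
        refine (add_le_add h1 h2).trans (le_of_eq ?_)
        rw [hκ]; field_simp; ring
      · refine le_trans (le_trans ?_ hZ2c) (Nat.cast_le.2 (Finset.card_le_card ?_))
        swap
        · intro c hc
          rw [mem_NN, mem_NN] at hc
          exact mem_filter_gen ⟨hc.1.1, hc.1.2, hc.2⟩
        rw [mul_assoc]
        gcongr)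
    (by
      intro i hi j hj hij v hv
      exact hdd v j hj (hL i (hJ'J hi) j (hJ'J hj) hij v (hBC i hv)))
    hlil
  refine ⟨J', hJ'J, hJ'c, C', fun j => (key j).1, fun j => (key j).2, ?_, ?_⟩
  · intro i hi j hj hij
    exact ((hsel j hj).2.2.2.2 i hi hij).2
  · intro j hj
    obtain ⟨h1, h2, h3, h4, h5⟩ := hsel j hj
    refine ⟨h2.trans (hBC j), ?_, h1.1, h1.2, fun c hc => (h3 c hc).1, fun c hc => (h3 c hc).2, ?_⟩
    · have e : η0 * η0 / 4 = 1 / (4 * 1024^2 * (r:ℝ)^8 * Q^2) := by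
        rw [hη0, hκ]; field_simp; ring
      rw [e, div_mul_eq_mul_div, div_le_iff₀ (by positivity), one_mul] at h4
      calc ((C j).card : ℝ) ≤ ((T:ℝ)+1)^2 * (B j).card := hbig' j hj
        _ ≤ ((T:ℝ)+1)^2 * ((C' j).card * (4 * 1024^2 * (r:ℝ)^8 * Q^2)) := by gcongr
        _ = (4 * ((T:ℝ)+1)^2 * 1024^2 * (r:ℝ)^8) * (Q^2 * (C' j).card) := by ring
        _ ≤ Q * (Q^2 * (C' j).card) := by gcongr
        _ = _ := by ring
    · intro i hi hij
      have := (h5 i hi hij).1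
      refine ⟨fun z hz c hc ha => this c hc (Or.inl ⟨z, hz, ha⟩),
        fun z hz c hc ha => this c hc (Or.inr ⟨z, hz, ha⟩)⟩
end PPAux

namespace PPAux
open Classical
variable {α : Type*}

def Coh (G : SimpleGraph α) (μ : ℝ) : Prop :=
  ∀ A B : Finset α, Disjoint A B → (∀ a ∈ A, ∀ b ∈ B, ¬ G.Adj a b) →
    (A.card : ℝ) < μ ∨ (B.card : ℝ) < μ

lemma cover {G : SimpleGraph α} {μ : ℝ} (hG : Coh G μ) {D C : Finset α} (hd : Disjoint D C)
    (hD : μ ≤ D.card) : ((C \ NN G D C).card : ℝ) < μ := by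
  rcases hG D (C \ NN G D C) (Finset.disjoint_of_subset_right Finset.sdiff_subset hd) (by
    intro a ha b hb hab
    rw [Finset.mem_sdiff, mem_NN] at hb
    exact hb.2 ⟨hb.1, a, ha, hab⟩) with h | h
  · linarith
  · exact h

lemma cover' {G : SimpleGraph α} {μ : ℝ} (hG : Coh G μ) {D C : Finset α} (hd : Disjoint D C)
    (hD : μ ≤ D.card) : (C.card : ℝ) - μ < (NN G D C).card := by
  have h1 := cover hG hd hD
  have : ((C \ NN G D C).card : ℝ) + (NN G D C).card = C.card := by
    exact_mod_cast Finset.card_sdiff_add_card_eq_card (NN_subset _ _ _)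
  linarith

lemma growth {G : SimpleGraph α} {μ τ : ℝ} (hG : Coh G μ) (hμ : 0 < μ) (hτ : 1 ≤ τ) (k : ℕ) :
    ∀ (B : ℕ → Finset α), (∀ i < k, Disjoint (B i) (B (i+1))) →
      (∀ i ≤ k, 2 * μ + 2 * τ * μ ≤ (B i).card) →
      ∃ Bad ⊆ B 0, (Bad.card : ℝ) < μ ∧ ∀ X ⊆ B 0 \ Bad, X.Nonempty →
        ∃ Xs : ℕ → Finset α, Xs 0 = X ∧ (∀ i ≤ k, Xs i ⊆ B i) ∧
          (∀ i < k, ∀ v ∈ Xs (i+1), ∃ u ∈ Xs i, G.Adj u v) ∧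
          min μ (τ ^ k * X.card) ≤ (Xs k).card := by
  induction k with
  | zero =>
    intro B _ _
    refine ⟨∅, by simp, by simpa using hμ, ?_⟩
    intro X hX _
    exact ⟨fun _ => X, rfl, by
      intro i hi; have : i = 0 := by omega
      subst this; simpa using hX, by intro i hi; omega, by simp⟩
  | succ k ih =>
    intro B hB hsz
    obtain ⟨Bad1, hBad1, hBad1c, hgrow⟩ := ih (fun i => B (i+1))
      (fun i hi => hB (i+1) (by omega)) (fun i hi => hsz (i+1) (by omega))
    set B1 := B 1 \ Bad1 with hB1
    have hB1c : (B1.card : ℝ) + Bad1.card = (B 1).card := by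
      exact_mod_cast Finset.card_sdiff_add_card_eq_card hBad1
    have hsz1 := hsz 1 (by omega)
    have hτμ : μ ≤ τ * μ := by nlinarith
    set P : Finset α → Prop := fun X => (X.card : ℝ) < μ ∧ ((NN G X B1).card : ℝ) ≤ τ * X.card
      with hP
    have hne : ((B 0).powerset.filter P).Nonempty := by
      refine ⟨∅, ?_⟩
      simp only [Finset.mem_filter, Finset.empty_mem_powerset, true_and, hP]
      simp [NN, hμ]
    obtain ⟨Bad, hBad, hmax⟩ := Finset.exists_max_image _ Finset.card hne
    rw [Finset.mem_filter, Finset.mem_powerset] at hBad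
    obtain ⟨hBadB, hBadc, hBadN⟩ := hBad
    refine ⟨Bad, hBadB, hBadc, ?_⟩
    intro X hX hXne
    have hXpos : (0:ℝ) < X.card := by exact_mod_cast hXne.card_pos
    have hdisj : ∀ D ⊆ B 0, Disjoint D B1 := by
      intro D hD
      exact Finset.disjoint_of_subset_left hD
        (Finset.disjoint_of_subset_right Finset.sdiff_subset (hB 0 (by omega)))
    have hXB : X ⊆ B 0 := hX.trans Finset.sdiff_subset
    have hN : min μ (τ * X.card) ≤ (NN G X B1).card := by
      by_cases hXμ : μ ≤ X.card
      · have := cover' hG (hdisj X hXB) hXμ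
        refine (min_le_left _ _).trans ?_
        linarith
      · push Not at hXμ
        refine (min_le_right _ _).trans ?_
        by_contra hlt
        push Not at hlt
        have hdis : Disjoint Bad X := by
          rw [Finset.disjoint_left]; intro a h1 h2
          exact (Finset.mem_sdiff.1 (hX h2)).2 h1
        have hun : ((Bad ∪ X).card : ℝ) = Bad.card + X.card := by
          exact_mod_cast Finset.card_union_of_disjoint hdis
        have hNN : ((NN G (Bad ∪ X) B1).card : ℝ) ≤ τ * (Bad ∪ X).card := by
          have h1 : NN G (Bad ∪ X) B1 ⊆ NN G Bad B1 ∪ NN G X B1 := by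
            intro c hc
            rw [mem_NN] at hc
            obtain ⟨h, z, hz, ha⟩ := hc
            rw [Finset.mem_union, mem_NN, mem_NN]
            rcases Finset.mem_union.1 hz with hz | hz
            · exact Or.inl ⟨h, z, hz, ha⟩
            · exact Or.inr ⟨h, z, hz, ha⟩
          have h2 : ((NN G (Bad ∪ X) B1).card : ℝ) ≤ (NN G Bad B1).card + (NN G X B1).card := by
            exact_mod_cast (Finset.card_le_card h1).trans (Finset.card_union_le _ _)
          rw [hun]; linarith
        by_cases hc : ((Bad ∪ X).card : ℝ) < μ
        · have hmem : Bad ∪ X ∈ (B 0).powerset.filter P := by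
            rw [Finset.mem_filter, Finset.mem_powerset]
            exact ⟨Finset.union_subset hBadB hXB, hc, hNN⟩
          have h3 : ((Bad ∪ X).card : ℝ) ≤ Bad.card := by exact_mod_cast hmax _ hmem
          linarith
        · push Not at hc
          have h3 := cover' hG (hdisj _ (Finset.union_subset hBadB hXB)) hc
          have h4 : τ * ((Bad ∪ X).card : ℝ) < τ * (2 * μ) := by
            apply mul_lt_mul_of_pos_left _ (by linarith); linarith
          linarith
    have hYpos : (0:ℝ) < (NN G X B1).card :=
      lt_of_lt_of_le (lt_min hμ (by positivity)) hN
    obtain ⟨Xs, h0, h1, h2, h3⟩ := hgrow (NN G X B1) (NN_subset _ _ _)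
      (Finset.card_pos.1 (by exact_mod_cast hYpos))
    refine ⟨fun i => if i = 0 then X else Xs (i-1), by simp, ?_, ?_, ?_⟩
    · intro i hi
      rcases Nat.eq_zero_or_pos i with rfl | hi0
      · simpa using hXB
      · have := h1 (i-1) (by omega)
        have e : i - 1 + 1 = i := by omega
        simp only [e] at this
        simpa [hi0.ne'] using this
    · intro i hi v hv
      simp at hv
      rcases Nat.eq_zero_or_pos i with rfl | hi0
      · rw [h0, mem_NN] at hv
        simpa using hv.2
      · have e : i = i - 1 + 1 := by omega
        have := h2 (i-1) (by omega) v (by rw [← e]; exact hv)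
        simpa [hi0.ne'] using this
    · simp only [Nat.add_eq_zero_iff, one_ne_zero, and_false, if_false, Nat.add_sub_cancel]
      refine le_trans ?_ h3
      refine le_min (min_le_left _ _) ?_
      have hτk : 1 ≤ τ ^ k := one_le_pow₀ hτ
      rcases min_cases μ (τ * (X.card : ℝ)) with ⟨h, _⟩ | ⟨h, _⟩
      · rw [h] at hN
        refine (min_le_left _ _).trans ?_
        nlinarith
      · rw [h] at hN
        refine (min_le_right _ _).trans ?_
        rw [pow_succ, mul_assoc]
        gcongr

def IndPath (G : SimpleGraph α) (q : α → ℕ) (h : ℕ) (p : ℕ → α) : Prop :=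
  (∀ i ≤ h, ∀ j ≤ h, q (p i) = q (p j) → i = j) ∧ (∀ i < h, G.Adj (p i) (p (i+1))) ∧
    (∀ i j, i + 1 < j → j ≤ h → ¬ G.Adj (p i) (p j))

lemma shortest (G : SimpleGraph α) (q : α → ℕ) (l : ℕ) : ∀ (v : ℕ → α),
    (∀ i < l, G.Adj (v i) (v (i+1))) → (∀ i ≤ l, ∀ j ≤ l, q (v i) = q (v j) → i = j) →
    ∃ h ≤ l, ∃ p : ℕ → α, IndPath G q h p ∧ p 0 = v 0 ∧ p h = v l ∧
      ∀ t, 0 < t → t < h → ∃ s, 0 < s ∧ s < l ∧ p t = v s := by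
  induction l using Nat.strong_induction_on with
  | _ l ih =>
  intro v hadj hinj
  by_cases hch : ∃ i j, i + 1 < j ∧ j ≤ l ∧ G.Adj (v i) (v j)
  · obtain ⟨i, j, hij, hj, ha⟩ := hch
    set l' := l - (j - i - 1) with hl'
    set v' : ℕ → α := fun t => if t ≤ i then v t else v (t + (j - i - 1)) with hv'
    obtain ⟨h, hh, p, hp, hp0, hph, hpi⟩ := ih l' (by omega) v' (by
      intro t ht
      simp only [hv']
      by_cases h1 : t + 1 ≤ i
      · rw [if_pos (by omega), if_pos h1]; exact hadj t (by omega)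
      · by_cases h2 : t ≤ i
        · rw [if_pos h2, if_neg h1]
          have e1 : t = i := by omega
          have e2 : t + 1 + (j - i - 1) = j := by omega
          rw [e2, e1]; exact ha
        · rw [if_neg h2, if_neg h1]
          have e2 : t + 1 + (j - i - 1) = t + (j - i - 1) + 1 := by omega
          rw [e2]; exact hadj _ (by omega)) (by
      intro a ha' b hb' hq
      simp only [hv'] at hq
      split_ifs at hq with h1 h2 h2
      · exact hinj a (by omega) b (by omega) hq
      · have := hinj _ (by omega) _ (by omega) hq; omega
      · have := hinj _ (by omega) _ (by omega) hq; omega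
      · have := hinj _ (by omega) _ (by omega) hq; omega)
    refine ⟨h, by omega, p, hp, ?_, ?_, ?_⟩
    · rw [hp0]; simp [hv']
    · rw [hph]
      simp only [hv']
      rw [if_neg (by omega)]
      congr 1; omega
    · intro t h1 h2
      obtain ⟨s, hs0, hs1, hs2⟩ := hpi t h1 h2
      rw [hs2]
      simp only [hv']
      split_ifs with h3
      · exact ⟨s, hs0, by omega, rfl⟩
      · exact ⟨_, by omega, by omega, rfl⟩
  · push Not at hch
    exact ⟨l, le_rfl, v, ⟨hinj, hadj, fun i j h1 h2 => hch i j h1 h2⟩, rfl, rfl,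
      fun t h1 h2 => ⟨t, h1, h2, rfl⟩⟩
end PPAux

namespace PPAux
open Classical

structure BL {α : Type*} (G : SimpleGraph α) (q : α → ℕ) (J : Finset ℕ) (C : ℕ → Finset α) (w : α)
    (hM hL : ℕ) (UM UL : ℕ → Set α) : Prop where
  pM : ∀ j ∈ J, ∀ c ∈ C j, ∃ p, IndPath G q hM p ∧ p 0 = c ∧ p hM = w ∧
    ∀ t, 0 < t → t < hM → p t ∈ UM j
  pL : ∀ j ∈ J, ∀ c ∈ C j, ∃ p, IndPath G q hL p ∧ p 0 = c ∧ p hL = w ∧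
    ∀ t, 0 < t → t < hL → p t ∈ UL j
  mc : ∀ a ∈ J, ∀ b ∈ J, a ≠ b → ∀ x ∈ UM a, ∀ c ∈ C b, ¬ G.Adj x c
  lc : ∀ a ∈ J, ∀ b ∈ J, a ≠ b → ∀ x ∈ UL a, ∀ c ∈ C b, ¬ G.Adj x c
  ml : ∀ a ∈ J, ∀ b ∈ J, a ≠ b → ∀ x ∈ UM a, ∀ y ∈ UL b, ¬ G.Adj x y ∧ q x ≠ q y
  wc : ∀ b ∈ J, ∀ c ∈ C b, ¬ G.Adj w c
  mq : ∀ a ∈ J, ∀ x ∈ UM a, q x ∉ J ∧ q x ≠ q w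
  lq : ∀ a ∈ J, ∀ x ∈ UL a, q x ∉ J ∧ q x ≠ q w
  wq : q w ∉ J

lemma BL.mono {α : Type*} {G : SimpleGraph α} {q : α → ℕ} {J : Finset ℕ} {C : ℕ → Finset α} {w : α}
    {hM hL : ℕ} {UM UL : ℕ → Set α} (h : BL G q J C w hM hL UM UL) {J' : Finset ℕ} (hJ : J' ⊆ J)
    {C' : ℕ → Finset α} (hC : ∀ j ∈ J', C' j ⊆ C j) : BL G q J' C' w hM hL UM UL where
  pM := fun j hj c hc => h.pM j (hJ hj) c (hC j hj hc)
  pL := fun j hj c hc => h.pL j (hJ hj) c (hC j hj hc)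
  mc := fun a ha b hb hab x hx c hc => h.mc a (hJ ha) b (hJ hb) hab x hx c (hC b hb hc)
  lc := fun a ha b hb hab x hx c hc => h.lc a (hJ ha) b (hJ hb) hab x hx c (hC b hb hc)
  ml := fun a ha b hb hab => h.ml a (hJ ha) b (hJ hb) hab
  wc := fun b hb c hc => h.wc b (hJ hb) c (hC b hb hc)
  mq := fun a ha x hx => ⟨fun hh => (h.mq a (hJ ha) x hx).1 (hJ hh), (h.mq a (hJ ha) x hx).2⟩
  lq := fun a ha x hx => ⟨fun hh => (h.lq a (hJ ha) x hx).1 (hJ hh), (h.lq a (hJ ha) x hx).2⟩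
  wq := fun hh => h.wq (hJ hh)

lemma link_shrink {α : Type*} {G : SimpleGraph α} {J J' : Finset ℕ} {C C' : ℕ → Finset α}
    {l l' ρ : ℝ}
    (h : Link G J C l) (hJ : J' ⊆ J) (hC : ∀ j ∈ J', C' j ⊆ C j)
    (hl : 0 ≤ l) (hρ : ∀ j ∈ J', ((C j).card : ℝ) ≤ ρ * (C' j).card) (hl' : l * ρ ≤ l') :
    Link G J' C' l' := by
  intro i hi j hj hij v hv
  calc dg G v (C' j) ≤ dg G v (C j) := dg_mono _ _ (hC j hj)
    _ ≤ l * (C j).card := h i (hJ hi) j (hJ hj) hij v (hC i hi hv)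
    _ ≤ l * (ρ * (C' j).card) := by gcongr; exact hρ j hj
    _ = (l * ρ) * (C' j).card := by ring
    _ ≤ _ := by gcongr

lemma link_mono {α : Type*} {G : SimpleGraph α} {J J' : Finset ℕ} {C : ℕ → Finset α} {l : ℝ}
    (h : Link G J C l) (hJ : J' ⊆ J) : Link G J' C l :=
  fun i hi j hj => h i (hJ hi) j (hJ hj)

lemma disj_of_col {α : Type*} {q : α → ℕ} {J : Finset ℕ} {C : ℕ → Finset α}
    (hq : ∀ j ∈ J, ∀ v ∈ C j, q v = j) {i j : ℕ} (hi : i ∈ J) (hj : j ∈ J) (hij : i ≠ j) :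
    Disjoint (C i) (C j) := by
  rw [Finset.disjoint_left]
  intro v h1 h2
  exact hij ((hq i hi v h1).symm.trans (hq j hj v h2))

lemma chainStep (T r : ℕ) (hr : 1 ≤ r) (lo : ℝ) (hlo : 0 < lo) :
    ∃ qn : ℕ, ∃ li : ℝ, 0 < li ∧ ∃ Q0 : ℝ, 1 < Q0 ∧ ∀ {α : Type} (G : SimpleGraph α) (q : α → ℕ)
      (J : Finset ℕ) (C : ℕ → Finset α) (Q μ : ℝ) (w : α) (hM hL : ℕ) (UM UL : ℕ → Set α), Q0 ≤ Q →
      (∀ D : Finset α, (D.card : ℝ) ≤ Q ^ T) → Coh G μ → 0 < μ →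
      qn ≤ J.card → (∀ j ∈ J, ∀ v ∈ C j, q v = j) → Link G J C li →
      (∀ j ∈ J, 2 * μ ≤ (C j).card) → BL G q J C w hM hL UM UL →
      ∃ J' ⊆ J, J'.card = r ∧ ∃ C' : ℕ → Finset α, Link G J' C' lo ∧
        (∀ j ∈ J', C' j ⊆ C j ∧ ((C j).card : ℝ) ≤ Q ^ 4 * (C' j).card) ∧
        ∃ UM UL, BL G q J' C' w hM (hL + 1) UM UL := by
  obtain ⟨qn, li, hli, Q0, hQ0, hop⟩ := opP2 T r hr lo hlo
  refine ⟨qn + 1, li / 2, by positivity, max Q0 2, lt_max_of_lt_left hQ0, ?_⟩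
  intro α G q J C Q μ w hM hL UM UL hQ hn hG hμ hJ hq hLk hsz hBL
  have hQ2 : 2 ≤ Q := (le_max_right _ _).trans hQ
  have hQ0' : Q0 ≤ Q := (le_max_left _ _).trans hQ
  obtain ⟨E, hE⟩ : J.Nonempty := Finset.card_pos.1 (by omega)
  set J1 := J.erase E with hJ1
  have hJ1J : J1 ⊆ J := Finset.erase_subset _ _
  have hJ1c : qn ≤ J1.card := by rw [hJ1, Finset.card_erase_of_mem hE]; omega
  have hJ1E : ∀ j ∈ J1, j ≠ E := fun j hj => Finset.ne_of_mem_erase hj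
  set C1 : ℕ → Finset α := fun j => NN G (C E) (C j) with hC1
  have hC1C : ∀ j, C1 j ⊆ C j := fun j => NN_subset _ _ _
  have hhalf : ∀ j ∈ J1, ((C j).card : ℝ) ≤ 2 * (C1 j).card := by
    intro j hj
    have := cover' hG (disj_of_col hq hE (hJ1J hj) (hJ1E j hj).symm)
      (by linarith [hsz E hE])
    have h2 := hsz j (hJ1J hj)
    simp only [hC1]; linarith
  have hlinkE : ∀ j ∈ J1, ∀ d ∈ C E, dg G d (C1 j) ≤ li * (C1 j).card := by
    intro j hj d hd
    calc dg G d (C1 j) ≤ dg G d (C j) := dg_mono _ _ (hC1C j)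
      _ ≤ li / 2 * (C j).card := hLk E hE j (hJ1J hj) (hJ1E j hj).symm d hd
      _ ≤ li / 2 * (2 * (C1 j).card) := by gcongr; exact hhalf j hj
      _ = _ := by ring
  have hcov : ∀ j ∈ J1, ∀ c ∈ C1 j, ∃ d ∈ C E, G.Adj d c := fun j _ c hc => (mem_NN.1 hc).2
  obtain ⟨J', hJ', hJ'c, C', Z1, Z2, hLk', hprop⟩ := hop G (C E) (C E) J1 C1 Q hQ0' (hn _) (hn _)
    hJ1c (link_shrink hLk hJ1J (fun j _ => hC1C j) (by positivity) hhalf (by linarith)) hlinkE hlinkE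
    (by
      intro j hj
      have h1 := hhalf j hj
      have h2 := hsz j (hJ1J hj)
      have : (0:ℝ) < (C1 j).card := by linarith
      exact Finset.card_pos.1 (by exact_mod_cast this)) hcov hcov
  have hJ'J : J' ⊆ J := hJ'.trans hJ1J
  have hC'C : ∀ j ∈ J', C' j ⊆ C j := fun j hj => ((hprop j hj).1).trans (hC1C j)
  have hmono := hBL.mono hJ'J hC'C
  refine ⟨J', hJ'J, hJ'c, C', hLk', fun j hj => ⟨hC'C j hj, ?_⟩, UM,
    fun j => (Z1 j : Set α) ∪ UL E, ?_⟩
  · have h1 := hhalf j (hJ' hj)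
    have h2 := (hprop j hj).2.1
    calc ((C j).card : ℝ) ≤ 2 * (Q ^ 3 * (C' j).card) := by linarith
      _ ≤ Q * (Q ^ 3 * (C' j).card) := by gcongr
      _ = _ := by ring
  · have hZE : ∀ j ∈ J', ∀ z ∈ Z1 j, z ∈ C E := fun j hj z hz => (hprop j hj).2.2.1 hz
    have hJ'E : ∀ j ∈ J', j ≠ E := fun j hj => hJ1E j (hJ' hj)
    have hEJ' : E ∉ J' := fun h => hJ'E E h rfl
    refine ⟨hmono.pM, ?_, hmono.mc, ?_, ?_, hmono.wc, hmono.mq, ?_, hmono.wq⟩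
    · intro j hj c hc
      obtain ⟨z, hz, hzc⟩ := (hprop j hj).2.2.2.2.1 c hc
      obtain ⟨p, hp, hp0, hpl, hpi⟩ := hBL.pL E hE z (hZE j hj z hz)
      have hcj : q c = j := hq j (hJ'J hj) c (hC'C j hj hc)
      have hcC := hC'C j hj hc
      -- every vertex of the old path after the start has colour different from j and
      -- is nonadjacent to c
      have hpt : ∀ t, 0 < t → t ≤ hL → q (p t) ≠ j ∧ ¬ G.Adj (p t) c := by
        intro t h1 h2
        rcases h2.lt_or_eq with h2 | h2
        · have := hpi t h1 h2
          refine ⟨fun h => (hBL.lq E hE _ this).1 (h ▸ hJ'J hj), ?_⟩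
          exact hBL.lc E hE j (hJ'J hj) (hJ'E j hj).symm _ this c hcC
        · rw [h2, hpl]
          exact ⟨fun h => hBL.wq (h ▸ hJ'J hj), hBL.wc j (hJ'J hj) c hcC⟩
      have hpt0 : ∀ t, t ≤ hL → q (p t) ≠ j := by
        intro t h1
        rcases Nat.eq_zero_or_pos t with rfl | h0
        · rw [hp0, hq E hE z (hZE j hj z hz)]; exact (hJ'E j hj).symm
        · exact (hpt t h0 h1).1
      refine ⟨fun t => if t = 0 then c else p (t - 1), ⟨?_, ?_, ?_⟩, by simp, by simp [hpl], ?_⟩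
      · intro a ha b hb hab
        rcases Nat.eq_zero_or_pos a with rfl | ha0 <;> rcases Nat.eq_zero_or_pos b with rfl | hb0
        · rfl
        · simp only [if_true, hb0.ne', if_false, hcj] at hab
          exact absurd hab.symm (hpt0 _ (by omega))
        · simp only [if_true, ha0.ne', if_false, hcj] at hab
          exact absurd hab (hpt0 _ (by omega))
        · simp only [hb0.ne', ha0.ne', if_false] at hab
          have := hp.1 _ (by omega) _ (by omega) hab
          omega
      · intro i hi
        rcases Nat.eq_zero_or_pos i with rfl | hi0
        · simp [hp0, hzc.symm]
        · have := hp.2.1 (i-1) (by omega)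
          have e : i - 1 + 1 = i := by omega
          rw [e] at this
          simpa [hi0.ne'] using this
      · intro a b hab hb
        have hb0 : b ≠ 0 := by omega
        rcases Nat.eq_zero_or_pos a with rfl | ha0
        · simp only [if_true, hb0, if_false]
          exact fun h => (hpt (b-1) (by omega) (by omega)).2 h.symm
        · simp only [ha0.ne', hb0, if_false]
          exact hp.2.2 _ _ (by omega) (by omega)
      · intro t h1 h2
        simp only [h1.ne', if_false]
        rcases Nat.eq_zero_or_pos (t-1) with h0 | h0
        · rw [h0, hp0]; exact Or.inl hz
        · exact Or.inr (hpi _ h0 (by omega))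
    · intro a ha b hb hab x hx c hc
      rcases hx with hx | hx
      · exact ((hprop b hb).2.2.2.2.2.2 a ha hab).1 x hx c hc
      · exact hBL.lc E hE b (hJ'J hb) (hJ'E b hb).symm x hx c (hC'C b hb hc)
    · intro a ha b hb hab x hx y hy
      rcases hy with hy | hy
      · have hyE := hZE b hb y hy
        refine ⟨hBL.mc a (hJ'J ha) E hE (hJ'E a ha) x hx y hyE, ?_⟩
        rw [hq E hE y hyE]
        exact fun h => (hBL.mq a (hJ'J ha) x hx).1 (h ▸ hE)
      · exact hBL.ml a (hJ'J ha) E hE (hJ'E a ha) x hx y hy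
    · intro a ha x hx
      rcases hx with hx | hx
      · rw [hq E hE x (hZE a ha x hx)]
        exact ⟨hEJ', fun h => hBL.wq (h ▸ hE)⟩
      · exact ⟨fun h => (hBL.lq E hE x hx).1 (hJ'J h), (hBL.lq E hE x hx).2⟩

lemma chainIter (T e : ℕ) : ∀ (r : ℕ) (_ : 1 ≤ r) (lo : ℝ) (_ : 0 < lo),
    ∃ qn : ℕ, ∃ li : ℝ, 0 < li ∧ ∃ Q0 : ℝ, 1 < Q0 ∧ ∀ {α : Type} (G : SimpleGraph α) (q : α → ℕ)
      (J : Finset ℕ) (C : ℕ → Finset α) (Q μ : ℝ) (w : α) (hM hL : ℕ) (UM UL : ℕ → Set α), Q0 ≤ Q →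
      (∀ D : Finset α, (D.card : ℝ) ≤ Q ^ T) → Coh G μ → 0 < μ →
      qn ≤ J.card → (∀ j ∈ J, ∀ v ∈ C j, q v = j) → Link G J C li →
      (∀ j ∈ J, 2 * μ * Q ^ (4 * e) ≤ (C j).card) → BL G q J C w hM hL UM UL →
      ∃ J' ⊆ J, J'.card = r ∧ ∃ C' : ℕ → Finset α, Link G J' C' lo ∧
        (∀ j ∈ J', C' j ⊆ C j ∧ ((C j).card : ℝ) ≤ Q ^ (4 * e) * (C' j).card) ∧
        ∃ UM UL, BL G q J' C' w hM (hL + e) UM UL := by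
  induction e with
  | zero =>
    intro r hr lo hlo
    refine ⟨r, lo, hlo, 2, by norm_num, ?_⟩
    intro α G q J C Q μ w hM hL UM UL hQ hn hG hμ hJ hq hLk hsz hBL
    obtain ⟨J', hJ', hc⟩ := Finset.exists_subset_card_eq hJ
    exact ⟨J', hJ', hc, C, link_mono hLk hJ', fun j _ => ⟨subset_rfl, by simp⟩, UM, UL,
      hBL.mono hJ' (fun _ _ => subset_rfl)⟩
  | succ e ih =>
    intro r hr lo hlo
    obtain ⟨qn1, li1, hli1, Q1, hQ1, h1⟩ := ih r hr lo hlo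
    obtain ⟨qn2, li2, hli2, Q2, hQ2, h2⟩ := chainStep T (max qn1 1) (le_max_right _ _) li1 hli1
    refine ⟨qn2, li2, hli2, max Q1 Q2, lt_max_of_lt_left hQ1, ?_⟩
    intro α G q J C Q μ w hM hL UM UL hQ hn hG hμ hJ hq hLk hsz hBL
    have hQ1' : Q1 ≤ Q := (le_max_left _ _).trans hQ
    have hQ2' : Q2 ≤ Q := (le_max_right _ _).trans hQ
    have hQ : 1 ≤ Q := by linarith
    obtain ⟨J', hJ', hJ'c, C', hLk', hC', UM', UL', hBL'⟩ := h2 G q J C Q μ w hM hL UM UL hQ2' hn hG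
      hμ hJ hq hLk (fun j hj => le_trans (by
        have : 1 ≤ Q ^ (4 * (e+1)) := one_le_pow₀ hQ
        nlinarith) (hsz j hj)) hBL
    obtain ⟨J'', hJ'', hJ''c, C'', hLk'', hC'', UM'', UL'', hBL''⟩ := h1 G q J' C' Q μ w hM (hL+1)
      UM' UL' hQ1' hn hG hμ (by rw [hJ'c]; exact le_max_left _ _)
      (fun j hj v hv => hq j (hJ' hj) v ((hC' j hj).1 hv)) hLk' (by
        intro j hj
        have h3 := (hsz j (hJ' hj)).trans (hC' j hj).2
        have e1 : 2 * μ * Q ^ (4 * (e + 1)) = Q ^ 4 * (2 * μ * Q ^ (4 * e)) := by ring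
        rw [e1] at h3
        exact le_of_mul_le_mul_left h3 (by positivity)) hBL'
    refine ⟨J'', hJ''.trans hJ', hJ''c, C'', hLk'', ?_, UM'', UL'', ?_⟩
    · intro j hj
      refine ⟨(hC'' j hj).1.trans (hC' j (hJ'' hj)).1, ?_⟩
      calc ((C j).card : ℝ) ≤ Q ^ 4 * (C' j).card := (hC' j (hJ'' hj)).2
        _ ≤ Q ^ 4 * (Q ^ (4 * e) * (C'' j).card) := by gcongr; exact (hC'' j hj).2
        _ = _ := by ring
    · have e1 : hL + (e + 1) = hL + 1 + e := by omega
      rw [e1]; exact hBL''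
end PPAux

namespace PPAux
open Classical

lemma descend {α : Type*} (G : SimpleGraph α) (X : ℕ → Finset α) (m : ℕ) :
    (∀ i < m, ∀ v ∈ X (i+1), ∃ u ∈ X i, G.Adj u v) → ∀ z ∈ X m, ∃ x : ℕ → α, x m = z ∧
      (∀ i ≤ m, x i ∈ X i) ∧ ∀ i < m, G.Adj (x i) (x (i+1)) := by
  induction m with
  | zero =>
    intro _ z hz
    exact ⟨fun _ => z, rfl, fun i hi => by
      have : i = 0 := by omega
      subst this; exact hz, fun i hi => by omega⟩
  | succ m ih =>
    intro h z hz
    obtain ⟨u, hu, huz⟩ := h m (by omega) z hz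
    obtain ⟨x, hx, hxX, hxa⟩ := ih (fun i hi => h i (by omega)) u hu
    refine ⟨fun i => if i ≤ m then x i else z, by simp, ?_, ?_⟩
    · intro i hi
      by_cases h1 : i ≤ m
      · simpa [h1] using hxX i h1
      · have : i = m + 1 := by omega
        subst this; simpa using hz
    · intro i hi
      by_cases h1 : i + 1 ≤ m
      · have h2 : i ≤ m := by omega
        simpa [h1, h2] using hxa i (by omega)
      · have : i = m := by omega
        subst this; simpa [hx] using huz

lemma enum (J : Finset ℕ) : ∃ e : ℕ → ℕ, (∀ i < J.card, e i ∈ J) ∧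
    ∀ i < J.card, ∀ j < J.card, e i = e j → i = j := by
  refine ⟨fun i => if h : i < J.card then J.orderEmbOfFin rfl ⟨i, h⟩ else 0, ?_, ?_⟩
  · intro i hi; simp [hi]
  · intro i hi j hj h
    simp only [hi, hj, dite_true] at h
    have := (J.orderEmbOfFin rfl).injective h
    simpa using this

lemma reach {α : Type*} {G : SimpleGraph α} {μ : ℝ} (hG : Coh G μ) (hμ : 0 < μ) (k r : ℕ)
    (hk : 1 ≤ k) (X : ℕ → Finset α) (y : α) (hX0 : X 0 = {y}) (hXk : μ ≤ (X k).card)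
    (J : Finset ℕ) (C : ℕ → Finset α) (hd : ∀ j ∈ J, Disjoint (X k) (C j))
    (hsz : ∀ j ∈ J, 4 * μ ≤ (C j).card) (hy : ∀ j ∈ J, dg G y (C j) ≤ 1/4 * (C j).card)
    (hJ : k * r ≤ J.card) :
    ∃ m, 1 ≤ m ∧ m ≤ k ∧ ∃ J' ⊆ J, J'.card = r ∧ ∃ C' : ℕ → Finset α, ∀ j ∈ J', C' j ⊆ C j ∧
      ((C j).card : ℝ) ≤ 2 * k * (C' j).card ∧ (∀ c ∈ C' j, ∃ x ∈ X m, G.Adj x c) ∧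
      ∀ c ∈ C' j, ∀ i < m, ∀ x ∈ X i, ¬ G.Adj x c := by
  set C1 : ℕ → Finset α := fun j => (NN G (X k) (C j)) \ ((C j).filter (fun c => G.Adj y c)) with hC1
  have hC1h : ∀ j ∈ J, ((C j).card : ℝ) ≤ 2 * (C1 j).card := by
    intro j hj
    have h1 := cover' hG (hd j hj) hXk
    have h2 := hy j hj
    unfold dg at h2
    have h3 : ((NN G (X k) (C j)).card : ℝ) ≤
        (C1 j).card + ((C j).filter (fun c => G.Adj y c)).card := by
      have := Finset.le_card_sdiff ((C j).filter (fun c => G.Adj y c)) (NN G (X k) (C j))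
      have h4 : (NN G (X k) (C j)).card ≤ (C1 j).card + ((C j).filter (fun c => G.Adj y c)).card := by
        simp only [hC1]; omega
      exact_mod_cast h4
    have h5 := hsz j hj
    linarith
  have hex : ∀ c : α, ∃ m, (∃ x ∈ X k, G.Adj x c) → (∃ x ∈ X m, G.Adj x c) ∧ m ≤ k ∧
      ∀ i < m, ∀ x ∈ X i, ¬ G.Adj x c := by
    intro c
    by_cases h : ∃ x ∈ X k, G.Adj x c
    · have hh : ∃ m, ∃ x ∈ X m, G.Adj x c := ⟨k, h⟩
      refine ⟨Nat.find hh, fun _ => ⟨Nat.find_spec hh, Nat.find_min' hh h, ?_⟩⟩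
      intro i hi x hx ha
      exact Nat.find_min hh hi ⟨x, hx, ha⟩
    · exact ⟨0, fun h' => absurd h' h⟩
  choose ty hty using hex
  have hC1m : ∀ j, ∀ c ∈ C1 j, c ∈ C j ∧ (∃ x ∈ X k, G.Adj x c) ∧ ¬ G.Adj y c := by
    intro j c hc
    simp only [hC1, Finset.mem_sdiff, mem_NN, Finset.mem_filter, not_and] at hc
    exact ⟨hc.1.1, hc.1.2, hc.2 hc.1.1⟩
  obtain ⟨m, hm, J', hJ', hJ'c, hbig⟩ := typeLemma J C1 ty (Finset.Icc 1 k)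
    ⟨1, by simp [hk]⟩ (by
      intro j hj c hc
      obtain ⟨h1, h2, h3⟩ := hC1m j c hc
      obtain ⟨⟨x, hx, hxa⟩, h5, h6⟩ := hty c h2
      rw [Finset.mem_Icc]
      refine ⟨?_, h5⟩
      by_contra h0
      have : ty c = 0 := by omega
      rw [this, hX0, Finset.mem_singleton] at hx
      subst hx; exact h3 hxa) r (by simpa using hJ)
  rw [Finset.mem_Icc] at hm
  refine ⟨m, hm.1, hm.2, J', hJ', hJ'c, fun j => (C1 j).filter (fun c => ty c = m), ?_⟩
  intro j hj
  refine ⟨fun c hc => (hC1m j c (Finset.mem_filter.1 hc).1).1, ?_, ?_, ?_⟩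
  · have h1 := hbig j hj
    have h2 := hC1h j (hJ' hj)
    have h3 : ((C1 j).card : ℝ) ≤ k * ((C1 j).filter (fun c => ty c = m)).card := by
      have h4 : (C1 j).card ≤ k * ((C1 j).filter (fun c => ty c = m)).card := by
        simp only [Nat.card_Icc, Nat.add_sub_cancel] at h1; convert h1
      exact_mod_cast h4
    linarith
  · intro c hc
    obtain ⟨h1, h2⟩ := Finset.mem_filter.1 hc
    have := (hty c (hC1m j c h1).2.1).1
    rwa [h2] at this
  · intro c hc
    obtain ⟨h1, h2⟩ := Finset.mem_filter.1 hc
    have := (hty c (hC1m j c h1).2.1).2.2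
    rwa [h2] at this
end PPAux

namespace PPAux
open Classical

lemma walkJoin {α : Type*} (G : SimpleGraph α) (q : α → ℕ) (e : ℕ → ℕ) (k m n : ℕ) (a b : ℕ → α)
    (c w : α) (hm : m ≤ k) (hn : n ≤ k)
    (he : ∀ i < 2*k+1, ∀ j < 2*k+1, e i = e j → i = j)
    (ha : ∀ i ≤ m, q (a i) = e i) (hb0 : b 0 = a 0) (hb : ∀ i, 1 ≤ i → i ≤ n → q (b i) = e (k+i))
    (haa : ∀ i < m, G.Adj (a i) (a (i+1))) (hba : ∀ i < n, G.Adj (b i) (b (i+1)))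
    (hc : G.Adj (a m) c) (hw : G.Adj (b n) w) (hqc : ∀ s < 2*k+1, q c ≠ e s)
    (hqw : ∀ s < 2*k+1, q w ≠ e s) (hcw : q c ≠ q w) :
    ∃ v : ℕ → α, v 0 = c ∧ v (m+n+2) = w ∧ (∀ i < m+n+2, G.Adj (v i) (v (i+1))) ∧
      (∀ i ≤ m+n+2, ∀ j ≤ m+n+2, q (v i) = q (v j) → i = j) ∧
      ∀ t, 0 < t → t < m+n+2 → (∃ s ≤ m, v t = a s) ∨ (∃ s ≤ n, v t = b s) := by
  set v : ℕ → α := fun t => if t = 0 then c else if t ≤ m+1 then a (m+1-t) else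
    if t ≤ m+1+n then b (t-m-1) else w with hv
  have v0 : v 0 = c := by simp [hv]
  have vl : v (m+n+2) = w := by
    simp only [hv]
    rw [if_neg (by omega), if_neg (by omega), if_neg (by omega)]
  have va : ∀ s ≤ m, v (m+1-s) = a s := by
    intro s hs
    simp only [hv]
    rw [if_neg (by omega), if_pos (by omega)]
    congr 1; omega
  have vb : ∀ s ≤ n, v (m+1+s) = b s := by
    intro s hs
    by_cases h0 : s = 0
    · subst h0; rw [hb0]; exact va 0 (by omega)
    · simp only [hv]
      rw [if_neg (by omega), if_neg (by omega), if_pos (by omega)]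
      congr 1; omega
  have vq : ∀ t, 0 < t → t < m+n+2 → q (v t) = e (if t ≤ m+1 then m+1-t else k + (t-m-1)) := by
    intro t h0 h1
    by_cases h : t ≤ m+1
    · have := va (m+1-t) (by omega)
      rw [show m+1-(m+1-t) = t by omega] at this
      rw [this, if_pos h]; exact ha _ (by omega)
    · have := vb (t-m-1) (by omega)
      rw [show m+1+(t-m-1) = t by omega] at this
      rw [this, if_neg h]; exact hb _ (by omega) (by omega)
  have vi : ∀ t, 0 < t → t < m+n+2 → (if t ≤ m+1 then m+1-t else k + (t-m-1)) < 2*k+1 := by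
    intro t h0 h1; split_ifs <;> omega
  refine ⟨v, v0, vl, ?_, ?_, ?_⟩
  · intro i hi
    by_cases h0 : i = 0
    · subst h0; rw [v0]
      have := va m le_rfl
      rw [show m+1-m = 0+1 by omega] at this
      rw [this]; exact hc.symm
    by_cases h1 : i ≤ m
    · have h2 := va (m+1-i) (by omega)
      have h3 := va (m-i) (by omega)
      rw [show m+1-(m+1-i) = i by omega] at h2
      rw [show m+1-(m-i) = i+1 by omega] at h3
      rw [h2, h3]
      have := haa (m-i) (by omega)
      rw [show m-i+1 = m+1-i by omega] at this
      exact this.symm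
    by_cases h2 : i < m+1+n
    · have h3 := vb (i-(m+1)) (by omega)
      have h4 := vb (i-(m+1)+1) (by omega)
      rw [show m+1+(i-(m+1)) = i by omega] at h3
      rw [show m+1+(i-(m+1)+1) = i+1 by omega] at h4
      rw [h3, h4]; exact hba _ (by omega)
    · have h3 := vb n le_rfl
      rw [show m+1+n = i by omega] at h3
      rw [h3, show i+1 = m+n+2 by omega, vl]; exact hw
  · intro i hi j hj hij
    have key : ∀ i, (i = 0 ∨ i = m+n+2 ∨ (0 < i ∧ i < m+n+2)) ∨ m+n+2 < i := by intro i; omega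
    rcases (key i).resolve_right (by omega) with h | h | h <;>
    rcases (key j).resolve_right (by omega) with h' | h' | h'
    · omega
    · rw [h, h', v0, vl] at hij; exact absurd hij hcw
    · rw [h, v0, vq j h'.1 h'.2] at hij; exact absurd hij (hqc _ (vi j h'.1 h'.2))
    · rw [h, h', v0, vl] at hij; exact absurd hij.symm hcw
    · omega
    · rw [h, vl, vq j h'.1 h'.2] at hij; exact absurd hij (hqw _ (vi j h'.1 h'.2))
    · rw [h', v0, vq i h.1 h.2] at hij; exact absurd hij.symm (hqc _ (vi i h.1 h.2))
    · rw [h', vl, vq i h.1 h.2] at hij; exact absurd hij.symm (hqw _ (vi i h.1 h.2))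
    · rw [vq i h.1 h.2, vq j h'.1 h'.2] at hij
      have := he _ (vi i h.1 h.2) _ (vi j h'.1 h'.2) hij
      split_ifs at this <;> omega
  · intro t h0 h1
    by_cases h : t ≤ m+1
    · left; refine ⟨m+1-t, by omega, ?_⟩
      have := va (m+1-t) (by omega)
      rw [show m+1-(m+1-t) = t by omega] at this
      exact this
    · right; refine ⟨t-m-1, by omega, ?_⟩
      have := vb (t-m-1) (by omega)
      rw [show m+1+(t-m-1) = t by omega] at this
      exact this

set_option maxHeartbeats 2000000 in
lemma half1 (T k r : ℕ) (hk : 1 ≤ k) (hr : 1 ≤ r) (lo : ℝ) (hlo : 0 < lo) :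
    ∃ qn : ℕ, ∃ li : ℝ, 0 < li ∧ ∃ Q0 : ℝ, 1 < Q0 ∧ ∀ {α : Type} (G : SimpleGraph α) (q : α → ℕ)
      (J : Finset ℕ) (C : ℕ → Finset α) (Q μ τ : ℝ), Q0 ≤ Q →
      (∀ D : Finset α, (D.card : ℝ) ≤ Q ^ T) → Coh G μ → 0 < μ → 1 ≤ τ → μ ≤ τ ^ k →
      qn ≤ J.card → (∀ j ∈ J, ∀ v ∈ C j, q v = j) → Link G J C li →
      (∀ j ∈ J, (4 * μ + 4 * τ * μ) * Q ^ 4 ≤ (C j).card) →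
      ∃ J' ⊆ J, J'.card = r ∧ ∃ C' : ℕ → Finset α, Link G J' C' lo ∧
        (∀ j ∈ J', C' j ⊆ C j ∧ ((C j).card : ℝ) ≤ Q ^ 4 * (C' j).card) ∧
        ∃ M N : ℕ → Set α, (∀ j ∈ J', ∀ x ∈ M j ∪ N j, q x ∉ J') ∧
          (∀ i ∈ J', ∀ j ∈ J', i ≠ j → ∀ x ∈ M i ∪ N i, ∀ c ∈ C' j, ¬ G.Adj x c) ∧
          ∀ i ∈ J', ∀ j ∈ J', i ≠ j → ∀ c ∈ C' i, ∀ w ∈ C' j, ∃ l ≤ 2*k+2, ∃ v : ℕ → α,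
            v 0 = c ∧ v l = w ∧ (∀ i < l, G.Adj (v i) (v (i+1))) ∧
            (∀ i ≤ l, ∀ j ≤ l, q (v i) = q (v j) → i = j) ∧
            ∀ t, 0 < t → t < l → v t ∈ M i ∪ N j := by
  obtain ⟨qn3, li3, hli3, Q3, hQ3, H3⟩ := opP2 T r hr lo hlo
  have hk' : (1:ℝ) ≤ k := by exact_mod_cast hk
  refine ⟨1 + 2*k + k*(k*qn3), min (li3/(4*k^2)) (1/(8*k)), by positivity, max Q3 (4*k^2),
    lt_max_of_lt_left hQ3, ?_⟩
  intro α G q J C Q μ τ hQ hT hG hμ hτ hτk hJ hq hL hsz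
  set li := min (li3/(4*k^2)) (1/(8*(k:ℝ))) with hli
  have li0 : 0 < li := by positivity
  have liA : li * (2*k*(2*k)) ≤ li3 := by
    have : li ≤ li3/(4*k^2) := min_le_left _ _
    rw [le_div_iff₀ (by positivity)] at this
    nlinarith
  have liB : li * (2*k) ≤ 1/4 := by
    have : li ≤ 1/(8*k) := min_le_right _ _
    rw [le_div_iff₀ (by positivity)] at this
    linarith
  have liC : li ≤ 1/4 := by nlinarith
  have hQ3' : Q3 ≤ Q := (le_max_left _ _).trans hQ
  have hQk : 4*(k:ℝ)^2 ≤ Q := (le_max_right _ _).trans hQ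
  have hQ1 : 1 < Q := lt_of_lt_of_le hQ3 hQ3'
  have hQ4 : Q ≤ Q^4 := le_self_pow₀ hQ1.le (by norm_num)
  have hτμ : 0 ≤ τ * μ := by positivity
  have hszB : ∀ j ∈ J, (4*μ+4*τ*μ) * (4*k^2) ≤ (C j).card := by
    intro j hj
    exact le_trans (mul_le_mul_of_nonneg_left (hQk.trans hQ4) (by nlinarith)) (hsz j hj)
  have hszA : ∀ j ∈ J, 4*μ+4*τ*μ ≤ (C j).card := by
    intro j hj
    refine le_trans ?_ (hszB j hj)
    have : (1:ℝ) ≤ 4*k^2 := by nlinarith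
    nlinarith
  obtain ⟨e, heJ, hei⟩ := enum J
  have hcard : 2*k+1 ≤ J.card := by omega
  set e2 : ℕ → ℕ := fun i => if i = 0 then e 0 else e (k+i) with he2
  have he2J : ∀ i ≤ k, e2 i ∈ J := by
    intro i hi; simp only [he2]; split_ifs <;> exact heJ _ (by omega)
  have he2i : ∀ i < k, e2 i ≠ e2 (i+1) := by
    intro i hi h
    simp only [he2] at h
    rw [if_neg (Nat.succ_ne_zero i)] at h
    split_ifs at h
    · have := hei _ (by omega) _ (by omega) h; omega
    · have := hei _ (by omega) _ (by omega) h; omega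
  obtain ⟨Bad1, hB1, hB1c, HB1⟩ := growth hG hμ hτ k (fun i => C (e i))
    (fun i hi => disj_of_col hq (heJ i (by omega)) (heJ (i+1) (by omega)) (fun h => by
      have := hei _ (by omega) _ (by omega) h; omega))
    (fun i hi => by have := hszA _ (heJ i (by omega)); linarith)
  obtain ⟨Bad2, hB2, hB2c, HB2⟩ := growth hG hμ hτ k (fun i => C (e2 i))
    (fun i hi => disj_of_col hq (he2J i (by omega)) (he2J (i+1) (by omega)) (he2i i hi))
    (fun i hi => by have := hszA _ (he2J i hi); linarith)
  obtain ⟨y, hy, hyB⟩ : ∃ y ∈ C (e 0), y ∉ Bad1 ∪ Bad2 := by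
    by_contra hcon
    push Not at hcon
    have h1 : (C (e 0)).card ≤ (Bad1 ∪ Bad2).card := Finset.card_le_card hcon
    have h2 := Finset.card_union_le Bad1 Bad2
    have h3 : ((C (e 0)).card : ℝ) ≤ Bad1.card + Bad2.card := by exact_mod_cast h1.trans h2
    have h4 := hszA _ (heJ 0 (by omega))
    linarith
  rw [Finset.mem_union, not_or] at hyB
  have e20 : e2 0 = e 0 := by simp [he2]
  obtain ⟨X1, X10, X1s, X1a, X1c⟩ := HB1 {y} (by simp [hy, hyB.1]) (by simp)
  obtain ⟨X2, X20, X2s, X2a, X2c⟩ := HB2 {y} (by simp [e20, hy, hyB.2]) (by simp)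
  simp only [Finset.card_singleton, Nat.cast_one, mul_one, min_eq_left hτk] at X1c X2c
  have q1 : ∀ i ≤ k, ∀ x ∈ X1 i, q x = e i := fun i hi x hx => hq _ (heJ i (by omega)) _ (X1s i hi hx)
  have q2 : ∀ i ≤ k, ∀ x ∈ X2 i, q x = e2 i := fun i hi x hx => hq _ (he2J i hi) _ (X2s i hi hx)
  have q2' : ∀ i ≤ k, ∃ s < 2*k+1, e2 i = e s := by
    intro i hi; by_cases h : i = 0
    · exact ⟨0, by omega, by simp [he2, h]⟩
    · exact ⟨k+i, by omega, by simp [he2, h]⟩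
  obtain ⟨R, hR⟩ : ∃ R, R = J \ (Finset.range (2*k+1)).image e := ⟨_, rfl⟩
  have hRJ : R ⊆ J := hR ▸ Finset.sdiff_subset
  have hRe : ∀ j ∈ R, ∀ s < 2*k+1, j ≠ e s := by
    intro j hj s hs h
    rw [hR] at hj
    exact (Finset.mem_sdiff.1 hj).2 (Finset.mem_image.2 ⟨s, Finset.mem_range.2 hs, h.symm⟩)
  have hRe2 : ∀ j ∈ R, ∀ i ≤ k, j ≠ e2 i := by
    intro j hj i hi
    obtain ⟨s, hs, h⟩ := q2' i hi
    rw [h]; exact hRe j hj s hs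
  have hRc : k*(k*qn3) ≤ R.card := by
    have h1 := Finset.le_card_sdiff ((Finset.range (2*k+1)).image e) J
    have h2 : ((Finset.range (2*k+1)).image e).card ≤ 2*k+1 := by
      simpa using Finset.card_image_le (s := Finset.range (2*k+1)) (f := e)
    rw [← hR] at h1; omega
  have hyL : ∀ j ∈ R, dg G y (C j) ≤ li * (C j).card := fun j hj =>
    hL _ (heJ 0 (by omega)) _ (hRJ hj) (hRe j hj 0 (by omega)).symm y hy
  obtain ⟨m1, hm1, hm1k, R1, hR1, hR1c, C1, HC1⟩ := reach hG hμ k (k*qn3) hk X1 y X10 X1c R C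
    (fun j hj => Finset.disjoint_of_subset_left (X1s k le_rfl)
      (disj_of_col hq (heJ k (by omega)) (hRJ hj) (hRe j hj k (by omega)).symm))
    (fun j hj => by have := hszA j (hRJ hj); linarith)
    (fun j hj => (hyL j hj).trans (mul_le_mul_of_nonneg_right liC (Nat.cast_nonneg _))) hRc
  obtain ⟨m2, hm2, hm2k, R2, hR2, hR2c, C2, HC2⟩ := reach hG hμ k qn3 hk X2 y X20 X2c R1 C1
    (fun j hj => Finset.disjoint_of_subset_left (X2s k le_rfl)
      (Finset.disjoint_of_subset_right (HC1 j hj).1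
      (disj_of_col hq (he2J k le_rfl) (hRJ (hR1 hj)) (hRe2 j (hR1 hj) k le_rfl).symm)))
    (fun j hj => by
      have h1 := hszB j (hRJ (hR1 hj))
      have h2 := (HC1 j hj).2.1
      have h3 : 4*μ*(2*k) ≤ (C1 j).card * (2*k) := by nlinarith
      exact le_of_mul_le_mul_right h3 (by positivity))
    (fun j hj => by
      have h1 := (hyL j (hR1 hj))
      have h2 := (HC1 j hj).2.1
      have h3 := dg_mono G y (HC1 j hj).1
      have h4 : (0:ℝ) ≤ (C1 j).card := by positivity
      calc dg G y (C1 j) ≤ li * (2*k*(C1 j).card) := by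
            exact h3.trans (h1.trans (mul_le_mul_of_nonneg_left h2 li0.le))
        _ = (li*(2*k)) * (C1 j).card := by ring
        _ ≤ _ := mul_le_mul_of_nonneg_right liB (Nat.cast_nonneg _)) hR1c.ge
  have hR2R : R2 ⊆ R := hR2.trans hR1
  have hR2J : R2 ⊆ J := hR2R.trans hRJ
  have hC2C : ∀ j ∈ R2, C2 j ⊆ C j := fun j hj => (HC2 j hj).1.trans (HC1 j (hR2 hj)).1
  have hC2c : ∀ j ∈ R2, ((C j).card : ℝ) ≤ (2*k*(2*k)) * (C2 j).card := by
    intro j hj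
    have h1 := (HC1 j (hR2 hj)).2.1
    have h2 := (HC2 j hj).2.1
    calc ((C j).card:ℝ) ≤ 2*k*(C1 j).card := h1
      _ ≤ 2*k*(2*k*(C2 j).card) := mul_le_mul_of_nonneg_left h2 (by positivity)
      _ = _ := by ring
  have hdgen : ∀ j ∈ R2, ∀ i ∈ J, i ≠ j → ∀ d ∈ C i, dg G d (C2 j) ≤ li3 * (C2 j).card := by
    intro j hj i hi hij d hd
    calc dg G d (C2 j) ≤ dg G d (C j) := dg_mono _ _ (hC2C j hj)
      _ ≤ li * (C j).card := hL i hi j (hR2J hj) hij d hd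
      _ ≤ li * ((2*k*(2*k)) * (C2 j).card) := mul_le_mul_of_nonneg_left (hC2c j hj) li0.le
      _ = (li * (2*k*(2*k))) * (C2 j).card := by ring
      _ ≤ _ := mul_le_mul_of_nonneg_right liA (Nat.cast_nonneg _)
  obtain ⟨J3, hJ3, hJ3c, C3, Z1, Z2, hL3, H⟩ := H3 G (X1 m1) (X2 m2) R2 C2 Q hQ3' (hT _) (hT _)
    hR2c.ge (link_shrink hL hR2J hC2C li0.le hC2c liA)
    (fun j hj d hd => hdgen j hj (e m1) (heJ _ (by omega)) (hRe j (hR2R hj) m1 (by omega)).symm d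
      (X1s m1 hm1k hd))
    (fun j hj d hd => hdgen j hj (e2 m2) (he2J _ (by omega)) (hRe2 j (hR2R hj) m2 (by omega)).symm d
      (X2s m2 hm2k hd))
    (fun j hj => by
      by_contra hne
      rw [Finset.not_nonempty_iff_eq_empty] at hne
      have h1 := hC2c j hj
      have h2 := hszA j (hR2J hj)
      rw [hne] at h1; simp at h1
      rw [h1] at h2; simp at h2
      nlinarith)
    (fun j hj c hc => (HC1 j (hR2 hj)).2.2.1 c ((HC2 j hj).1 hc))
    (fun j hj c hc => (HC2 j hj).2.2.1 c hc)
  refine ⟨J3, hJ3.trans hR2J, hJ3c, C3, hL3, ?_, fun j => {x | x ∈ Z1 j ∨ ∃ s < m1, x ∈ X1 s},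
    fun j => {x | x ∈ Z2 j ∨ ∃ s < m2, x ∈ X2 s}, ?_, ?_, ?_⟩
  · intro j hj
    refine ⟨(H j hj).1.trans (hC2C j (hJ3 hj)), ?_⟩
    calc ((C j).card:ℝ) ≤ (2*k*(2*k)) * (C2 j).card := hC2c j (hJ3 hj)
      _ ≤ (2*k*(2*k)) * (Q^3 * (C3 j).card) := mul_le_mul_of_nonneg_left (H j hj).2.1 (by positivity)
      _ = (4*k^2) * (Q^3 * (C3 j).card) := by ring
      _ ≤ Q * (Q^3 * (C3 j).card) := mul_le_mul_of_nonneg_right hQk (by positivity)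
      _ = _ := by ring
  · have key : ∀ j ∈ J3, ∀ x, (x ∈ Z1 j ∨ ∃ s < m1, x ∈ X1 s) ∨ (x ∈ Z2 j ∨ ∃ s < m2, x ∈ X2 s) →
        ∃ s < 2*k+1, q x = e s := by
      intro j hj x hx
      rcases hx with (h | ⟨s, hs, h⟩) | (h | ⟨s, hs, h⟩)
      · exact ⟨m1, by omega, q1 m1 hm1k x ((H j hj).2.2.1 h)⟩
      · exact ⟨s, by omega, q1 s (by omega) x h⟩
      · rw [q2 m2 hm2k x ((H j hj).2.2.2.1 h)]; exact q2' _ hm2k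
      · rw [q2 s (by omega) x h]; exact q2' _ (by omega)
    intro j hj x hx hxJ
    obtain ⟨s, hs, h⟩ := key j hj x hx
    exact hRe _ (hR2R (hJ3 hxJ)) s hs h
  · intro i hi j hj hij x hx c hc
    have hc2 := (H j hj).1 hc
    rcases hx with (h | ⟨s, hs, h⟩) | (h | ⟨s, hs, h⟩)
    · exact ((H j hj).2.2.2.2.2.2 i hi hij).1 x h c hc
    · exact (HC1 j (hR2 (hJ3 hj))).2.2.2 c ((HC2 j (hJ3 hj)).1 hc2) s hs x h
    · exact ((H j hj).2.2.2.2.2.2 i hi hij).2 x h c hc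
    · exact (HC2 j (hJ3 hj)).2.2.2 c hc2 s hs x h
  · intro i hi j hj hij c hc w hw
    obtain ⟨x1, hx1, hx1a⟩ := (H i hi).2.2.2.2.1 c hc
    obtain ⟨x2, hx2, hx2a⟩ := (H j hj).2.2.2.2.2.1 w hw
    obtain ⟨a, am, aX, aa⟩ := descend G X1 m1 (fun s hs => X1a s (by omega)) x1 ((H i hi).2.2.1 hx1)
    obtain ⟨b, bm, bX, ba⟩ := descend G X2 m2 (fun s hs => X2a s (by omega)) x2 ((H j hj).2.2.2.1 hx2)
    have a0 : a 0 = y := by have := aX 0 (by omega); rw [X10] at this; simpa using this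
    have b0 : b 0 = y := by have := bX 0 (by omega); rw [X20] at this; simpa using this
    have qc : q c = i := hq i (hR2J (hJ3 hi)) c (hC2C i (hJ3 hi) ((H i hi).1 hc))
    have qw : q w = j := hq j (hR2J (hJ3 hj)) w (hC2C j (hJ3 hj) ((H j hj).1 hw))
    obtain ⟨v, v0, vl, va, vi, vt⟩ := walkJoin G q e k m1 m2 a b c w hm1k hm2k
      (fun s hs t ht => hei s (by omega) t (by omega))
      (fun s hs => q1 s (by omega) _ (aX s hs)) (b0.trans a0.symm)
      (fun s hs hs' => by
        rw [q2 s (by omega) _ (bX s hs')]; simp only [he2]; rw [if_neg (by omega)])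
      aa ba (am ▸ hx1a) (bm ▸ hx2a)
      (by rw [qc]; exact hRe i (hR2R (hJ3 hi))) (by rw [qw]; exact hRe j (hR2R (hJ3 hj)))
      (by rw [qc, qw]; exact hij)
    refine ⟨m1+m2+2, by omega, v, v0, vl, va, vi, ?_⟩
    intro t h0 h1
    rcases vt t h0 h1 with ⟨s, hs, h⟩ | ⟨s, hs, h⟩
    · left
      by_cases hsm : s = m1
      · left; rw [h, hsm, am]; exact hx1
      · right; exact ⟨s, by omega, h ▸ aX s hs⟩
    · right
      by_cases hsm : s = m2
      · left; rw [h, hsm, bm]; exact hx2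
      · right; exact ⟨s, by omega, h ▸ bX s hs⟩
end PPAux

namespace PPAux
open Classical

/-- a walk reversed with a new first vertex -/
lemma walkUp {α : Type*} (G : SimpleGraph α) (q : α → ℕ) (e : ℕ → ℕ) (m : ℕ) (a : ℕ → α)
    (c : α) (he : ∀ i ≤ m, ∀ j ≤ m, e i = e j → i = j)
    (ha : ∀ i ≤ m, q (a i) = e i) (haa : ∀ i < m, G.Adj (a i) (a (i+1)))
    (hc : G.Adj (a m) c) (hqc : ∀ s ≤ m, q c ≠ e s) :
    ∃ v : ℕ → α, v 0 = c ∧ v (m+1) = a 0 ∧ (∀ i < m+1, G.Adj (v i) (v (i+1))) ∧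
      (∀ i ≤ m+1, ∀ j ≤ m+1, q (v i) = q (v j) → i = j) ∧
      ∀ t, 0 < t → t < m+1 → ∃ s, 1 ≤ s ∧ s ≤ m ∧ v t = a s := by
  set v : ℕ → α := fun t => if t = 0 then c else a (m+1-t) with hv
  have v0 : v 0 = c := by simp [hv]
  have va : ∀ t, 0 < t → v t = a (m+1-t) := by
    intro t ht; simp only [hv]; rw [if_neg (by omega)]
  refine ⟨v, v0, ?_, ?_, ?_, ?_⟩
  · rw [va _ (by omega)]; congr 1; omega
  · intro i hi
    by_cases h0 : i = 0
    · subst h0; rw [v0, va _ (by omega)]; exact hc.symm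
    · rw [va i (by omega), va (i+1) (by omega)]
      have := haa (m+1-(i+1)) (by omega)
      rw [show m+1-(i+1)+1 = m+1-i by omega] at this
      exact this.symm
  · intro i hi j hj hij
    by_cases h0 : i = 0 <;> by_cases h1 : j = 0
    · omega
    · rw [h0, v0, va j (by omega), ha _ (by omega)] at hij
      exact absurd hij (hqc _ (by omega))
    · rw [h1, v0, va i (by omega), ha _ (by omega)] at hij
      exact absurd hij.symm (hqc _ (by omega))
    · rw [va i (by omega), va j (by omega), ha _ (by omega), ha _ (by omega)] at hij
      have := he _ (by omega) _ (by omega) hij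
      omega
  · intro t h0 h1
    exact ⟨m+1-t, by omega, by omega, va t h0⟩

lemma chain4 {a b c d e Q k N : ℝ} (hQ : 0 ≤ Q) (hk : 0 ≤ k) (hN : 0 ≤ N) (he : 0 ≤ e)
    (h1 : a ≤ Q^4 * b) (h2 : b ≤ 2*k*c) (h3 : c ≤ Q^3*d) (h4 : d ≤ N*e) (h5 : 2*k*N ≤ Q) :
    a ≤ Q^8 * e := by
  calc a ≤ Q^4 * b := h1
      _ ≤ Q^4 * (2*k*c) := by gcongr
      _ ≤ Q^4 * (2*k*(Q^3*d)) := by gcongr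
      _ ≤ Q^4 * (2*k*(Q^3*(N*e))) := by gcongr
      _ = (2*k*N) * (Q^7 * e) := by ring
      _ ≤ Q * (Q^7 * e) := by gcongr
      _ = _ := by ring

set_option maxHeartbeats 1000000 in
lemma core (T k r : ℕ) (hk : 1 ≤ k) (hr : 1 ≤ r) (lo : ℝ) (hlo : 0 < lo) :
    ∃ qn : ℕ, ∃ li : ℝ, 0 < li ∧ ∃ Q0 : ℝ, 1 < Q0 ∧ ∀ {α : Type} (G : SimpleGraph α) (q : α → ℕ)
      (J : Finset ℕ) (C : ℕ → Finset α) (Q μ τ : ℝ), Q0 ≤ Q →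
      (∀ D : Finset α, (D.card : ℝ) ≤ Q ^ T) → Coh G μ → 0 < μ → 1 ≤ τ → μ ≤ τ ^ k →
      qn ≤ J.card → (∀ j ∈ J, ∀ v ∈ C j, q v = j) → Link G J C li →
      (∀ j ∈ J, (4 * μ + 4 * τ * μ) * Q ^ 4 ≤ (C j).card) →
      ∃ J' ⊆ J, J'.card = r ∧ ∃ C' : ℕ → Finset α, Link G J' C' lo ∧
        (∀ j ∈ J', C' j ⊆ C j ∧ ((C j).card : ℝ) ≤ Q ^ 8 * (C' j).card) ∧
        ∃ w : α, ∃ hM ≤ 2*k+2, ∃ hL ≤ k+1, ∃ UM UL : ℕ → Set α, BL G q J' C' w hM hL UM UL := by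
  set N7 := (2*k+3)*(k+2) with hN7
  have hN7' : 1 ≤ N7 := Nat.one_le_iff_ne_zero.2 (by positivity)
  have hN7r : (1:ℝ) ≤ N7 := by exact_mod_cast hN7'
  have hk' : (1:ℝ) ≤ k := by exact_mod_cast hk
  obtain ⟨qn6, li6, hli6, Q6, hQ6, H6⟩ := opP2 T (N7*r) (Nat.mul_pos hN7' hr) (lo/N7) (by positivity)
  set lo3 := min (li6/(2*k)) (1/4:ℝ) with hlo3
  have lo30 : 0 < lo3 := by positivity
  have loA : lo3 * (2*k) ≤ li6 := by
    have : lo3 ≤ li6/(2*k) := min_le_left _ _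
    rwa [le_div_iff₀ (by positivity)] at this
  have loB : lo3 ≤ 1/4 := min_le_right _ _
  obtain ⟨qn3, li3, hli3, Q3, hQ3, H3⟩ := half1 T k (1+k+k*qn6) hk (by omega) lo3 lo30
  refine ⟨qn3, li3, hli3, max (max Q3 Q6) (2*k*N7), lt_max_of_lt_left (lt_max_of_lt_left hQ3), ?_⟩
  intro α G q J C Q μ τ hQ hT hG hμ hτ hτk hJ hq hL hsz
  have hQ3' : Q3 ≤ Q := (le_max_left _ _).trans ((le_max_left _ _).trans hQ)
  have hQ6' : Q6 ≤ Q := (le_max_right _ _).trans ((le_max_left _ _).trans hQ)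
  have hQk : 2*(k:ℝ)*N7 ≤ Q := (le_max_right _ _).trans hQ
  have hQ0 : 0 ≤ Q := zero_le_one.trans (hQ3.le.trans hQ3')
  have hQ1 : 1 < Q := lt_of_lt_of_le hQ3 hQ3'
  have hτμ : 0 ≤ τ * μ := by positivity
  obtain ⟨J3, hJ3, hJ3c, C3, hL3, HC3, M, N, HMNq, HMNa, HMNp⟩ :=
    H3 G q J C Q μ τ hQ3' hT hG hμ hτ hτk hJ hq hL hsz
  have hq3 : ∀ j ∈ J3, ∀ v ∈ C3 j, q v = j := fun j hj v hv => hq j (hJ3 hj) v ((HC3 j hj).1 hv)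
  have hsz3 : ∀ j ∈ J3, 4*μ+4*τ*μ ≤ (C3 j).card := by
    intro j hj
    have h1 := (hsz j (hJ3 hj)).trans (HC3 j hj).2
    rw [mul_comm] at h1
    exact le_of_mul_le_mul_left h1 (by positivity)
  obtain ⟨g, hgJ, hgi⟩ := enum J3
  have hgi' : ∀ i ≤ k, ∀ j ≤ k, g i = g j → i = j := fun i hi j hj =>
    hgi i (by omega) j (by omega)
  have hgJ' : ∀ i ≤ k, g i ∈ J3 := fun i hi => hgJ i (by omega)
  obtain ⟨Bad, hB, hBc, HB⟩ := growth hG hμ hτ k (fun i => C3 (g i))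
    (fun i hi => disj_of_col hq3 (hgJ' i (by omega)) (hgJ' (i+1) (by omega)) (fun h => by
      have := hgi' _ (by omega) _ (by omega) h; omega))
    (fun i hi => by have := hsz3 _ (hgJ' i hi); linarith)
  obtain ⟨w, hw, hwB⟩ : ∃ w ∈ C3 (g 0), w ∉ Bad := by
    by_contra hcon
    push Not at hcon
    have h1 : (C3 (g 0)).card ≤ Bad.card := Finset.card_le_card hcon
    have h3 : ((C3 (g 0)).card : ℝ) ≤ Bad.card := by exact_mod_cast h1
    have h4 := hsz3 _ (hgJ' 0 (by omega))
    linarith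
  obtain ⟨X, X0, Xs, Xa, Xc⟩ := HB {w} (by simp [hw, hwB]) (by simp)
  simp only [Finset.card_singleton, Nat.cast_one, mul_one, min_eq_left hτk] at Xc
  have qX : ∀ i ≤ k, ∀ x ∈ X i, q x = g i := fun i hi x hx => hq3 _ (hgJ' i hi) _ (Xs i hi hx)
  obtain ⟨R, hR⟩ : ∃ R, R = J3 \ (Finset.range (k+1)).image g := ⟨_, rfl⟩
  have hRJ : R ⊆ J3 := hR ▸ Finset.sdiff_subset
  have hRe : ∀ j ∈ R, ∀ s ≤ k, j ≠ g s := by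
    intro j hj s hs h
    rw [hR] at hj
    exact (Finset.mem_sdiff.1 hj).2 (Finset.mem_image.2
      ⟨s, Finset.mem_range.2 (by omega), h.symm⟩)
  have hRc : k*qn6 ≤ R.card := by
    have h1 := Finset.le_card_sdiff ((Finset.range (k+1)).image g) J3
    have h2 : ((Finset.range (k+1)).image g).card ≤ k+1 := by
      simpa using Finset.card_image_le (s := Finset.range (k+1)) (f := g)
    rw [← hR] at h1; omega
  obtain ⟨m, hm, hmk, J5, hJ5, hJ5c, C5, HC5⟩ := reach hG hμ k qn6 hk X w X0 Xc R C3
    (fun j hj => Finset.disjoint_of_subset_left (Xs k le_rfl)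
      (disj_of_col hq3 (hgJ' k le_rfl) (hRJ hj) (hRe j hj k le_rfl).symm))
    (fun j hj => by have := hsz3 j (hRJ hj); linarith)
    (fun j hj => (hL3 _ (hgJ' 0 (by omega)) _ (hRJ hj) (hRe j hj 0 (by omega)).symm w hw).trans
      (mul_le_mul_of_nonneg_right loB (Nat.cast_nonneg _))) hRc
  have hJ53 : J5 ⊆ J3 := hJ5.trans hRJ
  have hd : ∀ j ∈ J5, ∀ d ∈ X m, dg G d (C5 j) ≤ li6 * (C5 j).card := by
    intro j hj d hd
    calc dg G d (C5 j) ≤ dg G d (C3 j) := dg_mono _ _ (HC5 j hj).1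
      _ ≤ lo3 * (C3 j).card := hL3 (g m) (hgJ' m hmk) j (hJ53 hj) (hRe j (hJ5 hj) m hmk).symm d
        (Xs m hmk hd)
      _ ≤ lo3 * (2*k * (C5 j).card) := mul_le_mul_of_nonneg_left (HC5 j hj).2.1 lo30.le
      _ = (lo3 * (2*k)) * (C5 j).card := by ring
      _ ≤ _ := mul_le_mul_of_nonneg_right loA (Nat.cast_nonneg _)
  obtain ⟨J6, hJ6, hJ6c, C6, Z, Z', hL6, H⟩ := H6 G (X m) (X m) J5 C5 Q hQ6' (hT _) (hT _)
    hJ5c.ge (link_shrink hL3 hJ53 (fun j hj => (HC5 j hj).1) lo30.le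
      (fun j hj => (HC5 j hj).2.1) loA) hd hd
    (fun j hj => by
      by_contra hne
      rw [Finset.not_nonempty_iff_eq_empty] at hne
      have h1 := (HC5 j hj).2.1
      have h2 := hsz3 j (hJ53 hj)
      rw [hne] at h1
      simp only [Finset.card_empty, Nat.cast_zero, mul_zero] at h1
      nlinarith)
    (fun j hj => (HC5 j hj).2.2.1) (fun j hj => (HC5 j hj).2.2.1)
  have hJ6R : J6 ⊆ R := hJ6.trans hJ5
  have hJ63 : J6 ⊆ J3 := hJ6.trans hJ53
  have hC63 : ∀ j ∈ J6, C6 j ⊆ C3 j := fun j hj => (H j hj).1.trans (HC5 j (hJ6 hj)).1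
  have h0R : g 0 ∉ R := fun h => hRe _ h 0 (by omega) rfl
  have qw : q w = g 0 := hq3 _ (hgJ' 0 (by omega)) w hw
  set UM : ℕ → Set α := fun j => M j ∪ N (g 0) with hUM
  set UL : ℕ → Set α := fun j => {x | x ∈ Z j ∨ ∃ s, 1 ≤ s ∧ s < m ∧ x ∈ X s} with hUL
  have hex : ∀ c : α, ∃ b : ℕ × ℕ, ∀ j ∈ J6, c ∈ C6 j →
      b ∈ Finset.range (2*k+3) ×ˢ Finset.range (k+2) ∧
      (∃ p, IndPath G q b.1 p ∧ p 0 = c ∧ p b.1 = w ∧ ∀ t, 0 < t → t < b.1 → p t ∈ UM j) ∧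
      (∃ p, IndPath G q b.2 p ∧ p 0 = c ∧ p b.2 = w ∧ ∀ t, 0 < t → t < b.2 → p t ∈ UL j) := by
    intro c
    by_cases hcc : ∃ j ∈ J6, c ∈ C6 j
    swap
    · exact ⟨(0,0), fun j hj hc => absurd ⟨j, hj, hc⟩ hcc⟩
    obtain ⟨i, hi, hci⟩ := hcc
    have qc : q c = i := hq3 i (hJ63 hi) c (hC63 i hi hci)
    have hi0 : i ≠ g 0 := hRe i (hJ6R hi) 0 (by omega)
    obtain ⟨l, hl, v, v0, vl, va, vi, vt⟩ := HMNp i (hJ63 hi) (g 0) (hgJ' 0 (by omega)) hi0 c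
      (hC63 i hi hci) w hw
    obtain ⟨h1, h1l, p1, hp1, p10, p1h, p1t⟩ := shortest G q l v va vi
    obtain ⟨x, hx, hxa⟩ := (H i hi).2.2.2.2.1 c hci
    obtain ⟨a, am, aX, aa⟩ := descend G X m (fun s hs => Xa s (by omega)) x ((H i hi).2.2.1 hx)
    have a0 : a 0 = w := by have := aX 0 (by omega); rw [X0] at this; simpa using this
    obtain ⟨v', v0', vl', va', vi', vt'⟩ := walkUp G q g m a c
      (fun s hs t ht => hgi' s (by omega) t (by omega))
      (fun s hs => qX s (by omega) _ (aX s hs)) aa (am ▸ hxa)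
      (by rw [qc]; exact fun s hs => hRe i (hJ6R hi) s (by omega))
    obtain ⟨h2, h2l, p2, hp2, p20, p2h, p2t⟩ := shortest G q (m+1) v' va' vi'
    refine ⟨(h1,h2), fun j hj hcj => ?_⟩
    have hji : j = i := (hq3 j (hJ63 hj) c (hC63 j hj hcj)).symm.trans qc
    subst hji
    refine ⟨by simp only [Finset.mem_product, Finset.mem_range]; omega, ⟨p1, hp1, p10.trans v0, p1h.trans vl, ?_⟩,
      ⟨p2, hp2, p20.trans v0', (p2h.trans vl').trans a0, ?_⟩⟩
    · intro t h0 ht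
      obtain ⟨s, hs0, hsl, h⟩ := p1t t h0 ht
      rw [h]; exact vt s hs0 hsl
    · intro t h0 ht
      obtain ⟨s, hs0, hsl, h⟩ := p2t t h0 ht
      obtain ⟨s', hs1, hs2, h'⟩ := vt' s hs0 hsl
      rw [h, h']
      by_cases hsm : s' = m
      · left; rw [hsm, am]; exact hx
      · right; exact ⟨s', hs1, by omega, aX s' hs2⟩
  choose ty hty using hex
  obtain ⟨b, hb, J7, hJ7, hJ7c, H7⟩ := typeLemma J6 C6 ty (Finset.range (2*k+3) ×ˢ Finset.range (k+2))
    ⟨(0,0), by simp⟩ (fun j hj c hc => (hty c j hj hc).1) r (by simp [hJ6c, hN7])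
  set C7 : ℕ → Finset α := fun j => (C6 j).filter (fun c => ty c = b) with hC7
  have hC7c : ∀ j ∈ J7, ((C6 j).card : ℝ) ≤ N7 * (C7 j).card := by
    intro j hj
    have h1 := H7 j hj
    have h4 : (C6 j).card ≤ N7 * (C7 j).card := by
      simp only [Finset.card_product, Finset.card_range, ← hN7] at h1
      convert h1
    exact_mod_cast h4
  have hC76 : ∀ j, C7 j ⊆ C6 j := fun j => Finset.filter_subset _ _
  simp only [Finset.mem_product, Finset.mem_range] at hb
  have hJ73 := hJ7.trans hJ63
  have hULs : ∀ j ∈ J7, ∀ x ∈ UL j, ∃ s, 1 ≤ s ∧ s ≤ k ∧ x ∈ X s := by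
    intro j hj x hx
    rcases hx with h | ⟨s, h1, h2, h3⟩
    · exact ⟨m, hm, hmk, (H j (hJ7 hj)).2.2.1 h⟩
    · exact ⟨s, h1, by omega, h3⟩
  have hUMa : ∀ a ∈ J7, ∀ x ∈ UM a, ∀ j ∈ J3, j ≠ a → j ≠ g 0 → ∀ c ∈ C3 j, ¬ G.Adj x c := by
    intro a ha x hx j hj hja hj0 c hc
    rcases hx with h | h
    · exact HMNa a (hJ73 ha) j hj hja.symm x (Or.inl h) c hc
    · exact HMNa (g 0) (hgJ' 0 (by omega)) j hj hj0.symm x (Or.inr h) c hc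
  have hUMq : ∀ a ∈ J7, ∀ x ∈ UM a, q x ∉ J3 := by
    intro a ha x hx
    rcases hx with h | h
    · exact HMNq a (hJ73 ha) x (Or.inl h)
    · exact HMNq (g 0) (hgJ' 0 (by omega)) x (Or.inr h)
  refine ⟨J7, hJ73.trans hJ3, hJ7c, C7, link_shrink hL6 hJ7 (fun j _ => hC76 j) (by positivity)
    hC7c (by rw [div_mul_cancel₀ _ (by positivity)]), ?_, w, b.1, by omega, b.2, by omega, UM, UL, ?_⟩
  · intro j hj
    have hj6 := hJ7 hj
    refine ⟨(hC76 j).trans ((hC63 j hj6).trans (HC3 j (hJ63 hj6)).1), ?_⟩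
    exact chain4 hQ0 (Nat.cast_nonneg k) (Nat.cast_nonneg N7) (Nat.cast_nonneg _)
      (HC3 j (hJ63 hj6)).2 (HC5 j (hJ6 hj6)).2.1 (H j hj6).2.1 (hC7c j hj) hQk
  · exact
    { pM := fun j hj c hc => by
        have h1 := Finset.mem_filter.1 hc
        have := (hty c j (hJ7 hj) h1.1).2.1
        rw [h1.2] at this; exact this
      pL := fun j hj c hc => by
        have h1 := Finset.mem_filter.1 hc
        have := (hty c j (hJ7 hj) h1.1).2.2
        rw [h1.2] at this; exact this
      mc := fun a ha b hb hab x hx c hc => hUMa a ha x hx b (hJ73 hb) hab.symm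
        (hRe b (hJ6R (hJ7 hb)) 0 (by omega)) c (hC63 b (hJ7 hb) (hC76 b hc))
      lc := fun a ha b hb hab x hx c hc => by
        rcases hx with h | ⟨s, h1, h2, h3⟩
        · exact ((H b (hJ7 hb)).2.2.2.2.2.2 a (hJ7 ha) hab).1 x h c (hC76 b hc)
        · exact (HC5 b (hJ6 (hJ7 hb))).2.2.2 c ((H b (hJ7 hb)).1 (hC76 b hc)) s h2 x h3
      ml := fun a ha b hb hab x hx y hy => by
        obtain ⟨s, h1, h2, h3⟩ := hULs b hb y hy
        refine ⟨hUMa a ha x hx (g s) (hgJ' s h2) (hRe a (hJ6R (hJ7 ha)) s h2).symm (fun h => by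
          have := hgi' _ h2 _ (by omega) h; omega) y (Xs s h2 h3), fun h => ?_⟩
        exact hUMq a ha x hx (by rw [h, qX s h2 y h3]; exact hgJ' s h2)
      wc := fun b hb c hc => (HC5 b (hJ6 (hJ7 hb))).2.2.2 c ((H b (hJ7 hb)).1 (hC76 b hc)) 0
        (by omega) w (by rw [X0]; simp)
      mq := fun a ha x hx => ⟨fun h => hUMq a ha x hx (hJ73 h), fun h => hUMq a ha x hx (by
        rw [h, qw]; exact hgJ' 0 (by omega))⟩
      lq := fun a ha x hx => by
        obtain ⟨s, h1, h2, h3⟩ := hULs a ha x hx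
        rw [qX s h2 x h3, qw]
        exact ⟨fun h => hRe _ (hJ6R (hJ7 h)) s h2 rfl, fun h => by
          have := hgi' _ h2 _ (by omega) h; omega⟩
      wq := by rw [qw]; exact fun h => h0R (hJ6R (hJ7 h)) }
end PPAux

namespace PPAux
open Classical

lemma bilev (T k n r : ℕ) (hk : 1 ≤ k) (hn : 3*k+3 ≤ n) (hr : 1 ≤ r) (lo : ℝ) (hlo : 0 < lo) :
    ∃ qn : ℕ, ∃ li : ℝ, 0 < li ∧ ∃ Q0 : ℝ, 1 < Q0 ∧ ∀ {α : Type} (G : SimpleGraph α) (q : α → ℕ)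
      (J : Finset ℕ) (C : ℕ → Finset α) (Q μ τ : ℝ), Q0 ≤ Q →
      (∀ D : Finset α, (D.card : ℝ) ≤ Q ^ T) → Coh G μ → 0 < μ → 1 ≤ τ → μ ≤ τ ^ k →
      qn ≤ J.card → (∀ j ∈ J, ∀ v ∈ C j, q v = j) → Link G J C li →
      (∀ j ∈ J, (4 * μ + 4 * τ * μ) * Q ^ 4 ≤ (C j).card) →
      (∀ j ∈ J, 2 * μ * Q ^ (4*n+8) ≤ (C j).card) →
      ∃ J' ⊆ J, J'.card = r ∧ ∃ C' : ℕ → Finset α, Link G J' C' lo ∧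
        (∀ j ∈ J', C' j ⊆ C j ∧ ((C j).card : ℝ) ≤ Q ^ (4*n+8) * (C' j).card) ∧
        ∃ w : α, ∃ hM hL : ℕ, hM + hL = n ∧ ∃ UM UL : ℕ → Set α, BL G q J' C' w hM hL UM UL := by
  have hch := fun e => chainIter T e r hr lo hlo
  choose qf lf lf0 Qf Qf1 Hf using hch
  set r0 := 1 + ∑ e ∈ Finset.range (n+1), qf e with hr0
  have hr0' : ∀ e ≤ n, qf e ≤ r0 := by
    intro e he
    have := Finset.single_le_sum (f := qf) (fun i _ => Nat.zero_le _)
      (Finset.mem_range.2 (show e < n+1 by omega))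
    omega
  obtain ⟨e0, -, he0⟩ := Finset.exists_min_image (Finset.range (n+1)) lf
    (Finset.nonempty_range_iff.2 (by omega))
  obtain ⟨l0, hl0⟩ : ∃ l, l = lf e0 := ⟨_, rfl⟩
  have l00 : 0 < l0 := hl0 ▸ lf0 e0
  have l0e : ∀ e ≤ n, l0 ≤ lf e := fun e he =>
    hl0 ▸ he0 e (Finset.mem_range.2 (by omega))
  set Q1 := ∑ e ∈ Finset.range (n+1), Qf e with hQ1
  have hQ1e : ∀ e ≤ n, Qf e ≤ Q1 := fun e he =>
    Finset.single_le_sum (f := Qf) (fun i _ => (zero_le_one.trans (Qf1 i).le))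
      (Finset.mem_range.2 (show e < n+1 by omega))
  obtain ⟨qn, li, hli, Q0, hQ0, HC⟩ := core T k r0 hk (by omega) l0 l00
  refine ⟨qn, li, hli, max Q0 Q1, lt_max_of_lt_left hQ0, ?_⟩
  intro α G q J C Q μ τ hQ hT hG hμ hτ hτk hJ hq hL hsz hsz2
  have hQ0' : Q0 ≤ Q := (le_max_left _ _).trans hQ
  have hQg : 1 ≤ Q := hQ0.le.trans hQ0'
  obtain ⟨J1, hJ1, hJ1c, C1, hL1, HC1, w, hM, hMk, hL', hLk, UM, UL, hBL⟩ :=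
    HC G q J C Q μ τ hQ0' hT hG hμ hτ hτk hJ hq hL hsz
  obtain ⟨e, he⟩ : ∃ e, e = n - (hM + hL') := ⟨_, rfl⟩
  have hen : e ≤ n := by omega
  obtain ⟨J2, hJ2, hJ2c, C2, hL2, HC2, UM', UL', hBL'⟩ := Hf e G q J1 C1 Q μ w hM hL' UM UL
    ((hQ1e e hen).trans ((le_max_right _ _).trans hQ)) hT hG hμ (hJ1c ▸ hr0' e hen)
    (fun j hj v hv => hq j (hJ1 hj) v ((HC1 j hj).1 hv))
    (link_shrink (ρ := 1) hL1 (le_refl _) (fun j _ => le_refl _) l00.le (fun j _ => by rw [one_mul])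
      (by rw [mul_one]; exact l0e e hen))
    (fun j hj => by
      have h1 := (hsz2 j (hJ1 hj)).trans (HC1 j hj).2
      have h2 : Q^(4*e) ≤ Q^(4*n) := pow_le_pow_right₀ hQg (by omega)
      have h3 : Q^8 * (2*μ*Q^(4*n)) ≤ Q^8 * (C1 j).card := by
        refine le_trans (le_of_eq ?_) h1; rw [pow_add]; ring
      have h4 := le_of_mul_le_mul_left h3 (by positivity)
      exact le_trans (mul_le_mul_of_nonneg_left h2 (by positivity)) h4) hBL
  refine ⟨J2, hJ2.trans hJ1, hJ2c, C2, hL2, ?_, w, hM, hL' + e, by omega, UM', UL', hBL'⟩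
  intro j hj
  refine ⟨(HC2 j hj).1.trans (HC1 j (hJ2 hj)).1, ?_⟩
  have h1 := (HC1 j (hJ2 hj)).2
  have h2 := (HC2 j hj).2
  have h3 : Q^(4*e) ≤ Q^(4*n) := pow_le_pow_right₀ hQg (by omega)
  calc ((C j).card:ℝ) ≤ Q^8 * (C1 j).card := h1
    _ ≤ Q^8 * (Q^(4*e) * (C2 j).card) := mul_le_mul_of_nonneg_left h2 (by positivity)
    _ ≤ Q^8 * (Q^(4*n) * (C2 j).card) := mul_le_mul_of_nonneg_left
        (mul_le_mul_of_nonneg_right h3 (Nat.cast_nonneg _)) (by positivity)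
    _ = _ := by rw [pow_add]; ring
end PPAux

namespace PPAux
open Classical

lemma glue {α : Type*} {G : SimpleGraph α} {q : α → ℕ} {J : Finset ℕ} {C : ℕ → Finset α} {w : α}
    {hM hL n : ℕ} {UM UL : ℕ → Set α} (hB : BL G q J C w hM hL UM UL) (hn : hM + hL = n)
    (hq : ∀ j ∈ J, ∀ v ∈ C j, q v = j)
    {a b : ℕ} (ha : a ∈ J) (hb : b ∈ J) (hab : a ≠ b) {x y : α} (hx : x ∈ C a) (hy : y ∈ C b)
    (hxy : ¬ G.Adj x y) :
    ∃ g : ℕ → α, IndPath G q n g ∧ g 0 = x ∧ g n = y ∧ ∀ i, 0 < i → i < n → q (g i) ∉ J ∧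
      ∀ d ∈ J, d ≠ a → d ≠ b → ∀ c ∈ C d, ¬ G.Adj (g i) c := by
  obtain ⟨P, hP, P0, Pw, PU⟩ := hB.pM a ha x hx
  obtain ⟨R, hR, R0, Rw, RU⟩ := hB.pL b hb y hy
  have qx := hq a ha x hx
  have qy := hq b hb y hy
  have hM2 : 2 ≤ hM := by
    by_contra h
    have h' : hM = 0 ∨ hM = 1 := by omega
    rcases h' with h' | h'
    · rw [h'] at Pw
      exact hB.wq (by rw [← Pw, P0, qx]; exact ha)
    · have := hP.2.1 0 (by omega)
      rw [h'] at Pw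
      rw [P0, zero_add, Pw] at this
      exact hB.wc a ha x hx this.symm
  have hL2 : 2 ≤ hL := by
    by_contra h
    have h' : hL = 0 ∨ hL = 1 := by omega
    rcases h' with h' | h'
    · rw [h'] at Rw
      exact hB.wq (by rw [← Rw, R0, qy]; exact hb)
    · have := hR.2.1 0 (by omega)
      rw [h'] at Rw
      rw [R0, zero_add, Rw] at this
      exact hB.wc b hb y hy this.symm
  set g : ℕ → α := fun i => if i ≤ hM then P i else R (n - i) with hg
  have gP : ∀ i ≤ hM, g i = P i := by intro i hi; simp only [hg]; rw [if_pos hi]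
  have gR : ∀ i, hM ≤ i → g i = R (n - i) := by
    intro i hi
    by_cases h : i = hM
    · rw [gP i h.le, h, Pw, show n - hM = hL by omega, Rw]
    · simp only [hg]; rw [if_neg (by omega)]
  have g0 : g 0 = x := by rw [gP 0 (by omega), P0]
  have gn : g n = y := by rw [gR n (by omega), Nat.sub_self, R0]
  have gw : g hM = w := by rw [gP hM le_rfl, Pw]
  have gUM : ∀ i, 0 < i → i < hM → g i ∈ UM a := by
    intro i h0 h1; rw [gP i h1.le]; exact PU i h0 h1
  have gUL : ∀ i, hM < i → i < n → g i ∈ UL b := by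
    intro i h0 h1; rw [gR i h0.le]; exact RU _ (by omega) (by omega)
  -- cross pairs
  have cross : ∀ i j, i < hM → hM < j → j ≤ n → q (g i) ≠ q (g j) ∧ ¬ G.Adj (g i) (g j) := by
    intro i j hi hj hjn
    by_cases h0 : i = 0 <;> by_cases h1 : j = n
    · rw [h0, h1, g0, gn, qx, qy]; exact ⟨hab, hxy⟩
    · have h2 := gUL j hj (by omega)
      rw [h0, g0, qx]
      exact ⟨fun h => (hB.lq b hb _ h2).1 (h ▸ ha),
        fun h => hB.lc b hb a ha hab.symm _ h2 x hx h.symm⟩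
    · have h2 := gUM i (by omega) hi
      rw [h1, gn, qy]
      exact ⟨fun h => (hB.mq a ha _ h2).1 (h ▸ hb), fun h => hB.mc a ha b hb hab _ h2 y hy h⟩
    · have h2 := gUM i (by omega) hi
      have h3 := gUL j hj (by omega)
      have := hB.ml a ha b hb hab _ h2 _ h3
      exact ⟨this.2, this.1⟩
  refine ⟨g, ⟨?_, ?_, ?_⟩, g0, gn, ?_⟩
  · have main : ∀ i j, i ≤ j → j ≤ n → q (g i) = q (g j) → i = j := by
      intro i j hij hj h
      by_cases h1 : j ≤ hM
      · rw [gP i (by omega), gP j h1] at h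
        exact hP.1 i (by omega) j h1 h
      by_cases h2 : hM ≤ i
      · rw [gR i h2, gR j (by omega)] at h
        have := hR.1 _ (by omega) _ (by omega) h
        omega
      · exact absurd h (cross i j (by omega) (by omega) hj).1
    intro i hi j hj h
    rcases le_total i j with hh | hh
    · exact main i j hh hj h
    · exact (main j i hh hi h.symm).symm
  · intro i hi
    by_cases h1 : i + 1 ≤ hM
    · rw [gP i (by omega), gP _ h1]; exact hP.2.1 i (by omega)
    · rw [gR i (by omega), gR _ (by omega)]
      have := hR.2.1 (n - (i+1)) (by omega)
      rw [show n - (i+1) + 1 = n - i by omega] at this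
      exact this.symm
  · intro i j hij hj
    by_cases h1 : j ≤ hM
    · rw [gP i (by omega), gP j h1]; exact hP.2.2 i j hij h1
    by_cases h2 : hM ≤ i
    · rw [gR i h2, gR j (by omega)]
      exact fun h => hR.2.2 (n-j) (n-i) (by omega) (by omega) h.symm
    · exact (cross i j (by omega) (by omega) hj).2
  · intro i h0 h1
    rcases lt_trichotomy i hM with h | h | h
    · have h2 := gUM i h0 h
      exact ⟨(hB.mq a ha _ h2).1, fun d hd hda _ c hc => hB.mc a ha d hd hda.symm _ h2 c hc⟩
    · rw [h, gw]; exact ⟨hB.wq, fun d hd _ _ c hc => hB.wc d hd c hc⟩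
    · have h2 := gUL i h h1
      exact ⟨(hB.lq b hb _ h2).1, fun d hd _ hdb c hc => hB.lc b hb d hd hdb.symm _ h2 c hc⟩

lemma extend {W : Type*} {α : Type*} {H : SimpleGraph W} {G : SimpleGraph α} {q : α → ℕ}
    {J : Finset ℕ} {C : ℕ → Finset α} {w : α}
    {hM hL n : ℕ} {UM UL : ℕ → Set α} (hB : BL G q J C w hM hL UM UL) (hn : hM + hL = n)
    (hq : ∀ j ∈ J, ∀ v ∈ C j, q v = j) {S : Set W} {p : ℕ → W} (hn2 : 2 ≤ n)
    (pinj : ∀ i ≤ n, ∀ j ≤ n, p i = p j → i = j) (p0 : p 0 ∈ S) (pn : p n ∈ S)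
    (pS : ∀ i, 0 < i → i < n → p i ∉ S) (padj : ∀ i < n, H.Adj (p i) (p (i+1)))
    (pnadj : ∀ i j, i + 1 < j → j ≤ n → ¬ H.Adj (p i) (p j))
    (pdeg : ∀ i, 0 < i → i < n → ∀ w, (w ∈ S ∨ ∃ j ≤ n, w = p j) → H.Adj (p i) w →
      w = p (i-1) ∨ w = p (i+1))
    {f : W → α} (hf : ∀ x ∈ S, q (f x) ∈ J ∧ f x ∈ C (q (f x)))
    (finj : ∀ x ∈ S, ∀ y ∈ S, q (f x) = q (f y) → x = y)
    (fadj : ∀ x ∈ S, ∀ y ∈ S, H.Adj x y ↔ G.Adj (f x) (f y)) :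
    ∃ F : W → α, (∀ x ∈ S ∪ {w | ∃ j ≤ n, w = p j}, ∀ y ∈ S ∪ {w | ∃ j ≤ n, w = p j},
      q (F x) = q (F y) → x = y) ∧
      (∀ x ∈ S ∪ {w | ∃ j ≤ n, w = p j}, ∀ y ∈ S ∪ {w | ∃ j ≤ n, w = p j},
        (H.Adj x y ↔ G.Adj (F x) (F y))) := by
  have hab : q (f (p 0)) ≠ q (f (p n)) := fun h => by
    have := pinj 0 (by omega) n le_rfl (finj _ p0 _ pn h); omega
  obtain ⟨g, hg, g0, gn, gi⟩ := glue hB hn hq (hf _ p0).1 (hf _ pn).1 hab (hf _ p0).2 (hf _ pn).2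
    (fun h => pnadj 0 n (by omega) le_rfl ((fadj _ p0 _ pn).2 h))
  set F : W → α := fun x => if x ∈ S then f x else if h : ∃ j ≤ n, x = p j then g h.choose else f x
    with hF
  have FS : ∀ x ∈ S, F x = f x := by intro x hx; simp only [hF]; rw [if_pos hx]
  have Fp : ∀ i ≤ n, F (p i) = g i := by
    intro i hi
    by_cases h0 : i = 0
    · rw [h0, FS _ p0, g0]
    by_cases h1 : i = n
    · rw [h1, FS _ pn, gn]
    have hS := pS i (by omega) (by omega)
    have hex : ∃ j ≤ n, p i = p j := ⟨i, hi, rfl⟩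
    simp only [hF]
    rw [if_neg hS, dif_pos hex]
    congr 1
    exact (pinj _ hi _ hex.choose_spec.1 hex.choose_spec.2).symm
  -- path-path pairs
  have pp : ∀ i ≤ n, ∀ j ≤ n, (H.Adj (p i) (p j) ↔ G.Adj (g i) (g j)) := by
    have main : ∀ i j, i ≤ j → j ≤ n → (H.Adj (p i) (p j) ↔ G.Adj (g i) (g j)) := by
      intro i j hij hj
      rcases Nat.lt_or_ge (i+1) j with h | h
      · exact iff_of_false (pnadj i j h hj) (hg.2.2 i j h hj)
      · have h' : j = i ∨ j = i + 1 := by omega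
        rcases h' with h' | h'
        · rw [h']; exact iff_of_false (H.irrefl) (G.irrefl)
        · rw [h']; exact iff_of_true (padj i (by omega)) (hg.2.1 i (by omega))
    intro i hi j hj
    rcases le_total i j with h | h
    · exact main i j h hj
    · rw [H.adj_comm, G.adj_comm]; exact main j i h hi
  -- mixed pairs
  have mix : ∀ i, 0 < i → i < n → ∀ x ∈ S, x ≠ p 0 → x ≠ p n →
      q (g i) ≠ q (f x) ∧ ¬ H.Adj (p i) x ∧ ¬ G.Adj (g i) (f x) := by
    intro i h0 h1 x hx hx0 hxn
    refine ⟨fun h => (gi i h0 h1).1 (h ▸ (hf x hx).1), fun h => ?_, ?_⟩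
    · rcases pdeg i h0 h1 x (Or.inl hx) h with h2 | h2
      · by_cases h3 : i - 1 = 0
        · rw [h3] at h2; exact hx0 h2
        · exact pS (i-1) (by omega) (by omega) (h2 ▸ hx)
      · by_cases h3 : i + 1 = n
        · rw [h3] at h2; exact hxn h2
        · exact pS (i+1) (by omega) (by omega) (h2 ▸ hx)
    · exact (gi i h0 h1).2 _ (hf x hx).1 (fun h => hx0 (finj _ hx _ p0 h))
        (fun h => hxn (finj _ hx _ pn h)) _ (hf x hx).2
  -- classify
  have cls : ∀ x ∈ S ∪ {w | ∃ j ≤ n, w = p j},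
      (x ∈ S ∧ x ≠ p 0 ∧ x ≠ p n) ∨ ∃ j ≤ n, x = p j := by
    intro x hx
    rcases hx with h | h
    · by_cases h0 : x = p 0
      · exact Or.inr ⟨0, by omega, h0⟩
      by_cases h1 : x = p n
      · exact Or.inr ⟨n, le_rfl, h1⟩
      exact Or.inl ⟨h, h0, h1⟩
    · exact Or.inr h
  have mix2 : ∀ i ≤ n, ∀ x ∈ S, x ≠ p 0 → x ≠ p n →
      (q (g i) ≠ q (f x) ∧ (H.Adj (p i) x ↔ G.Adj (g i) (f x))) := by
    intro i hi x hx hx0 hxn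
    by_cases h0 : i = 0
    · rw [h0, g0]; exact ⟨fun h => hx0 (finj _ p0 _ hx h).symm, fadj _ p0 _ hx⟩
    by_cases h1 : i = n
    · rw [h1, gn]; exact ⟨fun h => hxn (finj _ pn _ hx h).symm, fadj _ pn _ hx⟩
    have := mix i (by omega) (by omega) x hx hx0 hxn
    exact ⟨this.1, iff_of_false this.2.1 this.2.2⟩
  refine ⟨F, ?_, ?_⟩
  · intro x hx y hy h
    rcases cls x hx with ⟨h1, h2, h3⟩ | ⟨i, hi, rfl⟩ <;>
    rcases cls y hy with ⟨h1', h2', h3'⟩ | ⟨j, hj, rfl⟩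
    · rw [FS x h1, FS y h1'] at h; exact finj x h1 y h1' h
    · rw [FS x h1, Fp j hj] at h; exact absurd h.symm (mix2 j hj x h1 h2 h3).1
    · rw [FS y h1', Fp i hi] at h; exact absurd h (mix2 i hi y h1' h2' h3').1
    · rw [Fp i hi, Fp j hj] at h; rw [hg.1 i hi j hj h]
  · intro x hx y hy
    rcases cls x hx with ⟨h1, h2, h3⟩ | ⟨i, hi, rfl⟩ <;>
    rcases cls y hy with ⟨h1', h2', h3'⟩ | ⟨j, hj, rfl⟩
    · rw [FS x h1, FS y h1']; exact fadj x h1 y h1'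
    · rw [FS x h1, Fp j hj, H.adj_comm, G.adj_comm]; exact (mix2 j hj x h1 h2 h3).2
    · rw [FS y h1', Fp i hi]; exact (mix2 i hi y h1' h2' h3').2
    · rw [Fp i hi, Fp j hj]; exact pp i hi j hj
end PPAux

namespace PPAux
open Classical

lemma scaling (c : ℝ) (k : ℕ) (hk : 1 ≤ k) (hc : 1 < c * (k+1)) (hc1 : c < 1) (m : ℕ) (σ : ℝ)
    (hσ : 0 < σ) : ∃ T : ℕ, 1 ≤ T ∧ ∀ Q0 : ℝ, ∃ N : ℝ, 1 ≤ N ∧ ∀ n : ℝ, N ≤ n → ∃ Q τ : ℝ,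
      Q0 ≤ Q ∧ 1 ≤ Q ∧ n ≤ Q^T ∧ 1 ≤ τ ∧ n^(1-c) ≤ τ^k ∧
      (4 * n^(1-c) + 4 * τ * n^(1-c)) * Q^4 ≤ n^(1-1/(T:ℝ)) ∧
      2 * n^(1-c) * Q^(4*m+8) ≤ n^(1-1/(T:ℝ)) ∧
      n^(1-σ) * Q^(4*m+8) ≤ n^(1-1/(T:ℝ)) := by
  have hk' : (1:ℝ) ≤ k := by exact_mod_cast hk
  have hk0 : (0:ℝ) < k := by linarith
  obtain ⟨δ, hδ⟩ : ∃ δ, δ = 1 - (1-c)*(1+1/(k:ℝ)) := ⟨_, rfl⟩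
  have δ0 : 0 < δ := by
    have : (k:ℝ) * δ = c*(k+1) - 1 := by rw [hδ]; field_simp; ring
    by_contra h
    nlinarith
  have δc : 1 - c ≤ 1 - δ := by
    have : 0 ≤ (1-c)*(1/(k:ℝ)) := mul_nonneg (by linarith) (by positivity)
    rw [hδ]; nlinarith
  obtain ⟨T, hT⟩ := exists_nat_gt ((4*m+10)/δ + (4*m+10)/σ)
  have hTpos : (0:ℝ) < T := lt_trans (by positivity) hT
  have hT1 : (4*m+10)/(T:ℝ) ≤ δ := by
    rw [div_le_iff₀ hTpos]
    have : (4*(m:ℝ)+10)/δ ≤ T := by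
      have : 0 < (4*(m:ℝ)+10)/σ := by positivity
      linarith
    rw [div_le_iff₀ δ0] at this; linarith
  have hT2 : (4*m+10)/(T:ℝ) ≤ σ := by
    rw [div_le_iff₀ hTpos]
    have : (4*(m:ℝ)+10)/σ ≤ T := by
      have : 0 < (4*(m:ℝ)+10)/δ := by positivity
      linarith
    rw [div_le_iff₀ hσ] at this; linarith
  have hTn : 1 ≤ T := by exact_mod_cast hTpos
  refine ⟨T, hTn, fun Q0 => ⟨(max Q0 8)^T, one_le_pow₀ (le_max_of_le_right (by norm_num)), ?_⟩⟩
  intro n hn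
  have hQ8 : (8:ℝ) ≤ max Q0 8 := le_max_right _ _
  have hn1 : 1 ≤ n := le_trans (one_le_pow₀ (by linarith)) hn
  have hn0 : 0 < n := by linarith
  obtain ⟨Q, hQ⟩ : ∃ Q, Q = n^(1/(T:ℝ)) := ⟨_, rfl⟩
  have Qp : ∀ a : ℕ, Q^a = n^((a:ℝ)/T) := by
    intro a
    rw [hQ, ← Real.rpow_natCast, ← Real.rpow_mul hn0.le]; congr 1; ring
  have QT : Q^T = n := by rw [Qp, div_self hTpos.ne', Real.rpow_one]
  have Q0' : 0 ≤ Q := by rw [hQ]; positivity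
  have hmax : max Q0 8 ≤ Q := by
    refine le_of_pow_le_pow_left₀ (by omega : T ≠ 0) Q0' ?_
    rw [QT]; exact hn
  have Q8 : 8 ≤ Q := hQ8.trans hmax
  have Q81 : 8 ≤ n^(1/(T:ℝ)) := hQ ▸ Q8
  obtain ⟨τ, hτ⟩ : ∃ τ, τ = n^((1-c)/k) := ⟨_, rfl⟩
  have τ1 : 1 ≤ τ := by
    rw [hτ]; exact Real.one_le_rpow hn1 (div_nonneg (by linarith) hk0.le)
  have τk : τ^k = n^(1-c) := by
    rw [hτ, ← Real.rpow_natCast, ← Real.rpow_mul hn0.le]; congr 1; field_simp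
  have μ0 : 0 < n^(1-c) := by positivity
  have τμ : τ * n^(1-c) = n^(1-δ) := by
    rw [hτ, ← Real.rpow_add hn0]; congr 1; rw [hδ]; ring
  have μδ : n^(1-c) ≤ n^(1-δ) := Real.rpow_le_rpow_of_exponent_le hn1 δc
  have four : ((4:ℕ):ℝ)/T ≤ ((4*m+8:ℕ):ℝ)/T := by
    apply div_le_div_of_nonneg_right _ hTpos.le; exact_mod_cast (by omega)
  have e9 : ((4*m+8:ℕ):ℝ)/T + 1/T + 1/T = (4*m+10)/(T:ℝ) := by push_cast; field_simp; ring
  have Tinv : 0 < 1/(T:ℝ) := by positivity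
  refine ⟨Q, τ, (le_max_left _ _).trans hmax, by linarith, QT.ge, τ1, τk.ge, ?_, ?_, ?_⟩
  · calc (4 * n^(1-c) + 4 * τ * n^(1-c)) * Q^4 = (4 * n^(1-c) + 4 * (τ * n^(1-c))) * Q^4 := by ring
      _ ≤ (8 * n^(1-δ)) * Q^4 := by
          rw [τμ]; apply mul_le_mul_of_nonneg_right _ (by positivity); linarith
      _ ≤ (n^(1/(T:ℝ)) * n^(1-δ)) * n^(((4:ℕ):ℝ)/T) := by rw [Qp]; gcongr
      _ = n^(1/(T:ℝ) + (1-δ) + ((4:ℕ):ℝ)/T) := by rw [Real.rpow_add hn0, Real.rpow_add hn0]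
      _ ≤ _ := Real.rpow_le_rpow_of_exponent_le hn1 (by linarith)
  · calc 2 * n^(1-c) * Q^(4*m+8) ≤ (n^(1/(T:ℝ)) * n^(1-δ)) * n^(((4*m+8:ℕ):ℝ)/T) := by
          rw [Qp]; gcongr; linarith
      _ = n^(1/(T:ℝ) + (1-δ) + ((4*m+8:ℕ):ℝ)/T) := by rw [Real.rpow_add hn0, Real.rpow_add hn0]
      _ ≤ _ := Real.rpow_le_rpow_of_exponent_le hn1 (by linarith)
  · rw [Qp, ← Real.rpow_add hn0]
    exact Real.rpow_le_rpow_of_exponent_le hn1 (by linarith)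

def Frc {W : Type} (H : SimpleGraph W) (c : ℝ) (S : Set W) : Prop :=
  ∃ K : ℕ, 1 ≤ K ∧ ∃ σ : ℝ, 0 < σ ∧ ∃ l : ℝ, 0 < l ∧ ∃ N : ℝ, 1 ≤ N ∧
    ∀ {α : Type} (G : SimpleGraph α) (q : α → ℕ) (J : Finset ℕ) (A : ℕ → Finset α) (n : ℝ),
      N ≤ n → (∀ D : Finset α, (D.card : ℝ) ≤ n) → Coh G (n^(1-c)) → J.card = K →
      (∀ j ∈ J, ∀ v ∈ A j, q v = j) → (∀ j ∈ J, n^(1-σ) ≤ (A j).card) → Link G J A l →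
      ∃ f : W → α, (∀ x ∈ S, q (f x) ∈ J ∧ f x ∈ A (q (f x))) ∧
        (∀ x ∈ S, ∀ y ∈ S, q (f x) = q (f y) → x = y) ∧
        ∀ x ∈ S, ∀ y ∈ S, (H.Adj x y ↔ G.Adj (f x) (f y))

def Frc0 {W : Type} (H : SimpleGraph W) (c : ℝ) (S : Set W) : Prop :=
  ∃ K : ℕ, 1 ≤ K ∧ ∃ σ : ℝ, 0 < σ ∧ ∃ l : ℝ, 0 < l ∧ ∃ N : ℝ, 1 ≤ N ∧
    ∀ {α : Type} (G : SimpleGraph α) (q : α → ℕ) (J : Finset ℕ) (A : ℕ → Finset α) (n : ℝ),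
      N ≤ n → (∀ D : Finset α, (D.card : ℝ) ≤ n) → Coh G (n^(1-c)) → J.card = K →
      (∀ j ∈ J, ∀ v ∈ A j, q v = j) → (∀ j ∈ J, n^(1-σ) ≤ (A j).card) → Link G J A l →
      ∃ f : W → α,
        (∀ x ∈ S, ∀ y ∈ S, q (f x) = q (f y) → x = y) ∧
        ∀ x ∈ S, ∀ y ∈ S, (H.Adj x y ↔ G.Adj (f x) (f y))

lemma frc_of_frc0 {W : Type} {H : SimpleGraph W} {c : ℝ} {S : Set W} (h : Frc0 H c S) :
    Frc H c S := by
  obtain ⟨K, hK, σ, hσ, l, hl, N, hN, h⟩ := h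
  refine ⟨K, hK, σ, hσ, l, hl, N, hN, ?_⟩
  intro α G q J A n hn hD hG hJ hq hsz hL
  set P : α → Prop := fun v => q v ∈ J ∧ v ∈ A (q v) with hP
  set A' : ℕ → Finset {v // P v} := fun j => (A j).subtype P with hA'
  have hAP : ∀ j ∈ J, ∀ v ∈ A j, P v := by
    intro j hj v hv
    have := hq j hj v hv
    simp only [hP]; rw [this]; exact ⟨hj, hv⟩
  have hAmap : ∀ j ∈ J, (A' j).map (Function.Embedding.subtype P) = A j := by
    intro j hj
    simp only [hA', Finset.subtype_map]
    exact Finset.filter_true_of_mem (hAP j hj)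
  have hAc : ∀ j ∈ J, (A' j).card = (A j).card := by
    intro j hj; rw [← hAmap j hj, Finset.card_map]
  obtain ⟨f, f1, f2⟩ := h (G.comap (Subtype.val : {v // P v} → α)) (fun v => q v.1) J A' n hn
    (fun D => by
      have := hD (D.map (Function.Embedding.subtype P)); rwa [Finset.card_map] at this)
    (fun X Y hXY ha => by
      have := hG (X.map (Function.Embedding.subtype P)) (Y.map (Function.Embedding.subtype P))
        ((Finset.disjoint_map _).2 hXY) (by
          intro a h1 b h2
          rw [Finset.mem_map] at h1 h2
          obtain ⟨a', h1, rfl⟩ := h1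
          obtain ⟨b', h2, rfl⟩ := h2
          exact ha a' h1 b' h2)
      rwa [Finset.card_map, Finset.card_map] at this) hJ
    (fun j hj v hv => hq j hj v.1 (by simpa [hA'] using hv))
    (fun j hj => by rw [hAc j hj]; exact hsz j hj)
    (fun i hi j hj hij v hv => by
      rw [hAc j hj]
      refine le_trans ?_ (hL i hi j hj hij v.1 (by simpa [hA'] using hv))
      unfold dg
      rw [← hAmap j hj, Finset.filter_map, Finset.card_map]
      apply le_of_eq
      congr 1)
  exact ⟨fun x => (f x).1, fun x _ => (f x).2, f1, f2⟩

lemma frc_base {W : Type} {H : SimpleGraph W} {c : ℝ} (u v : W) (huv : u ≠ v)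
    (h : ¬ H.Adj u v) : Frc H c {u, v} := by
  refine ⟨2, by norm_num, 1, one_pos, 1/2, by norm_num, 1, le_rfl, ?_⟩
  intro α G q J A n hn hD hG hJ hq hsz hL
  obtain ⟨i, j, hij, rfl⟩ := Finset.card_eq_two.1 hJ
  have hi : i ∈ ({i, j} : Finset ℕ) := by simp
  have hj : j ∈ ({i, j} : Finset ℕ) := by simp
  have hs : ∀ k ∈ ({i, j} : Finset ℕ), (1:ℝ) ≤ (A k).card := by
    intro k hk; have := hsz k hk; rwa [sub_self, Real.rpow_zero] at this
  obtain ⟨x, hx⟩ : (A i).Nonempty := by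
    rw [← Finset.card_pos]; exact_mod_cast (zero_lt_one.trans_le (hs i hi))
  obtain ⟨y, hy, hxy⟩ : ∃ y ∈ A j, ¬ G.Adj x y := by
    by_contra hcon
    push Not at hcon
    have h1 := hL i hi j hj hij x hx
    unfold dg at h1
    rw [Finset.filter_true_of_mem hcon] at h1
    have := hs j hj
    linarith
  have qx := hq i hi x hx
  have qy := hq j hj y hy
  refine ⟨fun z => if z = u then x else y, ?_, ?_, ?_⟩
  · intro z hz
    rcases hz with rfl | rfl
    · simp [qx, hx]
    · simp [huv.symm, qy, hy]
  · intro z hz z' hz' hh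
    rcases hz with rfl | rfl <;> rcases hz' with rfl | rfl
    · rfl
    · simp [huv.symm, qx, qy, hij] at hh
    · simp [huv.symm, qx, qy, hij.symm] at hh
    · rfl
  · intro z hz z' hz'
    rcases hz with rfl | rfl <;> rcases hz' with rfl | rfl
    · simp
    · simp [huv.symm, h, hxy]
    · rw [H.adj_comm, G.adj_comm]; simp [huv.symm, h, hxy]
    · simp

lemma frc_step {W : Type} {H : SimpleGraph W} {c : ℝ} {S : Set W} (k : ℕ) (hk : 1 ≤ k)
    (hc : 1 < c * (k+1)) (hc1 : c < 1) (hS : Frc H c S) {m : ℕ} (hm : 3*k+3 ≤ m) {p : ℕ → W}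
    (pinj : ∀ i ≤ m, ∀ j ≤ m, p i = p j → i = j) (p0 : p 0 ∈ S) (pn : p m ∈ S)
    (pS : ∀ i, 0 < i → i < m → p i ∉ S) (padj : ∀ i < m, H.Adj (p i) (p (i+1)))
    (pnadj : ∀ i j, i + 1 < j → j ≤ m → ¬ H.Adj (p i) (p j))
    (pdeg : ∀ i, 0 < i → i < m → ∀ w, (w ∈ S ∨ ∃ j ≤ m, w = p j) → H.Adj (p i) w →
      w = p (i-1) ∨ w = p (i+1)) : Frc H c (S ∪ {w | ∃ j ≤ m, w = p j}) := by
  apply frc_of_frc0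
  obtain ⟨K, hK, σ, hσ, l, hl, N, hN, h⟩ := hS
  obtain ⟨T, hT, hsc⟩ := scaling c k hk hc hc1 m σ hσ
  obtain ⟨qn, li, hli, Q0, hQ0, hbl⟩ := bilev T k m K hk hm hK l hl
  obtain ⟨N', hN', hsc⟩ := hsc Q0
  refine ⟨max qn 1, le_max_right _ _, 1/(T:ℝ), by positivity, li, hli, max N N',
    le_max_of_le_left hN, ?_⟩
  intro α G q J A n hn hD hG hJ hq hsz hL
  have hnN : N ≤ n := (le_max_left _ _).trans hn
  have hn0 : 0 < n := by linarith
  obtain ⟨Q, τ, hQ, hQ1, hnQ, hτ, hτk, s1, s2, s3⟩ := hsc n ((le_max_right _ _).trans hn)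
  obtain ⟨J', hJ', hJ'c, C', hL', HC', w, hM, hLL, hsum, UM, UL, hB⟩ :=
    hbl G q J A Q (n^(1-c)) τ hQ (fun D => (hD D).trans hnQ) hG (by positivity) hτ hτk
      (hJ ▸ le_max_left _ _) hq hL (fun j hj => s1.trans (hsz j hj)) (fun j hj => s2.trans (hsz j hj))
  have hq' : ∀ j ∈ J', ∀ v ∈ C' j, q v = j := fun j hj v hv => hq j (hJ' hj) v ((HC' j hj).1 hv)
  obtain ⟨f, f1, f2, f3⟩ := h G q J' C' n hnN hD hG hJ'c hq' (fun j hj => by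
    have h1 := (s3.trans (hsz j (hJ' hj))).trans (HC' j hj).2
    rw [mul_comm] at h1
    exact le_of_mul_le_mul_left h1 (by positivity)) hL'
  exact extend hB hsum hq' (by omega) pinj p0 pn pS padj pnadj pdeg f1 f2 f3
end PPAux

namespace PPAux
open Classical

lemma blocks {α : Type} [Fintype α] (K : ℕ) (hK : 1 ≤ K) (hn : K ≤ Fintype.card α) :
    ∃ (q : α → ℕ), ∀ j ∈ Finset.range K,
      (Fintype.card α : ℝ) ≤ 2 * K * ((Finset.univ.filter (fun v => q v = j)).card : ℝ) := by
  set s := Fintype.card α / K with hs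
  have hs1 : 1 ≤ s := (Nat.one_le_div_iff (by omega)).2 hn
  let e := Fintype.equivFin α
  refine ⟨fun v => (e v : ℕ) / s, fun j hj => ?_⟩
  have hjK := Finset.mem_range.1 hj
  have hKs : K * s ≤ Fintype.card α := Nat.mul_div_le _ _
  have hlt : Fintype.card α < K * (s + 1) := by
    have := Nat.lt_mul_div_succ (Fintype.card α) (show 0 < K by omega)
    simpa [hs] using this
  have hb : ∀ i ∈ Finset.range s, j * s + i < Fintype.card α := by
    intro i hi
    have := Finset.mem_range.1 hi
    have h2 : (j+1) * s ≤ K * s := Nat.mul_le_mul_right _ hjK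
    nlinarith
  have hpos : 0 < Fintype.card α := by omega
  have hc : s ≤ (Finset.univ.filter (fun v => (e v : ℕ) / s = j)).card := by
    have := Finset.card_le_card_of_injOn (s := Finset.range s)
      (t := Finset.univ.filter (fun v => (e v : ℕ) / s = j))
      (fun i => if h : j * s + i < Fintype.card α then e.symm ⟨j * s + i, h⟩ else e.symm ⟨0, hpos⟩)
      (by
        intro i hi
        have hi' : i < s := by simpa using hi
        have h := hb i (by simpa using hi)
        simp only [h, dif_pos, Finset.coe_filter, Finset.mem_univ, true_and, Set.mem_ofPred_eq,
          Equiv.apply_symm_apply]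
        rw [mul_comm, Nat.mul_add_div (by omega), Nat.div_eq_of_lt hi', add_zero])
      (by
        intro i hi i' hi' hh
        have h := hb i (by simpa using hi)
        have h' := hb i' (by simpa using hi')
        simp only [h, h', dif_pos, EmbeddingLike.apply_eq_iff_eq, Fin.mk.injEq] at hh
        omega)
    simpa using this
  have h3 : Fintype.card α ≤ 2 * K * (Finset.univ.filter (fun v => (e v : ℕ) / s = j)).card := by
    have : 2 * K * s ≤ 2 * K * (Finset.univ.filter (fun v => (e v : ℕ) / s = j)).card :=
      Nat.mul_le_mul_left _ hc
    nlinarith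
  exact_mod_cast h3

lemma frc_buildable {W : Type} {H : SimpleGraph W} {β : ℕ} {c : ℝ} (k : ℕ) (hk : 1 ≤ k)
    (hc : 1 < c * (k+1)) (hc1 : c < 1) (hb : 3*k+3 ≤ β) {S : Set W}
    (h : BuildableOn H β S) : Frc H c S := by
  induction h with
  | base u v huv hadj => exact frc_base u v huv hadj
  | handle S n p hS hh hn ih =>
    obtain ⟨_, h1, h2, h3, h4, h5, h6, h7⟩ := hh
    exact frc_step k hk hc hc1 ih (hb.trans hn) h1 h2 h3 h4 h5 h6 h7

lemma coh_adj {V : Type} (G : SimpleGraph V) {μ : ℝ} (hμ : μ ≤ 1)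
    (hG : Coherent G μ μ) (a b : V) (hab : a ≠ b) : G.Adj a b := by
  by_contra h
  apply hG
  refine ⟨{a}, {b}, by simpa using hab, ?_, by simpa using hμ, by simpa using hμ⟩
  intro x hx y hy
  rw [Set.mem_singleton_iff] at hx hy
  rw [hx, hy]; exact h

lemma big_c {V : Type} [Fintype V] (G : SimpleGraph V) {c : ℝ} (hc : 1 ≤ c)
    (h1 : 1 < Fintype.card V) (hS : EpsSparse G (1/2))
    (hG : Coherent G (1/2 * (Fintype.card V : ℝ) ^ (1 - c))
        (1/2 * (Fintype.card V : ℝ) ^ (1 - c))) : False := by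
  have hn : (1:ℝ) < Fintype.card V := by exact_mod_cast h1
  have hp : (Fintype.card V : ℝ) ^ (1 - c) ≤ 1 :=
    Real.rpow_le_one_of_one_le_of_nonpos hn.le (by linarith)
  have hadj := coh_adj G (by linarith) hG
  obtain ⟨v, w, hvw⟩ := Fintype.one_lt_card_iff.1 h1
  have h2 := hS v
  have h3 : G.neighborSet v = {v}ᶜ := by
    ext x
    simp only [SimpleGraph.mem_neighborSet, Set.mem_compl_iff, Set.mem_singleton_iff]
    exact ⟨fun h => h.ne', fun h => hadj v x (Ne.symm h)⟩
  have h4 : (G.neighborSet v).ncard + 1 = Fintype.card V := by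
    rw [h3]
    have := Set.ncard_add_ncard_compl ({v} : Set V)
    rw [Set.ncard_singleton, Nat.card_eq_fintype_card] at this
    omega
  have h5 : ((G.neighborSet v).ncard : ℝ) + 1 = Fintype.card V := by exact_mod_cast h4
  have h6 : (2:ℝ) ≤ Fintype.card V := by exact_mod_cast h1
  linarith

lemma finish {W : Type} {H : SimpleGraph W} {c : ℝ} (hc0 : 0 < c)
    (h : Frc H c Set.univ) : ∃ ε : ℝ, 0 < ε ∧ ∀ {V : Type} [Fintype V] (G : SimpleGraph V),
      1 < Fintype.card V → EpsSparse G ε →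
      Coherent G (ε * (Fintype.card V : ℝ) ^ (1 - c))
        (ε * (Fintype.card V : ℝ) ^ (1 - c)) →
      Contains G H := by
  obtain ⟨K, hK, σ, hσ, l, hl, N, hN, h⟩ := h
  have hKr : (1:ℝ) ≤ K := by exact_mod_cast hK
  set M : ℝ := max (max N K) ((2*K)^(1/σ)) with hM
  have hM1 : 1 ≤ M := hN.trans ((le_max_left _ _).trans (le_max_left _ _))
  set ε : ℝ := min (1/M) (l/(2*K)) with hε
  have hε0 : 0 < ε := lt_min (by positivity) (by positivity)
  have hε1 : ε ≤ 1 := (min_le_left _ _).trans (by rw [div_le_one (by linarith)]; exact hM1)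
  refine ⟨ε, hε0, ?_⟩
  intro V _ G h1 hS hG
  set n : ℝ := (Fintype.card V : ℝ) with hn
  have hn1 : 1 < n := by rw [hn]; exact_mod_cast h1
  have hεn : 1 < ε * n := by
    by_contra hcon
    push Not at hcon
    have hp : n ^ (1 - c) ≤ n := by
      conv_rhs => rw [← Real.rpow_one n]
      exact Real.rpow_le_rpow_of_exponent_le hn1.le (by linarith)
    have hadj := coh_adj G (by nlinarith) hG
    obtain ⟨v, w, hvw⟩ := Fintype.one_lt_card_iff.1 h1
    have h2 := hS v
    have h3 : 1 ≤ (G.neighborSet v).ncard := by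
      rw [Nat.one_le_iff_ne_zero, Ne, Set.ncard_eq_zero (Set.toFinite _)]
      intro h0
      have : w ∈ G.neighborSet v := hadj v w hvw
      rw [h0] at this; exact this
    have h4 : (1:ℝ) ≤ (G.neighborSet v).ncard := by exact_mod_cast h3
    linarith
  have hMn : M ≤ n := by
    have : ε * M ≤ 1 := by
      have h2 := mul_le_mul_of_nonneg_right (min_le_left (1/M) (l/(2*K))) (show 0 ≤ M by linarith)
      have h3 : 1/M*M = 1 := by field_simp
      linarith
    by_contra hcon
    push Not at hcon
    nlinarith
  have hNn : N ≤ n := ((le_max_left _ _).trans (le_max_left _ _)).trans hMn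
  have hKn : (K:ℝ) ≤ n := ((le_max_right _ _).trans (le_max_left _ _)).trans hMn
  have hPn : ((2*K:ℝ))^(1/σ) ≤ n := (le_max_right _ _).trans hMn
  have hPs : (2*K:ℝ) ≤ n^σ := by
    have := Real.rpow_le_rpow (by positivity) hPn hσ.le
    rwa [← Real.rpow_mul (by positivity), one_div, inv_mul_cancel₀ hσ.ne', Real.rpow_one] at this
  have hKc : K ≤ Fintype.card V := by rw [hn] at hKn; exact_mod_cast hKn
  obtain ⟨q, hq⟩ := blocks (α := V) K hK hKc
  obtain ⟨f, f1, f2, f3⟩ := h G q (Finset.range K) (fun j => Finset.univ.filter (fun v => q v = j))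
    n hNn
    (by intro D; rw [hn]; exact_mod_cast Finset.card_le_univ D)
    (by
      intro A B hAB hanti
      by_contra hcon
      push Not at hcon
      have hp : 0 ≤ n^(1-c) := by positivity
      apply hG
      refine ⟨A, B, by exact_mod_cast hAB, fun a ha b hb => hanti a (by simpa using ha) b (by simpa using hb), ?_, ?_⟩
      · rw [Set.ncard_coe_finset]; nlinarith [hcon.1]
      · rw [Set.ncard_coe_finset]; nlinarith [hcon.2])
    (Finset.card_range K)
    (by intro j hj v hv; exact (Finset.mem_filter.1 hv).2)
    (by
      intro j hj
      have h2 := hq j hj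
      have h3 : n^(1-σ) * n^σ = n := by
        rw [← Real.rpow_add (by linarith)]; simp
      have h4 : 0 < n^(1-σ) := Real.rpow_pos_of_pos (by linarith) _
      have h5 : n^(1-σ) * (2*K) ≤ n := by
        have := mul_le_mul_of_nonneg_left hPs h4.le
        linarith
      have h6 : (2*K) * n^(1-σ) ≤ 2*K*((Finset.univ.filter (fun v => q v = j)).card : ℝ) := by
        linarith
      exact le_of_mul_le_mul_left h6 (by positivity))
    (by
      intro i hi j hj hij v hv
      have h2 := hq j hj
      have h3 := hS v
      have h4 : dg G v (Finset.univ.filter (fun v => q v = j)) ≤ (G.neighborSet v).ncard := by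
        unfold dg
        rw [← Set.ncard_coe_finset]
        have : (((Finset.univ.filter (fun v => q v = j)).filter (fun c => G.Adj v c) : Finset V) : Set V).ncard ≤ (G.neighborSet v).ncard := by
          apply Set.ncard_le_ncard _ (Set.toFinite _)
          intro x hx
          simp only [Finset.coe_filter, Set.mem_ofPred_eq] at hx
          exact hx.2
        exact_mod_cast this
      have h5 : ε * n ≤ l/(2*K) * n := mul_le_mul_of_nonneg_right (min_le_right _ _) (by linarith)
      have h6 : l/(2*K) * n ≤ l/(2*K) * (2*K*((Finset.univ.filter (fun v => q v = j)).card : ℝ)) :=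
        mul_le_mul_of_nonneg_left h2 (by positivity)
      have h7 : l/(2*K) * (2*K*((Finset.univ.filter (fun v => q v = j)).card : ℝ)) =
        l * ((Finset.univ.filter (fun v => q v = j)).card : ℝ) := by field_simp
      show dg G v (Finset.univ.filter (fun v => q v = j)) ≤
        l * ((Finset.univ.filter (fun v => q v = j)).card : ℝ)
      linarith)
  refine ⟨⟨⟨f, fun x y hxy => f2 x trivial y trivial (by rw [hxy])⟩, ?_⟩⟩
  intro x y
  exact (f3 x trivial y trivial).symm

end PPAux

/-- if `β ≥ 2`, `⌊(β-3)/3⌋ ≥ 1`, `H` is `β`-buildable and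
`c > 1/⌊(β-3)/3⌋`, then there is `ε > 0` such that every `ε`-sparse
`(ε|G|^{1-c}, ε|G|^{1-c})`-coherent graph `G` with `|G| > 1` contains `H`. -/
theorem statement_6 (β : ℕ) (hβ : 2 ≤ β) (hβ3 : 1 ≤ (β - 3) / 3)
    {W : Type} [Fintype W] (H : SimpleGraph W) (hH : Buildable H β)
    (c : ℝ) (hc : 1 / (((β - 3) / 3 : ℕ) : ℝ) < c) :
    ∃ ε : ℝ, 0 < ε ∧ ∀ {V : Type} [Fintype V] (G : SimpleGraph V),
      1 < Fintype.card V → EpsSparse G ε →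
      Coherent G (ε * (Fintype.card V : ℝ) ^ (1 - c))
        (ε * (Fintype.card V : ℝ) ^ (1 - c)) →
      Contains G H := by
  by_cases h1 : 1 ≤ c
  · refine ⟨1/2, by norm_num, ?_⟩
    intro V _ G hV hS hG
    exact (PPAux.big_c G h1 hV hS hG).elim
  · push Not at h1
    have hk0 : (0:ℝ) < (((β - 3) / 3 : ℕ) : ℝ) := by exact_mod_cast hβ3
    rw [div_lt_iff₀ hk0] at hc
    have hc0 : 0 < c := by
      by_contra h
      push Not at h
      nlinarith
    have hk1 : (1:ℝ) < (((β - 3) / 3 : ℕ) : ℝ) := by nlinarith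
    have hk2 : 1 < (β - 3) / 3 := by exact_mod_cast hk1
    obtain ⟨k, hk⟩ : ∃ k, (β - 3) / 3 = k + 1 := ⟨(β - 3) / 3 - 1, by omega⟩
    rw [hk] at hc
    push_cast at hc
    exact PPAux.finish hc0
      (PPAux.frc_buildable k (by omega) hc h1 (by omega) hH)

end PurePairs
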